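/- arXiv:1811.02996 — 2 statements merged into one kernel-verified Lean document; each statement's English description precedes it below -/
import Mathlib

section
/- Let q ≥ 3 be a prime power. Then ρ(PGL₂(q)) = q² + 1, where PGL₂(q) is the projective general linear group of degree 2 over the field with q elements. -/
/-!
Throughout, `PGL₂` is replaced by `GL₂` modulo its centre `ZZ` of scalar matrices, acting on the
projective line `OnePoint F`. Partitions of `PGL₂` correspond to families of subgroups of `GL₂`
containing the scalars (`Comps`). The basic dichotomy for non-scalar `g` is whether its eigenvalues
are distinct (`disc g ≠ 0`; the centraliser is then a maximal torus, cyclic modulo scalars) or not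
(`g` is then unipotent up to a scalar and fixes exactly one point). Non-scalar elements have
commutative centralisers, because everything commuting with `g` is of the form `α + β g`.

*Upper bound* (`exists_comps`). A matrix with nonzero lower left entry is a combination of the
identity and of exactly one of the `q²` companion matrices. So the stabiliser of `∞` and the
centralisers of the companion matrices form a partition with `q² + 1` members.

*Lower bound* (`Comps.card_ge`). As tori are cyclic modulo scalars, a member of a partition contains
each torus that it meets in more than the scalars. By `Full.eq_borel`, a proper subgroup with this
property containing two distinct tori is the stabiliser of a point; this uses that a split
torus is transitive on the points it does not fix, pigeonhole arguments on the projective line, and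
the existence of fixed-point-free elements in transitive groups.

* If some member is the stabiliser of a point `z`, all others are commutative
  (`Comps.comm_of_borel`). Conjugates of the `q²` companion matrices do not fix `z` and do not commute
  pairwise, so they lie in `q²` distinct other members.
* Otherwise each member has at most one torus (`SingleTorus`), and `q²` pairwise noncommuting elements
  with distinct eigenvalues (`exists_family`) lie in distinct members. If there were no further
  member, every unipotent would lie in a member together with a torus, which it would then invert.
  `false_of_all_semisimple` excludes this: such tori of distinct members have a common fixed point,
  and comparing four of these members yields two of them with the same torus.
-/

open Pointwise

/-- A cover of a group `G`: a finite family of proper subgroups whose union is all of `G`. -/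
def IsCover {G : Type*} [Group G] (P : Finset (Subgroup G)) : Prop :=
  (∀ H ∈ P, H ≠ ⊤) ∧ ∀ g : G, ∃ H ∈ P, g ∈ H

/-- A partition of a group `G`: a cover in which any two distinct members intersect trivially. -/
def IsPartitionOf {G : Type*} [Group G] (P : Finset (Subgroup G)) : Prop :=
  IsCover P ∧ ∀ H ∈ P, ∀ K ∈ P, H ≠ K → H ⊓ K = ⊥

/-- `σ(G)`: the minimal cardinality of a cover of `G`. -/
noncomputable def sigmaG (G : Type*) [Group G] : ℕ :=
  sInf {n | ∃ P : Finset (Subgroup G), IsCover P ∧ P.card = n}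

/-- `ρ(G)`: the minimal cardinality of a partition of `G`. -/
noncomputable def rhoG (G : Type*) [Group G] : ℕ :=
  sInf {n | ∃ P : Finset (Subgroup G), IsPartitionOf P ∧ P.card = n}

/-- A group is partitionable if it admits a partition. -/
def Partitionable (G : Type*) [Group G] : Prop :=
  ∃ P : Finset (Subgroup G), IsPartitionOf P

open scoped OnePoint

/-! ### Matrices and their action on the projective line -/

section MatrixFacts

variable {F : Type*} [Field F]

local notation "GG" => GL (Fin 2) F
local notation "ZZ" => Subgroup.center (GL (Fin 2) F)

theorem mem_cen {g : GG} : g ∈ ZZ ↔ g 0 1 = 0 ∧ g 1 0 = 0 ∧ g 0 0 = g 1 1 := by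
  rw [Matrix.GeneralLinearGroup.mem_center_iff_val_mem_range_scalar]
  constructor
  · rintro ⟨a, ha⟩
    rw [← ha]
    simp
  · rintro ⟨h1, h2, h3⟩
    refine ⟨g 0 0, ?_⟩
    ext i j
    fin_cases i <;> fin_cases j <;> simp [h1, h2, h3]

theorem det_ne (g : GG) : g 0 0 * g 1 1 - g 0 1 * g 1 0 ≠ 0 := by
  have := g.det_ne_zero
  rwa [Matrix.det_fin_two] at this

/-- The invertible matrix with rows `(a, b)` and `(c, d)`. -/
def gl (a b c d : F) (h : a * d - b * c ≠ 0) : GG :=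
  Matrix.GeneralLinearGroup.mkOfDetNeZero !![a, b; c, d] (by rwa [Matrix.det_fin_two_of])

section
variable (a b c d : F) (h : a * d - b * c ≠ 0)
@[simp] theorem gl_00 : (gl a b c d h) 0 0 = a := rfl
@[simp] theorem gl_01 : (gl a b c d h) 0 1 = b := rfl
@[simp] theorem gl_10 : (gl a b c d h) 1 0 = c := rfl
@[simp] theorem gl_11 : (gl a b c d h) 1 1 = d := rfl
end

theorem gl_ext {g h : GG} (h00 : g 0 0 = h 0 0) (h01 : g 0 1 = h 0 1) (h10 : g 1 0 = h 1 0)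
    (h11 : g 1 1 = h 1 1) : g = h := by
  apply Matrix.GeneralLinearGroup.ext
  intro i j
  fin_cases i <;> fin_cases j <;> assumption

theorem mul_00 (g h : GG) : (g * h) 0 0 = g 0 0 * h 0 0 + g 0 1 * h 1 0 := by
  simp [Matrix.mul_apply]
theorem mul_01 (g h : GG) : (g * h) 0 1 = g 0 0 * h 0 1 + g 0 1 * h 1 1 := by
  simp [Matrix.mul_apply]
theorem mul_10 (g h : GG) : (g * h) 1 0 = g 1 0 * h 0 0 + g 1 1 * h 1 0 := by
  simp [Matrix.mul_apply]
theorem mul_11 (g h : GG) : (g * h) 1 1 = g 1 0 * h 0 1 + g 1 1 * h 1 1 := by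
  simp [Matrix.mul_apply]

theorem comm_iff {g h : GG} : g * h = h * g ↔
    g 0 1 * h 1 0 = h 0 1 * g 1 0 ∧ g 0 1 * (h 0 0 - h 1 1) = h 0 1 * (g 0 0 - g 1 1) ∧
    g 1 0 * (h 0 0 - h 1 1) = h 1 0 * (g 0 0 - g 1 1) := by
  constructor
  · intro e
    have e0 := congrArg (fun k : GG => k 0 0) e
    have e1 := congrArg (fun k : GG => k 0 1) e
    have e2 := congrArg (fun k : GG => k 1 0) e
    simp only [mul_00, mul_01, mul_10] at e0 e1 e2
    refine ⟨?_, ?_, ?_⟩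
    · linear_combination e0
    · linear_combination -e1
    · linear_combination e2
  · rintro ⟨e0, e1, e2⟩
    apply gl_ext <;> simp only [mul_00, mul_01, mul_10, mul_11]
    · linear_combination e0
    · linear_combination -e1
    · linear_combination e2
    · linear_combination -e0

/-- A matrix commuting with a non-scalar matrix `g` is a combination `α + β g`. -/
theorem exists_lin {g h : GG} (hg : g ∉ ZZ) (e : g * h = h * g) :
    ∃ α β : F, h 0 0 = α + β * g 0 0 ∧ h 0 1 = β * g 0 1 ∧ h 1 0 = β * g 1 0 ∧
      h 1 1 = α + β * g 1 1 := by
  rw [comm_iff] at e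
  obtain ⟨e0, e1, e2⟩ := e
  rw [mem_cen] at hg
  by_cases h1 : g 0 1 = 0
  · by_cases h2 : g 1 0 = 0
    · have h3 : g 0 0 - g 1 1 ≠ 0 := fun h3 => hg ⟨h1, h2, sub_eq_zero.1 h3⟩
      refine ⟨h 0 0 - (h 0 0 - h 1 1) / (g 0 0 - g 1 1) * g 0 0,
        (h 0 0 - h 1 1) / (g 0 0 - g 1 1), by ring, ?_, ?_, ?_⟩ <;> field_simp <;> grind
    · refine ⟨h 0 0 - h 1 0 / g 1 0 * g 0 0, h 1 0 / g 1 0, by ring, ?_, ?_, ?_⟩ <;>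
        field_simp <;> grind
  · refine ⟨h 0 0 - h 0 1 / g 0 1 * g 0 0, h 0 1 / g 0 1, by ring, ?_, ?_, ?_⟩ <;>
        field_simp <;> grind

/-- Commuting is transitive through a non-scalar matrix; hence two distinct maximal commutative
subgroups meet in the scalars only. -/
theorem comm_trans {g h k : GG} (hg : g ∉ ZZ) (e : g * h = h * g) (e' : g * k = k * g) :
    h * k = k * h := by
  obtain ⟨α, β, a1, a2, a3, a4⟩ := exists_lin hg e
  obtain ⟨γ, δ, b1, b2, b3, b4⟩ := exists_lin hg e'
  rw [comm_iff, a1, a2, a3, a4, b1, b2, b3, b4]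
  refine ⟨by ring, by ring, by ring⟩

/-- The discriminant of the characteristic polynomial. -/
def disc (g : GG) : F := (g 0 0 - g 1 1) ^ 2 + 4 * g 0 1 * g 1 0

theorem disc_eq (g : GG) : disc g = g.val.discr := by
  rw [Matrix.discr_fin_two, Matrix.trace_fin_two, Matrix.det_fin_two, disc]; ring

theorem disc_conj (k g : GG) : disc (k * g * k⁻¹) = disc g := by
  rw [disc_eq, disc_eq]
  simp only [Matrix.discr_fin_two]
  rw [show (k * g * k⁻¹ : GG).val = k.val * g.val * (k⁻¹ : GG).val from rfl]
  rw [Matrix.trace_mul_cycle, ← Units.val_mul, inv_mul_cancel, Units.val_one, one_mul,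
    Matrix.det_mul_right_comm, ← Units.val_mul, mul_inv_cancel, Units.val_one, one_mul]

theorem conj_mem_cen {k g : GG} : k * g * k⁻¹ ∈ ZZ ↔ g ∈ ZZ := by
  constructor
  · intro h
    have := (inferInstance : (ZZ).Normal).conj_mem _ h k⁻¹
    simpa [mul_assoc] using this
  · intro h
    exact (inferInstance : (ZZ).Normal).conj_mem _ h k

variable [DecidableEq F]

local notation "Ω" => OnePoint F

theorem fix_infty {g : GG} : g • (∞ : Ω) = ∞ ↔ g 1 0 = 0 := OnePoint.smul_infty_eq_self_iff

theorem fix_coe {g : GG} {x : F} :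
    g • (x : Ω) = x ↔ g 1 0 * x ^ 2 + (g 1 1 - g 0 0) * x - g 0 1 = 0 := by
  rw [← Matrix.GeneralLinearGroup.fixpointPolynomial_aeval_eq_zero_iff]
  simp [Matrix.GeneralLinearGroup.fixpointPolynomial]

/-- The fixed points of `g` are fixed by everything commuting with a non-scalar `g`. -/
theorem fix_of_comm {g h : GG} (hg : g ∉ ZZ) (e : g * h = h * g) {x : Ω} (hx : g • x = x) :
    h • x = x := by
  obtain ⟨α, β, a1, a2, a3, a4⟩ := exists_lin hg e
  cases x with
  | infty => rw [fix_infty] at *; rw [a3, hx, mul_zero]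
  | coe x => rw [fix_coe] at *; rw [a1, a2, a3, a4]; linear_combination β * hx

theorem cen_smul {g : GG} (hg : g ∈ ZZ) (x : Ω) : g • x = x := by
  obtain ⟨h1, h2, h3⟩ := mem_cen.1 hg
  cases x with
  | infty => rw [fix_infty, h2]
  | coe x => rw [fix_coe, h1, h2, h3]; ring

/-- Two elements with two common fixed points commute. -/
theorem comm_of_fix {g h : GG} {x y : Ω} (hxy : x ≠ y) (gx : g • x = x) (gy : g • y = y)
    (hx : h • x = x) (hy : h • y = y) : g * h = h * g := by
  rw [comm_iff]
  cases x with
  | infty =>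
    cases y with
    | infty => exact absurd rfl hxy
    | coe y => simp only [fix_infty, fix_coe] at *; grind
  | coe x =>
    cases y with
    | infty => simp only [fix_infty, fix_coe] at *; grind
    | coe y =>
      have hxy : x - y ≠ 0 := fun e => hxy (by rw [sub_eq_zero.1 e])
      simp only [fix_coe] at *
      have g1 : g 1 1 - g 0 0 = - g 1 0 * (x + y) :=
        mul_left_cancel₀ hxy (by linear_combination gx - gy)
      have h1 : h 1 1 - h 0 0 = - h 1 0 * (x + y) :=
        mul_left_cancel₀ hxy (by linear_combination hx - hy)
      have g2 : g 0 1 = - g 1 0 * (x * y) := by linear_combination -gx + x * g1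
      have h2 : h 0 1 = - h 1 0 * (x * y) := by linear_combination -hx + x * h1
      refine ⟨?_, ?_, ?_⟩
      · rw [g2, h2]; ring
      · rw [g2, h2]; linear_combination g 1 0 * x * y * h1 - h 1 0 * x * y * g1
      · linear_combination - g 1 0 * h1 + h 1 0 * g1

/-- A non-scalar element with two fixed points has distinct (rational) eigenvalues. -/
theorem disc_ne_of_fix {g : GG} (hg : g ∉ ZZ) {x y : Ω} (hxy : x ≠ y) (gx : g • x = x)
    (gy : g • y = y) : disc g ≠ 0 := by
  intro hd
  rw [disc] at hd
  apply hg
  rw [mem_cen]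
  cases x with
  | infty =>
    cases y with
    | infty => exact absurd rfl hxy
    | coe y =>
      simp only [fix_infty, fix_coe] at *
      rw [gx, mul_zero, add_zero, sq_eq_zero_iff] at hd
      refine ⟨?_, gx, by linear_combination hd⟩
      linear_combination gx * y ^ 2 - hd * y - gy
  | coe x =>
    cases y with
    | infty =>
      simp only [fix_infty, fix_coe] at *
      rw [gy, mul_zero, add_zero, sq_eq_zero_iff] at hd
      refine ⟨?_, gy, by linear_combination hd⟩
      linear_combination gy * x ^ 2 - hd * x - gx
    | coe y =>
      have hxy : x - y ≠ 0 := fun e => hxy (by rw [sub_eq_zero.1 e])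
      simp only [fix_coe] at *
      have g1 : g 1 1 - g 0 0 = - g 1 0 * (x + y) :=
        mul_left_cancel₀ hxy (by linear_combination gx - gy)
      have g2 : g 0 1 = - g 1 0 * (x * y) := by linear_combination -gx + x * g1
      have : (g 1 0 * (x - y)) ^ 2 = 0 := by
        rw [g2] at hd
        linear_combination hd + (-(g 1 1 - g 0 0) + g 1 0 * (x + y)) * g1
      have h0 : g 1 0 = 0 := by
        rcases mul_eq_zero.1 (pow_eq_zero_iff two_ne_zero |>.1 this) with h | h
        · exact h
        · exact absurd h hxy
      rw [h0] at g1 g2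
      exact ⟨by rw [g2]; ring, h0, by linear_combination -g1⟩

theorem fix_unique {g : GG} (hg : g ∉ ZZ) (hd : disc g = 0) {x y : Ω} (gx : g • x = x)
    (gy : g • y = y) : x = y := by
  by_contra h
  exact disc_ne_of_fix hg h gx gy hd

theorem exists_other_fix {g : GG} (hd : disc g ≠ 0) {x : Ω} (gx : g • x = x) :
    ∃ y : Ω, y ≠ x ∧ g • y = y := by
  rw [disc] at hd
  cases x with
  | infty =>
    rw [fix_infty] at gx
    have : g 1 1 - g 0 0 ≠ 0 := by
      intro h; apply hd; rw [gx]; linear_combination (g 1 1 - g 0 0) * h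
    refine ⟨((g 0 1 / (g 1 1 - g 0 0) : F) : Ω), OnePoint.coe_ne_infty _, ?_⟩
    rw [fix_coe, gx]; field_simp; ring
  | coe x =>
    rw [fix_coe] at gx
    by_cases h0 : g 1 0 = 0
    · exact ⟨∞, OnePoint.infty_ne_coe _, fix_infty.2 h0⟩
    · refine ⟨(((g 0 0 - g 1 1) / g 1 0 - x : F) : Ω), ?_, ?_⟩
      · rw [Ne, OnePoint.coe_eq_coe]
        intro e
        have e' : g 0 0 - g 1 1 = 2 * g 1 0 * x := by field_simp at e; linear_combination e
        apply hd
        linear_combination (g 0 0 - g 1 1) * e' - 2 * g 1 0 * x * e' - 4 * g 1 0 * gx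
      · rw [fix_coe]
        field_simp
        linear_combination g 1 0 * gx

/-- `GL₂` is transitive on ordered pairs of distinct points. -/
theorem exists_smul_pair {x y : Ω} (hxy : x ≠ y) :
    ∃ k : GG, k • (∞ : Ω) = x ∧ k • ((0 : F) : Ω) = y := by
  cases x with
  | infty =>
    cases y with
    | infty => exact absurd rfl hxy
    | coe y =>
      refine ⟨gl 1 y 0 1 (by simp), ?_, ?_⟩
      · simp [OnePoint.smul_infty_eq_ite]
      · simp [OnePoint.smul_some_eq_ite]
  | coe x =>
    cases y with
    | infty =>
      refine ⟨gl x 1 1 0 (by simp), ?_, ?_⟩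
      · simp [OnePoint.smul_infty_eq_ite]
      · simp [OnePoint.smul_some_eq_ite]
    | coe y =>
      have hxy : x - y ≠ 0 := fun e => hxy (by rw [sub_eq_zero.1 e])
      refine ⟨gl x y 1 1 (by simpa using hxy), ?_, ?_⟩
      · simp [OnePoint.smul_infty_eq_ite]
      · simp [OnePoint.smul_some_eq_ite]

/-- The stabiliser of two points is transitive on the other points. -/
theorem exists_fix_smul {x y w w' : Ω} (hxy : x ≠ y) (hwx : w ≠ x) (hwy : w ≠ y) (hwx' : w' ≠ x)
    (hwy' : w' ≠ y) : ∃ k : GG, k • x = x ∧ k • y = y ∧ k • w = w' := by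
  obtain ⟨m, rfl, rfl⟩ := exists_smul_pair hxy
  obtain ⟨v, rfl⟩ : ∃ v, w = m • v := ⟨m⁻¹ • w, by simp⟩
  obtain ⟨v', rfl⟩ : ∃ v, w' = m • v := ⟨m⁻¹ • w', by simp⟩
  simp only [ne_eq, smul_left_cancel_iff] at hwx hwy hwx' hwy'
  cases v with
  | infty => exact absurd rfl hwx
  | coe v =>
  cases v' with
  | infty => exact absurd rfl hwx'
  | coe v' =>
    rw [OnePoint.coe_eq_coe] at hwy hwy'
    refine ⟨m * gl v' 0 0 v (by simp [hwy, hwy']) * m⁻¹, ?_, ?_, ?_⟩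
    · rw [mul_smul, inv_smul_smul, mul_smul, smul_left_cancel_iff]
      simp [OnePoint.smul_infty_eq_ite]
    · rw [mul_smul, inv_smul_smul, mul_smul, smul_left_cancel_iff]
      simp [OnePoint.smul_some_eq_ite, hwy]
    · rw [mul_smul, inv_smul_smul, mul_smul, smul_left_cancel_iff]
      simp [OnePoint.smul_some_eq_ite, hwy]

/-- The kernel of the action is the centre, and three fixed points suffice to detect it. -/
theorem cen_of_three {g : GG} {x y w : Ω} (hxy : x ≠ y) (hwx : w ≠ x) (hwy : w ≠ y)
    (gx : g • x = x) (gy : g • y = y) (gw : g • w = w) : g ∈ ZZ := by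
  obtain ⟨m, rfl, rfl⟩ := exists_smul_pair hxy
  obtain ⟨v, rfl⟩ : ∃ v, w = m • v := ⟨m⁻¹ • w, by simp⟩
  simp only [ne_eq, smul_left_cancel_iff] at hwx hwy
  rw [← conj_mem_cen (k := m⁻¹)]
  set g' := m⁻¹ * g * m⁻¹⁻¹ with hg'
  have g1 : g' • (∞ : Ω) = ∞ := by
    simp [hg', mul_smul, gx]
  have g2 : g' • ((0 : F) : Ω) = (0 : F) := by
    simp only [hg', mul_smul, inv_inv, gy]; simp
  have g3 : g' • v = v := by
    simp [hg', mul_smul, gw]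
  cases v with
  | infty => exact absurd rfl hwx
  | coe v =>
    rw [OnePoint.coe_eq_coe] at hwy
    rw [fix_infty] at g1
    rw [fix_coe] at g2 g3
    have h01 : g' 0 1 = 0 := by linear_combination -g2
    refine mem_cen.2 ⟨h01, g1, ?_⟩
    apply mul_left_cancel₀ hwy
    rw [g1, h01] at g3
    linear_combination -g3

/-- The centraliser of a fixed-point-free element is transitive. -/
theorem exists_comm_smul {g : GG} (hg : ∀ x : Ω, g • x ≠ x) (x y : Ω) :
    ∃ t : GG, g * t = t * g ∧ t • x = y := by
  have hc : g 1 0 ≠ 0 := fun h => hg ∞ (fix_infty.2 h)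
  have key : ∀ y : Ω, ∃ t : GG, g * t = t * g ∧ t • (∞ : Ω) = y := by
    intro y
    cases y with
    | infty => exact ⟨1, by simp, by simp⟩
    | coe y =>
      have hy : g 1 0 * y ^ 2 + (g 1 1 - g 0 0) * y - g 0 1 ≠ 0 := fun h => hg y (fix_coe.2 h)
      refine ⟨gl (y * g 1 0) (g 0 1) (g 1 0) (g 1 1 - g 0 0 + y * g 1 0) ?_, ?_, ?_⟩
      · intro h
        apply hy
        apply mul_left_cancel₀ hc
        linear_combination h
      · rw [comm_iff]; simp
      · simp [OnePoint.smul_infty_eq_ite, hc]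
  obtain ⟨t, ht, rfl⟩ := key x
  obtain ⟨s, hs, rfl⟩ := key y
  refine ⟨s * t⁻¹, ?_, by simp [mul_smul]⟩
  have h1 : Commute g s := hs
  have h2 : Commute g t := ht
  exact h1.mul_right h2.inv_right

/-- Two elements with a double eigenvalue and the same fixed point commute: up to scalars they lie
in the same unipotent group. -/
theorem comm_of_par {g h : GG} (hg : disc g = 0) (hh : disc h = 0) {x : Ω} (gx : g • x = x)
    (hx : h • x = x) : g * h = h * g := by
  rw [comm_iff]
  rw [disc] at hg hh
  cases x with
  | infty =>
    rw [fix_infty] at gx hx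
    rw [gx, mul_zero, add_zero, sq_eq_zero_iff] at hg
    rw [hx, mul_zero, add_zero, sq_eq_zero_iff] at hh
    rw [gx, hx, hg, hh]; simp
  | coe x =>
    rw [fix_coe] at gx hx
    have aux : ∀ c e b : F, e ^ 2 + 4 * b * c = 0 → c * x ^ 2 - e * x - b = 0 →
        e = 2 * c * x ∧ b = - c * x ^ 2 := by
      intro c e b h1 h2
      have : (e - 2 * c * x) ^ 2 = 0 := by linear_combination h1 + 4 * c * h2
      have : e = 2 * c * x := by
        linear_combination (pow_eq_zero_iff two_ne_zero).1 this
      exact ⟨this, by linear_combination -h2 - x * this⟩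
    obtain ⟨g1, g2⟩ := aux _ _ _ hg (by linear_combination gx)
    obtain ⟨h1, h2⟩ := aux _ _ _ hh (by linear_combination hx)
    rw [g1, g2, h1, h2]
    refine ⟨by ring, by ring, by ring⟩

/-- Over a finite field, a double eigenvalue is rational; in characteristic two because every
element is a square. -/
theorem exists_fix_of_disc [Finite F] {g : GG} (hg : disc g = 0) : ∃ x : Ω, g • x = x := by
  rw [disc] at hg
  by_cases h0 : g 1 0 = 0
  · exact ⟨∞, fix_infty.2 h0⟩
  by_cases h2 : (2 : F) = 0
  · have : CharP F 2 := CharTwo.of_one_ne_zero_of_two_eq_zero one_ne_zero h2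
    have := Fintype.ofFinite F
    obtain ⟨r, hr⟩ := FiniteField.isSquare_of_char_two (ringChar.eq F 2) (g 0 1 / g 1 0)
    refine ⟨(r : Ω), fix_coe.2 ?_⟩
    have h4 : (g 0 0 - g 1 1) ^ 2 = 0 := by linear_combination hg - 2 * g 0 1 * g 1 0 * h2
    have h5 := (pow_eq_zero_iff two_ne_zero).1 h4
    have h6 : g 0 1 = g 1 0 * (r * r) := by rw [← hr]; field_simp
    rw [h6]; linear_combination -r * h5
  · refine ⟨(((g 0 0 - g 1 1) / (2 * g 1 0) : F) : Ω), fix_coe.2 ?_⟩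
    field_simp
    linear_combination -hg

end MatrixFacts

/-! ### Maximal tori, companion matrices and fixed-point-free elements -/

section GroupFacts

variable {F : Type*} [Field F]

local notation "GG" => GL (Fin 2) F
local notation "ZZ" => Subgroup.center (GL (Fin 2) F)

theorem not_cen_of_disc {g : GG} (hd : disc g ≠ 0) : g ∉ ZZ := by
  intro h
  obtain ⟨h1, h2, h3⟩ := mem_cen.1 h
  apply hd
  rw [disc, h1, h3]; ring

/-- Having distinct eigenvalues is a property of the maximal commutative subgroup containing a
non-scalar element. -/
theorem disc_of_comm {g h : GG} (hg : g ∉ ZZ) (hh : h ∉ ZZ) (e : g * h = h * g) :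
    disc g = 0 ↔ disc h = 0 := by
  obtain ⟨α, β, a1, a2, a3, a4⟩ := exists_lin hg e
  have : disc h = β ^ 2 * disc g := by rw [disc, disc, a1, a2, a3, a4]; ring
  have hβ : β ≠ 0 := by
    rintro rfl
    apply hh
    rw [mem_cen, a1, a2, a3, a4]
    simp
  rw [this]
  simp [hβ]

/-- The diagonal torus. -/
def diagHom (F : Type*) [Field F] : Fˣ →* GL (Fin 2) F where
  toFun u := gl u 0 0 1 (by simp)
  map_one' := by apply gl_ext <;> simp
  map_mul' u v := by apply gl_ext <;> simp only [mul_00, mul_01, mul_10, mul_11] <;> simp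

/-- A shift by a scalar of a companion matrix, with prescribed upper right entry and prescribed
difference of the diagonal entries. A shift making it invertible exists as the field has an element
`t` different from `0` and `1`. -/
theorem exists_companion {t : F} (ht0 : t ≠ 0) (ht1 : t ≠ 1) (p : F × F) :
    ∃ m : GG, m 1 0 = 1 ∧ m 0 0 - m 1 1 = p.1 ∧ m 0 1 = p.2 := by
  obtain ⟨a, b⟩ := p
  suffices h : ∃ s : F, (a + s) * s - b ≠ 0 by
    obtain ⟨s, hs⟩ := h
    exact ⟨gl (a + s) b 1 s (by simpa using hs), by simp, by simp, by simp⟩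
  by_contra! h
  have h0 := h 0
  have h1 := h 1
  have h2 := h t
  have hb : b = 0 := by linear_combination -h0
  have ha : a = -1 := by linear_combination h1 + hb
  rw [hb, ha] at h2
  have : t * (t - 1) = 0 := by linear_combination h2
  rcases mul_eq_zero.1 this with h | h
  · exact ht0 h
  · exact ht1 (sub_eq_zero.1 h)

/-- Commuting (shifted) companion matrices have the same parameters. -/
theorem companion_inj {m m' : GG} (h : m 1 0 = 1) (h' : m' 1 0 = 1) (e : m * m' = m' * m) :
    m 0 0 - m 1 1 = m' 0 0 - m' 1 1 ∧ m 0 1 = m' 0 1 := by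
  rw [comm_iff, h, h'] at e
  obtain ⟨e0, e1, e2⟩ := e
  exact ⟨by linear_combination -e2, by linear_combination e0⟩

variable [DecidableEq F]

local notation "Ω" => OnePoint F

/-- Modulo scalars, the centraliser of a non-scalar element with nonzero discriminant (a maximal
torus) is cyclic. -/
theorem exists_gen [Finite F] {g : GG} (hd : disc g ≠ 0) :
    ∃ γ : GG, g * γ = γ * g ∧ ∀ h : GG, g * h = h * g → ∃ (n : ℤ) (z : GG), z ∈ ZZ ∧
      h = z * γ ^ n := by
  have hg := not_cen_of_disc hd
  by_cases hfix : ∃ x : Ω, g • x = x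
  · obtain ⟨x, hx⟩ := hfix
    obtain ⟨y, hyx, hy⟩ := exists_other_fix hd hx
    obtain ⟨m, rfl, rfl⟩ := exists_smul_pair hyx.symm
    obtain ⟨ζ, hζ⟩ := IsCyclic.exists_generator (α := Fˣ)
    refine ⟨m * diagHom F ζ * m⁻¹, ?_, ?_⟩
    · apply comm_of_fix hyx hy hx
      · rw [mul_smul, inv_smul_smul, mul_smul, smul_left_cancel_iff]
        simp [OnePoint.smul_some_eq_ite, diagHom]
      · rw [mul_smul, inv_smul_smul, mul_smul, smul_left_cancel_iff]
        simp [OnePoint.smul_infty_eq_ite, diagHom]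
    · intro h e
      have h1 := fix_of_comm hg e hx
      have h2 := fix_of_comm hg e hy
      set k := m⁻¹ * h * m with hk
      have k1 : k • (∞ : Ω) = ∞ := by rw [hk, mul_smul, mul_smul, h1, inv_smul_smul]
      have k2 : k • ((0 : F) : Ω) = (0 : F) := by rw [hk, mul_smul, mul_smul, h2, inv_smul_smul]
      rw [fix_infty] at k1
      rw [fix_coe, k1] at k2
      have k01 : k 0 1 = 0 := by linear_combination -k2
      have hdet := det_ne k
      rw [k01, zero_mul, sub_zero] at hdet
      have h00 := left_ne_zero_of_mul hdet
      have h11 := right_ne_zero_of_mul hdet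
      obtain ⟨n, hn⟩ := Subgroup.mem_zpowers_iff.1 (hζ (Units.mk0 (k 0 0 / k 1 1)
        (div_ne_zero h00 h11)))
      have hz : gl (k 1 1) 0 0 (k 1 1) (by simpa using h11) ∈ ZZ := mem_cen.2 (by simp)
      refine ⟨n, _, hz, ?_⟩
      rw [conj_zpow, ← map_zpow, hn]
      have hkd : k = gl (k 1 1) 0 0 (k 1 1) (by simpa using h11) *
          diagHom F (Units.mk0 (k 0 0 / k 1 1) (div_ne_zero h00 h11)) := by
        apply gl_ext <;> simp only [mul_00, mul_01, mul_10, mul_11] <;>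
          simp [diagHom, k01, k1, mul_div_cancel₀, h11]
      have hm := Subgroup.mem_center_iff.1 hz m
      rw [← mul_assoc, ← mul_assoc, ← hm, mul_assoc m, ← hkd, hk]
      group
  · push Not at hfix
    have hc : g 1 0 ≠ 0 := fun h => hfix ∞ (fix_infty.2 h)
    let K := AlgebraicClosure F
    let ι := algebraMap F K
    obtain ⟨lam, hlam⟩ : ∃ x : K, ι (g 1 0) * x ^ 2 + (ι (g 1 1) - ι (g 0 0)) * x - ι (g 0 1) = 0 := by
      obtain ⟨x, hx⟩ := IsAlgClosed.exists_root (k := K)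
        (Polynomial.C (ι (g 1 0)) * Polynomial.X ^ 2 +
          Polynomial.C (ι (g 1 1) - ι (g 0 0)) * Polynomial.X + Polynomial.C (-ι (g 0 1)))
        (by rw [Polynomial.degree_quadratic (by simpa [ι] using hc)]; decide)
      refine ⟨x, ?_⟩
      simp [Polynomial.IsRoot] at hx
      linear_combination hx
    have hrat : ∀ x : F, ι x ≠ lam := by
      rintro x rfl
      apply hfix x
      rw [fix_coe]
      apply ι.injective
      simpa using hlam
    let C := Subgroup.centralizer ({g} : Set GG)
    have hC : ∀ h : GG, h ∈ C ↔ g * h = h * g := fun h =>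
      Subgroup.mem_centralizer_singleton_iff.trans eq_comm
    let f : C →* K :=
      { toFun := fun M => ι (M.1 1 0) * lam + ι (M.1 1 1)
        map_one' := by simp
        map_mul' := by
          rintro ⟨M, hM⟩ ⟨N, hN⟩
          obtain ⟨α, β, a1, a2, a3, a4⟩ := exists_lin hg ((hC N).1 hN)
          change ι ((M * N) 1 0) * lam + ι ((M * N) 1 1) =
            (ι (M 1 0) * lam + ι (M 1 1)) * (ι (N 1 0) * lam + ι (N 1 1))
          simp only [mul_10, mul_11, a1, a2, a3, a4, map_add, map_mul]
          linear_combination -ι (M 1 0) * ι β * hlam }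
    have hf : Function.Injective f := by
      rw [injective_iff_map_eq_one]
      rintro ⟨M, hM⟩ h
      change ι (M 1 0) * lam + ι (M 1 1) = 1 at h
      obtain ⟨α, β, a1, a2, a3, a4⟩ := exists_lin hg ((hC M).1 hM)
      have h10 : M 1 0 = 0 := by
        by_contra h0
        have h0' : ι (M 1 0) ≠ 0 := by simpa [ι] using h0
        apply hrat ((1 - M 1 1) / M 1 0)
        rw [map_div₀, map_sub, map_one, div_eq_iff h0']
        linear_combination -h
      have hβ : β = 0 := by
        rw [a3] at h10
        exact (mul_eq_zero.1 h10).resolve_right hc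
      rw [h10, map_zero, zero_mul, zero_add, ← map_one ι] at h
      have h11 := ι.injective h
      ext1
      subst hβ
      have hα : α = 1 := by rw [← h11, a4]; ring
      apply gl_ext <;> simp [a1, a2, a3, a4, hα]
    have : IsCyclic C := isCyclic_of_injective_ringHom f hf
    obtain ⟨⟨γ, hγ⟩, hgen⟩ := IsCyclic.exists_generator (α := C)
    refine ⟨γ, (hC γ).1 hγ, fun h hh => ?_⟩
    obtain ⟨n, hn⟩ := Subgroup.mem_zpowers_iff.1 (hgen ⟨h, (hC h).2 hh⟩)
    refine ⟨n, 1, one_mem _, ?_⟩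
    rw [one_mul]
    exact (congrArg Subtype.val hn).symm

/-- Jordan's theorem for subgroups transitive on the projective line, from Burnside's lemma. -/
theorem exists_fpf [Finite F] (H : Subgroup GG)
    (htr : ∀ x y : Ω, ∃ h ∈ H, h • x = y) : ∃ h ∈ H, ∀ x : Ω, h • x ≠ x := by
  classical
  have := Fintype.ofFinite F
  have : Fintype Ω := inferInstanceAs (Fintype (Option F))
  have : Fintype H := Fintype.ofFinite H
  by_contra! hcon
  have hB := MulAction.sum_card_fixedBy_eq_card_orbits_mul_card_group H Ω
  have hpre : MulAction.IsPretransitive H Ω := ⟨fun x y => by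
    obtain ⟨h, hh, e⟩ := htr x y
    exact ⟨⟨h, hh⟩, e⟩⟩
  have hsub : Subsingleton (MulAction.orbitRel.Quotient H Ω) :=
    (MulAction.pretransitive_iff_subsingleton_quotient H Ω).1 hpre
  have hle : Fintype.card (MulAction.orbitRel.Quotient H Ω) ≤ 1 :=
    Fintype.card_le_one_iff_subsingleton.2 hsub
  have hlt : ∑ _h : H, 1 < ∑ h : H, Fintype.card (MulAction.fixedBy Ω h) := by
    apply Finset.sum_lt_sum
    · rintro ⟨h, hh⟩ -
      obtain ⟨x, hx⟩ := hcon h hh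
      exact Fintype.card_pos_iff.2 ⟨⟨x, hx⟩⟩
    · refine ⟨1, Finset.mem_univ _, ?_⟩
      rw [Fintype.one_lt_card_iff]
      exact ⟨⟨∞, one_smul _ _⟩, ⟨((0 : F) : Ω), one_smul _ _⟩, fun e =>
        OnePoint.infty_ne_coe (0 : F) (congrArg Subtype.val e)⟩
  rw [hB] at hlt
  simp at hlt
  nlinarith [Fintype.card_pos (α := H)]

/-- The stabiliser of a point contains two unipotents independent modulo scalars. -/
theorem exists_two_par {t : F} (ht0 : t ≠ 0) (ht1 : t ≠ 1) (x : Ω) :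
    ∃ u v : GG, u ∉ ZZ ∧ v ∉ ZZ ∧ disc u = 0 ∧ disc v = 0 ∧ u • x = x ∧ v • x = x ∧
      u⁻¹ * v ∉ ZZ := by
  obtain ⟨m, rfl⟩ : ∃ m : GG, m • (∞ : Ω) = x := by
    cases x with
    | infty => exact ⟨1, one_smul _ _⟩
    | coe x => exact (exists_smul_pair (OnePoint.coe_ne_infty x)).imp fun _ h => h.1
  have hinf : ∀ s : F, gl 1 s 0 1 (by simp) • (∞ : Ω) = ∞ := fun s => fix_infty.2 (by simp)
  refine ⟨m * gl 1 1 0 1 (by simp) * m⁻¹, m * gl 1 t 0 1 (by simp) * m⁻¹, ?_, ?_, ?_, ?_, ?_, ?_,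
    ?_⟩
  · rw [conj_mem_cen, mem_cen]; simp
  · rw [conj_mem_cen, mem_cen]; simp [ht0]
  · rw [disc_conj, disc]; simp
  · rw [disc_conj, disc]; simp
  · rw [mul_smul, inv_smul_smul, mul_smul, hinf]
  · rw [mul_smul, inv_smul_smul, mul_smul, hinf]
  · rw [show (m * gl 1 1 0 1 (by simp) * m⁻¹)⁻¹ * (m * gl 1 t 0 1 (by simp) * m⁻¹) =
      m * ((gl 1 1 0 1 (by simp))⁻¹ * gl 1 t 0 1 (by simp)) * m⁻¹ by group, conj_mem_cen]
    intro hz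
    have e : gl 1 t 0 1 (by simp) = gl 1 1 0 1 (by simp) *
      ((gl 1 1 0 1 (by simp))⁻¹ * gl 1 t 0 1 (by simp)) := by group
    set z := (gl 1 1 0 1 (by simp : (1 : F) * 1 - 1 * 0 ≠ 0))⁻¹ * gl 1 t 0 1 (by simp)
    obtain ⟨z1, z2, z3⟩ := mem_cen.1 hz
    have e1 := congrArg (fun k : GG => k 0 1) e
    have e2 := congrArg (fun k : GG => k 1 1) e
    simp only [mul_01, mul_11, gl_00, gl_01, gl_10, gl_11] at e1 e2
    apply ht1
    linear_combination e1 - e2 + z1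

end GroupFacts

/-! ### Subgroups containing every torus they meet -/

section Subgroups

variable {F : Type*} [Field F]

local notation "GG" => GL (Fin 2) F
local notation "ZZ" => Subgroup.center (GL (Fin 2) F)

/-- A subgroup of `GL₂` containing the scalars, and containing every maximal torus that it meets
in more than the scalars. The preimages of the components of a partition of `PGL₂` have this
property. -/
structure Full (H : Subgroup GG) : Prop where
  cen : ZZ ≤ H
  torus : ∀ h ∈ H, disc h ≠ 0 → ∀ k : GG, h * k = k * h → k ∈ H

variable [DecidableEq F]

local notation "Ω" => OnePoint F

/-- The subgroup `H` contains the pointwise stabiliser of `x` and `y`. -/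
def PairLe (H : Subgroup GG) (x y : Ω) : Prop := ∀ k : GG, k • x = x → k • y = y → k ∈ H

theorem PairLe.symm {H : Subgroup GG} {x y : Ω} (h : PairLe H x y) : PairLe H y x :=
  fun k hy hx => h k hx hy

theorem Full.pairLe {H : Subgroup GG} (hH : Full H) {k : GG} (hk : k ∈ H) (hd : disc k ≠ 0)
    {x y : Ω} (hxy : x ≠ y) (kx : k • x = x) (ky : k • y = y) : PairLe H x y :=
  fun m mx my => hH.torus k hk hd m (comm_of_fix hxy kx ky mx my)

theorem PairLe.smul {H : Subgroup GG} {x y : Ω} (h : PairLe H x y) {k : GG} (hk : k ∈ H) :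
    PairLe H (k • x) (k • y) := by
  intro m mx my
  have : k⁻¹ * m * k ∈ H := by
    apply h
    · rw [mul_smul, mul_smul, mx, inv_smul_smul]
    · rw [mul_smul, mul_smul, my, inv_smul_smul]
  have h2 := H.mul_mem (H.mul_mem hk this) (H.inv_mem hk)
  convert h2 using 1
  group

/-- As the field has an element different from `0` and `1`, the split torus fixing `x` and `y`
contains a non-scalar element. -/
theorem exists_hyp {t : F} (ht0 : t ≠ 0) (ht1 : t ≠ 1) {x y : Ω} (hxy : x ≠ y) :
    ∃ d : GG, disc d ≠ 0 ∧ d • x = x ∧ d • y = y := by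
  obtain ⟨m, rfl, rfl⟩ := exists_smul_pair hxy
  refine ⟨m * gl t 0 0 1 (by simpa using ht0) * m⁻¹, ?_, ?_, ?_⟩
  · rw [disc_conj, disc]; simpa using sub_ne_zero.2 ht1
  · rw [mul_smul, inv_smul_smul, mul_smul, fix_infty.2 (by simp)]
  · rw [mul_smul, inv_smul_smul, mul_smul, fix_coe.2 (by simp)]

theorem disc_ne_of_fpf [Finite F] {g : GG} (hg : ∀ x : Ω, g • x ≠ x) : disc g ≠ 0 := by
  intro h
  obtain ⟨x, hx⟩ := exists_fix_of_disc h
  exact hg x hx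

/-- Elements commuting with a fixed-point-free element are scalar as soon as they fix a point. -/
theorem cen_of_comm_fpf [Finite F] {g t : GG} (hg : ∀ x : Ω, g • x ≠ x) (e : g * t = t * g)
    {x : Ω} (tx : t • x = x) : t ∈ ZZ := by
  by_contra ht
  exact hg x (fix_of_comm ht e.symm tx)

/-- The Borel subgroup of `x` is generated by a split torus `Stab(x, y)` and any element fixing
`x` but not `y`; and it is a maximal subgroup. -/
theorem borel_of_pairLe {H : Subgroup GG} {x y : Ω} (hxy : x ≠ y) (hT : PairLe H x y) {h : GG}
    (hh : h ∈ H) (hx : h • x = x) (hy : h • y ≠ y) :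
    H = ⊤ ∨ ∀ k, k ∈ H ↔ k • x = x := by
  have ne_x : ∀ {k : GG} {v : Ω}, k • x = x → v ≠ x → k • v ≠ x := by
    intro k v kx hv e
    apply hv
    rw [← kx] at e
    exact smul_left_cancel k e
  have hB : ∀ b : GG, b • x = x → b ∈ H := by
    intro b bx
    by_cases hby : b • y = y
    · exact hT b bx hby
    obtain ⟨k, kx, ky, e⟩ := exists_fix_smul hxy (ne_x hx hxy.symm) hy (ne_x bx hxy.symm) hby
    have h1 : k * h ∈ H := H.mul_mem (hT k kx ky) hh
    have h2 : (k * h)⁻¹ * b ∈ H := by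
      apply hT
      · rw [mul_smul, bx, inv_smul_eq_iff, mul_smul, hx, kx]
      · rw [mul_smul, inv_smul_eq_iff, mul_smul, e]
    have h3 := H.mul_mem h1 h2
    rwa [mul_inv_cancel_left] at h3
  by_cases hfix : ∀ k ∈ H, k • x = x
  · exact Or.inr fun k => ⟨hfix k, hB k⟩
  push Not at hfix
  obtain ⟨h', hh', hx'⟩ := hfix
  left
  rw [eq_top_iff]
  rintro g -
  by_cases hg : g • x = x
  · exact hB g hg
  obtain ⟨m, mx, m0⟩ := exists_smul_pair (Ne.symm hx')
  obtain ⟨n, nx, n0⟩ := exists_smul_pair (Ne.symm hg)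
  have h1 : n * m⁻¹ ∈ H := by
    apply hB
    rw [mul_smul, ← nx, smul_left_cancel_iff, nx, ← mx, inv_smul_smul]
  have h2 : n * m⁻¹ * h' ∈ H := H.mul_mem h1 hh'
  have h3 : (n * m⁻¹ * h')⁻¹ * g ∈ H := by
    apply hB
    rw [mul_smul, inv_smul_eq_iff, mul_smul, mul_smul, ← m0, inv_smul_smul, n0]
  have h4 := H.mul_mem h2 h3
  rwa [mul_inv_cancel_left] at h4

/-- Two distinct nonsplit tori generate a split element: for fixed `h`, each point `x` is fixed by
some `t * h` with `t` in the first torus, the `q + 1` points give only `q` classes of nontrivial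
`t`, so that some `t * h` has two fixed points. -/
theorem exists_pair_of_two_fpf [Finite F] {H : Subgroup GG} (hH : Full H) {g h : GG} (hg : g ∈ H)
    (hh : h ∈ H) (gf : ∀ x : Ω, g • x ≠ x) (hf : ∀ x : Ω, h • x ≠ x) (hne : g * h ≠ h * g) :
    ∃ x y : Ω, x ≠ y ∧ PairLe H x y := by
  have hfin : Finite Ω := inferInstanceAs (Finite (Option F))
  choose t ht htx using fun x : Ω => exists_comm_smul gf (h • x) x
  have hns : ¬ Function.Surjective fun x : Ω => t x • (∞ : Ω) := by
    intro hs
    obtain ⟨x, hx⟩ := hs ∞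
    have hz := cen_of_comm_fpf gf (ht x) hx
    apply hf x
    rw [← cen_smul hz (h • x), htx]
  rw [← Finite.injective_iff_surjective] at hns
  simp only [Function.Injective, not_forall] at hns
  obtain ⟨x, y, e, hxy⟩ := hns
  have hz : (t x)⁻¹ * t y ∈ ZZ := by
    have h1 : Commute g ((t x)⁻¹ * t y) :=
      (show Commute g (t x) from ht x).inv_right.mul_right (ht y)
    apply cen_of_comm_fpf gf h1 (x := ∞)
    rw [mul_smul, inv_smul_eq_iff]; exact e.symm
  have hx : (t x * h) • x = x := by rw [mul_smul, htx]
  have hy : (t x * h) • y = y := by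
    have := cen_smul hz (h • y)
    rw [mul_smul, inv_smul_eq_iff, htx] at this
    rw [mul_smul, ← this]
  have hk : t x * h ∈ H := H.mul_mem (hH.torus g hg (disc_ne_of_fpf gf) _ (ht x)) hh
  refine ⟨x, y, hxy, hH.pairLe hk (disc_ne_of_fix ?_ hxy hx hy) hxy hx hy⟩
  intro hzz
  apply hne
  have h1 : Commute g ((t x)⁻¹ * (t x * h)) :=
      (show Commute g (t x) from ht x).inv_right.mul_right (Subgroup.mem_center_iff.1 hzz g)
  rw [inv_mul_cancel_left] at h1
  exact h1

/-- A nonsplit and a split torus generate a second nonsplit torus: as `d` has two fixed points,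
pigeonhole gives an `s` in the nonsplit torus for which `d * s` has no fixed point. -/
theorem exists_fpf_of_fpf_of_pair [Finite F] {t : F} (ht0 : t ≠ 0) (ht1 : t ≠ 1)
    {H : Subgroup GG} (hH : Full H) {g : GG} (hg : g ∈ H) (gf : ∀ x : Ω, g • x ≠ x) {x y : Ω}
    (hxy : x ≠ y) (hT : PairLe H x y) :
    ∃ h ∈ H, (∀ x : Ω, h • x ≠ x) ∧ g * h ≠ h * g := by
  have hfin : Finite Ω := inferInstanceAs (Finite (Option F))
  obtain ⟨d, hd, dx, dy⟩ := exists_hyp ht0 ht1 hxy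
  choose t ht htx using fun x : Ω => exists_comm_smul gf x (d⁻¹ • x)
  have hfixd : ∀ w : Ω, d • w = w → t w • (∞ : Ω) = ∞ := by
    intro w hw
    apply cen_smul
    apply cen_of_comm_fpf gf (ht w) (x := w)
    rw [htx, inv_smul_eq_iff, hw]
  have hni : ¬ Function.Injective fun x : Ω => t x • (∞ : Ω) := by
    intro hi
    exact hxy (hi ((hfixd x dx).trans (hfixd y dy).symm))
  rw [Finite.injective_iff_surjective] at hni
  simp only [Function.Surjective, not_forall, not_exists] at hni
  obtain ⟨v, hv⟩ := hni
  obtain ⟨s, hs, hsv⟩ := exists_comm_smul gf ∞ v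
  refine ⟨d * s, H.mul_mem (hT d dx dy) (hH.torus g hg (disc_ne_of_fpf gf) _ hs), ?_, ?_⟩
  · intro w hw
    have hz : (t w)⁻¹ * s ∈ ZZ := by
      have h1 : Commute g ((t w)⁻¹ * s) :=
        (show Commute g (t w) from ht w).inv_right.mul_right hs
      apply cen_of_comm_fpf gf h1 (x := w)
      rw [mul_smul, inv_smul_eq_iff, htx, eq_inv_smul_iff, ← mul_smul, hw]
    apply hv w
    have := cen_smul hz (∞ : Ω)
    rw [mul_smul, inv_smul_eq_iff, hsv] at this
    exact this.symm
  · intro e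
    have h1 : Commute g (d * s * s⁻¹) :=
      (show Commute g (d * s) from e).mul_right (show Commute g s from hs).inv_right
    rw [mul_inv_cancel_right] at h1
    exact not_cen_of_disc hd (cen_of_comm_fpf gf h1 dx)

/-- If fixing one point of a split pair forces fixing the other, then `H` cannot contain two
nonsplit tori and a split one: both nonsplit tori would contain the map interchanging the two
points of every split pair. -/
theorem false_of_matching [Finite F] {t : F} (ht0 : t ≠ 0) (ht1 : t ≠ 1)
    {H : Subgroup GG} (hH : Full H)
    (hN : ∀ x y : Ω, x ≠ y → PairLe H x y → ∀ k ∈ H, k • x = x → k • y = y)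
    {g h : GG} (hg : g ∈ H) (hh : h ∈ H) (gf : ∀ x : Ω, g • x ≠ x) (hf : ∀ x : Ω, h • x ≠ x)
    (hne : g * h ≠ h * g) {x y : Ω} (hxy : x ≠ y) (hT : PairLe H x y) : False := by
  have key : ∀ e ∈ H, (∀ x : Ω, e • x ≠ x) → ∀ s : GG, e * s = s * e → s • x = y →
      ∀ w : Ω, w ≠ s • w ∧ PairLe H w (s • w) := by
    intro e he ef s hs hsx w
    obtain ⟨r, hr, rfl⟩ := exists_comm_smul ef x w
    have hsr : s • r • x = r • y := by
      rw [← mul_smul, comm_trans (not_cen_of_disc (disc_ne_of_fpf ef)) hs hr, mul_smul, hsx]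
    rw [hsr]
    exact ⟨fun h => hxy (smul_left_cancel r h),
      hT.smul (hH.torus e he (disc_ne_of_fpf ef) r hr)⟩
  obtain ⟨s, hs, hsx⟩ := exists_comm_smul gf x y
  obtain ⟨s', hs', hsx'⟩ := exists_comm_smul hf x y
  have heq : ∀ w : Ω, s • w = s' • w := by
    intro w
    obtain ⟨h1, h2⟩ := key g hg gf s hs hsx w
    obtain ⟨h3, h4⟩ := key h hh hf s' hs' hsx' w
    by_contra hss
    obtain ⟨d, hd, dx, dy⟩ := exists_hyp ht0 ht1 h1
    exact not_cen_of_disc hd (cen_of_three h1 h3.symm (Ne.symm hss) dx dy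
      (hN _ _ h3 h4 d (h2 d dx dy) dx))
  have hz : s⁻¹ * s' ∈ ZZ := by
    have hfx : ∀ w : Ω, (s⁻¹ * s') • w = w := by
      intro w; rw [mul_smul, ← heq, inv_smul_smul]
    refine cen_of_three (x := ∞) (y := ((0 : F) : Ω)) (w := ((1 : F) : Ω))
      (OnePoint.infty_ne_coe _) (OnePoint.coe_ne_infty _) ?_ (hfx _) (hfx _) (hfx _)
    rw [Ne, OnePoint.coe_eq_coe]
    exact one_ne_zero
  have hs'z : s' ∉ ZZ := by
    intro h0
    have := cen_smul h0 x
    rw [hsx'] at this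
    exact hxy this.symm
  have h1 : Commute g (s * (s⁻¹ * s')) :=
    (show Commute g s from hs).mul_right (Subgroup.mem_center_iff.1 hz g)
  rw [mul_inv_cancel_left] at h1
  exact hne (comm_trans hs'z h1.symm hs'.symm)

/-- Two disjoint split pairs produce a fixed-point-free element. -/
theorem exists_fpf_of_two_pairs [Finite F] {H : Subgroup GG} {x y x' y' : Ω} (hxy : x ≠ y)
    (hxy' : x' ≠ y') (h1 : x' ≠ x) (h2 : x' ≠ y) (h3 : y' ≠ x) (h4 : y' ≠ y)
    (hT : PairLe H x y) (hT' : PairLe H x' y') : ∃ h ∈ H, ∀ w : Ω, h • w ≠ w := by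
  by_cases hv : ∃ v : Ω, v ≠ x ∧ v ≠ y ∧ v ≠ x' ∧ v ≠ y'
  · obtain ⟨v, v1, v2, v3, v4⟩ := hv
    have htr : ∀ w : Ω, ∃ k ∈ H, k • x' = w := by
      have hxy_case : ∀ w : Ω, w ≠ x' → w ≠ y' → ∃ k ∈ H, k • x' = w := by
        intro w w1 w2
        obtain ⟨k, kx, ky, kv⟩ := exists_fix_smul hxy h1 h2 v1 v2
        obtain ⟨m, mx, my, mv⟩ := exists_fix_smul hxy' v3 v4 w1 w2
        exact ⟨m * k, H.mul_mem (hT' m mx my) (hT k kx ky), by rw [mul_smul, kv, mv]⟩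
      intro w
      by_cases w1 : w = x
      · subst w1; exact hxy_case _ h1.symm h3.symm
      by_cases w2 : w = y
      · subst w2; exact hxy_case _ h2.symm h4.symm
      obtain ⟨k, kx, ky, kv⟩ := exists_fix_smul hxy h1 h2 w1 w2
      exact ⟨k, hT k kx ky, kv⟩
    apply exists_fpf
    intro a b
    obtain ⟨k, hk, rfl⟩ := htr a
    obtain ⟨m, hm, rfl⟩ := htr b
    exact ⟨m * k⁻¹, H.mul_mem hm (H.inv_mem hk), by simp [mul_smul]⟩
  · -- Here the projective line has only the four points `x`, `y`, `x'`, `y'`; the product of the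
    -- swaps `x' ↔ y'` and `x ↔ y` moves all of them.
    push Not at hv
    have ne : ∀ {k : GG} {a b c : Ω}, k • a = b → c ≠ a → k • c ≠ b := by
      intro k a b c hab hca e
      rw [← hab] at e
      exact hca (smul_left_cancel k e)
    obtain ⟨d, dx, dy, dx'⟩ := exists_fix_smul hxy h1 h2 h3 h4
    obtain ⟨e, ex', ey', ex⟩ := exists_fix_smul hxy' h1.symm h3.symm h2.symm h4.symm
    have dy' : d • y' = x' := by
      by_contra hcon
      exact ne dx' hxy'.symm (hv _ (ne dx h3) (ne dy h4) hcon)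
    have ey : e • y = x := by
      by_contra hcon
      exact (ne ey' h4.symm) (hv _ hcon (ne ex hxy.symm) (ne ex' h2.symm))
    refine ⟨d * e, H.mul_mem (hT d dx dy) (hT' e ex' ey'), ?_⟩
    intro w
    rw [mul_smul]
    by_cases w1 : w = x
    · subst w1; rw [ex, dy]; exact hxy.symm
    by_cases w2 : w = y
    · subst w2; rw [ey, dx]; exact hxy
    by_cases w3 : w = x'
    · subst w3; rw [ex', dx']; exact hxy'.symm
    have w4 := hv w w1 w2 w3
    subst w4; rwa [ey', dy']

/-- A proper subgroup of the kind occurring in partitions that contains two distinct maximal tori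
is the stabiliser of a point. -/
theorem Full.eq_borel [Finite F] {t : F} (ht0 : t ≠ 0) (ht1 : t ≠ 1) {H : Subgroup GG}
    (hH : Full H) (hpr : H ≠ ⊤) {g h : GG} (hg : g ∈ H) (hh : h ∈ H) (gd : disc g ≠ 0)
    (hd : disc h ≠ 0) (hne : g * h ≠ h * g) : ∃ x : Ω, ∀ k, k ∈ H ↔ k • x = x := by
  by_contra! hcon
  have hN : ∀ x y : Ω, x ≠ y → PairLe H x y → ∀ k ∈ H, k • x = x → k • y = y := by
    intro x y hxy hT k hk kx
    by_contra ky
    rcases borel_of_pairLe hxy hT hk kx ky with h1 | h1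
    · exact hpr h1
    · obtain ⟨k, hk⟩ := hcon x
      have := h1 k
      tauto
  have hyp_pair : ∀ g ∈ H, disc g ≠ 0 → ¬ (∀ x : Ω, g • x ≠ x) →
      ∃ x y : Ω, x ≠ y ∧ PairLe H x y ∧ g • x = x ∧ g • y = y := by
    intro g hg gd gf
    push Not at gf
    obtain ⟨x, hx⟩ := gf
    obtain ⟨y, hyx, hy⟩ := exists_other_fix gd hx
    exact ⟨x, y, hyx.symm, hH.pairLe hg gd hyx.symm hx hy, hx, hy⟩
  obtain ⟨⟨x, y, hxy, hT⟩, e, he, ef⟩ : (∃ x y : Ω, x ≠ y ∧ PairLe H x y) ∧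
      ∃ e ∈ H, ∀ x : Ω, e • x ≠ x := by
    by_cases gf : ∀ x : Ω, g • x ≠ x
    · by_cases hf : ∀ x : Ω, h • x ≠ x
      · exact ⟨exists_pair_of_two_fpf hH hg hh gf hf hne, g, hg, gf⟩
      · obtain ⟨x, y, hxy, hT, -⟩ := hyp_pair h hh hd hf
        exact ⟨⟨x, y, hxy, hT⟩, g, hg, gf⟩
    · obtain ⟨x, y, hxy, hT, gx, gy⟩ := hyp_pair g hg gd gf
      refine ⟨⟨x, y, hxy, hT⟩, ?_⟩
      by_cases hf : ∀ x : Ω, h • x ≠ x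
      · exact ⟨h, hh, hf⟩
      · obtain ⟨x', y', hxy', hT', hx', hy'⟩ := hyp_pair h hh hd hf
        have hdis : ∀ v : Ω, h • v = v → v ≠ x ∧ v ≠ y := by
          intro v hv
          constructor
          · rintro rfl
            exact hne (comm_of_fix hxy gx gy hv (hN _ _ hxy hT h hh hv))
          · rintro rfl
            exact hne (comm_of_fix hxy gx gy (hN _ _ hxy.symm hT.symm h hh hv) hv)
        exact exists_fpf_of_two_pairs hxy hxy' (hdis _ hx').1 (hdis _ hx').2 (hdis _ hy').1
          (hdis _ hy').2 hT hT'
  obtain ⟨e', he', ef', hee⟩ := exists_fpf_of_fpf_of_pair ht0 ht1 hH he ef hxy hT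
  exact false_of_matching ht0 ht1 hH hN he he' ef ef' hee hxy hT

end Subgroups

/-! ### The lower bound -/

section LowerBound

variable {F : Type*} [Field F]

local notation "GG" => GL (Fin 2) F
local notation "ZZ" => Subgroup.center (GL (Fin 2) F)

/-- The preimages in `GL₂` of the members of a partition of `PGL₂`. -/
structure Comps (Q : Finset (Subgroup GG)) : Prop where
  cen : ∀ H ∈ Q, ZZ ≤ H
  proper : ∀ H ∈ Q, H ≠ ⊤
  cover : ∀ g : GG, ∃ H ∈ Q, g ∈ H
  uniq : ∀ H ∈ Q, ∀ K ∈ Q, ∀ g : GG, g ∉ ZZ → g ∈ H → g ∈ K → H = K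

/-- Tori are cyclic modulo scalars, so the member containing a generator contains the torus. -/
theorem Comps.full [Finite F] {Q : Finset (Subgroup GG)} (hQ : Comps Q) {H : Subgroup GG}
    (hH : H ∈ Q) : Full H := by
  refine ⟨hQ.cen H hH, fun h hh hd k hk => ?_⟩
  classical
  obtain ⟨γ, hγ, hgen⟩ := exists_gen hd
  obtain ⟨K, hK, hγK⟩ := hQ.cover γ
  have hin : ∀ k : GG, h * k = k * h → k ∈ K := by
    intro k hk
    obtain ⟨n, z, hz, rfl⟩ := hgen k hk
    exact K.mul_mem (hQ.cen K hK hz) (K.zpow_mem hγK n)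
  rw [hQ.uniq H hH K hK h (not_cen_of_disc hd) hh (hin h rfl)]
  exact hin k hk

/-- Each maximal torus lies in only one member. -/
theorem Comps.eq_of_comm [Finite F] {Q : Finset (Subgroup GG)} (hQ : Comps Q) {H K : Subgroup GG}
    (hH : H ∈ Q) (hK : K ∈ Q) {g h : GG} (hg : g ∈ H) (hh : h ∈ K) (gd : disc g ≠ 0)
    (hd : disc h ≠ 0) (e : g * h = h * g) : H = K :=
  hQ.uniq H hH K hK h (not_cen_of_disc hd) ((hQ.full hH).torus g hg gd h e) hh

/-- The adjugate of an invertible matrix. -/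
def adj (g : GG) : GG :=
  gl (g 1 1) (-g 0 1) (-g 1 0) (g 0 0) (by have := det_ne g; contrapose! this; linear_combination this)

/-- An element conjugating `g` to a noncommuting member of its own torus conjugates it to its
adjugate, the only other member with the same eigenvalues. -/
theorem mul_eq_adj_mul {u g : GG} (gd : disc g ≠ 0) (hne : u * g ≠ g * u)
    (e : g * (u * g * u⁻¹) = u * g * u⁻¹ * g) : u * g = adj g * u := by
  obtain ⟨α, β, h00, h01, h10, h11⟩ := exists_lin (not_cen_of_disc gd) e
  have hd := disc_conj u g
  have hdet : (u * g * u⁻¹) 0 0 * (u * g * u⁻¹) 1 1 - (u * g * u⁻¹) 0 1 * (u * g * u⁻¹) 1 0 =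
      g 0 0 * g 1 1 - g 0 1 * g 1 0 := by
    have h1 : ((u * g * u⁻¹ : GG) : Matrix (Fin 2) (Fin 2) F).det =
        (g : Matrix (Fin 2) (Fin 2) F).det := by
      have h2 : Matrix.GeneralLinearGroup.det (u * g * u⁻¹) = Matrix.GeneralLinearGroup.det g := by
        rw [map_mul, map_mul, map_inv, mul_inv_cancel_comm]
      exact congrArg Units.val h2
    rwa [Matrix.det_fin_two, Matrix.det_fin_two] at h1
  have htr : (u * g * u⁻¹) 0 0 + (u * g * u⁻¹) 1 1 = g 0 0 + g 1 1 := by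
    have h1 : ((u * g * u⁻¹ : GG) : Matrix (Fin 2) (Fin 2) F).trace =
        (g : Matrix (Fin 2) (Fin 2) F).trace := by
      rw [Units.val_mul, Units.val_mul, Matrix.trace_mul_cycle, Units.inv_mul, one_mul]
    rwa [Matrix.trace_fin_two, Matrix.trace_fin_two] at h1
  have hne' : u * g * u⁻¹ ≠ g := fun h => hne (mul_inv_eq_iff_eq_mul.1 h)
  suffices h : u * g * u⁻¹ = adj g from mul_inv_eq_iff_eq_mul.1 h
  generalize u * g * u⁻¹ = k at *
  rw [disc, disc, h00, h01, h10, h11] at hd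
  rw [h00, h01, h10, h11] at hdet
  rw [h00, h11] at htr
  rw [disc] at gd
  have hβ : (β - 1) * (β + 1) = 0 := by
    apply (mul_eq_zero.1 (?_ : _ * ((g 0 0 - g 1 1) ^ 2 + 4 * g 0 1 * g 1 0) = 0)).resolve_right gd
    linear_combination hd
  have hα : β = 1 → α ≠ 0 := by
    rintro rfl rfl
    apply hne'
    apply gl_ext
    · linear_combination h00
    · linear_combination h01
    · linear_combination h10
    · linear_combination h11
  have hgoal : β = -1 → α = g 0 0 + g 1 1 → k = adj g := by
    rintro rfl rfl
    apply gl_ext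
    · simp only [adj, gl_00]; linear_combination h00
    · simp only [adj, gl_01]; linear_combination h01
    · simp only [adj, gl_10]; linear_combination h10
    · simp only [adj, gl_11]; linear_combination h11
  rcases mul_eq_zero.1 hβ with h1 | h1
  · have hb : β = 1 := by linear_combination h1
    subst hb
    have ha := hα rfl
    have two : (2 : F) = 0 := by
      apply (mul_eq_zero.1 (?_ : (2 : F) * α = 0)).resolve_right ha
      linear_combination htr
    have h2 : α + (g 0 0 + g 1 1) = 0 := by
      apply (mul_eq_zero.1 (?_ : α * _ = 0)).resolve_left ha
      linear_combination hdet
    apply hgoal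
    · linear_combination two
    · linear_combination h2 - (g 0 0 + g 1 1) * two
  · have hb : β = -1 := by linear_combination h1
    subst hb
    have h2 : α * (α - (g 0 0 + g 1 1)) = 0 := by linear_combination hdet
    rcases mul_eq_zero.1 h2 with h3 | h3
    · subst h3
      have h4 : (2 : F) * (g 0 0 + g 1 1) = 0 := by linear_combination -htr
      rcases mul_eq_zero.1 h4 with h5 | h5
      · exact absurd rfl (hα (by linear_combination -h5))
      · exact hgoal rfl h5.symm
    · exact hgoal rfl (sub_eq_zero.1 h3)

/-- Two elements inverting `g` modulo scalars differ by an element of its torus. -/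
theorem comm_of_mul_adj {u s g : GG} (hu : u * g = adj g * u) (hs : s * g = adj g * s) :
    g * (u⁻¹ * s) = u⁻¹ * s * g := by
  have h1 : g * u⁻¹ = u⁻¹ * adj g := by
    rw [eq_inv_mul_iff_mul_eq, ← mul_assoc, hu, mul_inv_cancel_right]
  rw [← mul_assoc, h1, mul_assoc, ← hs, mul_assoc]

/-- In each member of `Q` the elements with distinct eigenvalues commute, that is, they lie in a
single torus. This holds when no member of `Q` is the stabiliser of a point. -/
def SingleTorus (Q : Finset (Subgroup GG)) : Prop :=
  ∀ H ∈ Q, ∀ g ∈ H, ∀ h ∈ H, disc g ≠ 0 → disc h ≠ 0 → g * h = h * g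

/-- A non-scalar element with a double eigenvalue normalises the only torus of its member without
centralising it, hence inverts it modulo scalars. -/
theorem mul_eq_adj_mul_of_par {Q : Finset (Subgroup GG)} (hc : SingleTorus Q)
    {H : Subgroup GG} (hH : H ∈ Q) {g u : GG} (hg : g ∈ H)
    (gd : disc g ≠ 0) (hu : u ∈ H) (uz : u ∉ ZZ) (ud : disc u = 0) : u * g = adj g * u := by
  apply mul_eq_adj_mul gd
  · intro e
    exact gd ((disc_of_comm uz (not_cen_of_disc gd) e).1 ud)
  · exact hc H hH g hg _ (H.mul_mem (H.mul_mem hu hg) (H.inv_mem hu)) gd (by rwa [disc_conj])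

variable [DecidableEq F]

local notation "Ω" => OnePoint F

theorem exists_smul_infty (x : Ω) : ∃ k : GG, k • (∞ : Ω) = x := by
  by_cases hx : x = ∞
  · exact ⟨1, by rw [one_smul, hx]⟩
  · obtain ⟨k, hk, -⟩ := exists_smul_pair hx
    exact ⟨k, hk⟩

/-- A subgroup all of whose elements have a double eigenvalue is commutative: two elements fixing
different points would have a product, or a product with a square, of nonzero discriminant. -/
theorem comm_of_all_par [Finite F] {K : Subgroup GG} (hall : ∀ k ∈ K, disc k = 0) {u v : GG}
    (hu : u ∈ K) (hv : v ∈ K) : u * v = v * u := by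
  by_cases huz : u ∈ ZZ
  · exact (Subgroup.mem_center_iff.1 huz v).symm
  obtain ⟨x, hx⟩ := exists_fix_of_disc (hall u hu)
  obtain ⟨m, rfl⟩ := exists_smul_infty x
  refine comm_of_par (hall u hu) (hall v hv) hx ?_
  have hu' : m⁻¹ * u * m⁻¹⁻¹ ∉ ZZ := by rwa [conj_mem_cen]
  have d1 := hall u hu
  have d2 := hall v hv
  have d3 := hall _ (K.mul_mem hu hv)
  have d4 := hall _ (K.mul_mem (K.mul_mem hu hu) hv)
  rw [← disc_conj m⁻¹] at d1 d2 d3 d4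
  have e3 : m⁻¹ * (u * v) * m⁻¹⁻¹ = (m⁻¹ * u * m⁻¹⁻¹) * (m⁻¹ * v * m⁻¹⁻¹) := by group
  have e4 : m⁻¹ * (u * u * v) * m⁻¹⁻¹ =
      (m⁻¹ * u * m⁻¹⁻¹) * (m⁻¹ * u * m⁻¹⁻¹) * (m⁻¹ * v * m⁻¹⁻¹) := by group
  rw [e3] at d3
  rw [e4] at d4
  have hfu : (m⁻¹ * u * m⁻¹⁻¹) • (∞ : Ω) = ∞ := by
    rw [mul_smul, inv_inv, mul_smul, hx, inv_smul_smul]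
  suffices h : (m⁻¹ * v * m⁻¹⁻¹) • (∞ : Ω) = ∞ by
    rwa [mul_smul, inv_inv, mul_smul, inv_smul_eq_iff] at h
  generalize m⁻¹ * u * m⁻¹⁻¹ = u' at *
  generalize m⁻¹ * v * m⁻¹⁻¹ = v' at *
  rw [fix_infty] at hfu ⊢
  have hr : u' 0 0 = u' 1 1 := by
    rw [disc, hfu] at d1
    simpa [sub_eq_zero] using d1
  have hb : u' 0 1 ≠ 0 := fun h => hu' (mem_cen.2 ⟨h, hfu, hr⟩)
  have hr0 : u' 1 1 ≠ 0 := by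
    have := det_ne u'
    intro h
    simp [h, hfu] at this
  by_contra hc
  simp only [disc, mul_00, mul_01, mul_10, mul_11, hfu, hr] at d2 d3 d4
  have f3 : 2 * u' 1 1 * (v' 0 0 + v' 1 1) + u' 0 1 * v' 1 0 = 0 := by
    apply (mul_eq_zero.1 (?_ : (u' 0 1 * v' 1 0) * _ = 0)).resolve_left (mul_ne_zero hb hc)
    linear_combination d3 - u' 1 1 ^ 2 * d2
  have f4 : 4 * u' 1 1 ^ 2 * (u' 1 1 * (v' 0 0 + v' 1 1) + u' 0 1 * v' 1 0) = 0 := by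
    apply (mul_eq_zero.1 (?_ : (u' 0 1 * v' 1 0) * _ = 0)).resolve_left (mul_ne_zero hb hc)
    linear_combination d4 - u' 1 1 ^ 4 * d2
  have f5 : 2 * (u' 1 1 ^ 2 * (u' 0 1 * v' 1 0)) = 0 := by
    linear_combination f4 - 2 * u' 1 1 ^ 2 * f3
  have two : (2 : F) = 0 :=
    (mul_eq_zero.1 f5).resolve_right (mul_ne_zero (pow_ne_zero _ hr0) (mul_ne_zero hb hc))
  apply mul_ne_zero hb hc
  linear_combination f3 - u' 1 1 * (v' 0 0 + v' 1 1) * two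

/-- If the stabiliser of `z` is a member of the partition, then all the other members are
commutative. -/
theorem Comps.comm_of_borel [Finite F] {t : F} (ht0 : t ≠ 0) (ht1 : t ≠ 1)
    {Q : Finset (Subgroup GG)} (hQ : Comps Q) {H K : Subgroup GG} (hH : H ∈ Q) (hK : K ∈ Q) {z : Ω}
    (hz : ∀ k, k ∈ H ↔ k • z = z) (hne : K ≠ H) {u v : GG} (hu : u ∈ K) (hv : v ∈ K) :
    u * v = v * u := by
  have hf := hQ.full hK
  have hKz : ∀ k ∈ K, k • z = z → k ∈ ZZ := by
    intro k hk kz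
    by_contra hkz
    exact hne (hQ.uniq K hK H hH k hkz hk ((hz k).2 kz))
  have hd : ∀ g ∈ K, ∀ h ∈ K, disc g ≠ 0 → disc h ≠ 0 → g * h = h * g := by
    intro g hg h hh gd hd
    by_contra hcon
    obtain ⟨w, hw⟩ := hf.eq_borel ht0 ht1 (hQ.proper K hK) hg hh gd hd hcon
    by_cases hwz : w = z
    · subst hwz
      apply hne
      ext k
      rw [hw, hz]
    · obtain ⟨d, dd, dw, dz⟩ := exists_hyp ht0 ht1 hwz
      exact not_cen_of_disc dd (hKz d ((hw d).2 dw) dz)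
  by_cases hall : ∀ k ∈ K, disc k = 0
  · exact comm_of_all_par hall hu hv
  push Not at hall
  obtain ⟨g, hg, gd⟩ := hall
  have gz := not_cen_of_disc gd
  suffices h : ∀ k ∈ K, g * k = k * g from comm_trans gz (h u hu) (h v hv)
  intro k hk
  by_cases gf : ∀ x : Ω, g • x ≠ x
  · obtain ⟨s, hs, hsz⟩ := exists_comm_smul gf z (k • z)
    have hsK : s ∈ K := hf.torus g hg gd s hs
    have hc : s⁻¹ * k ∈ ZZ := by
      apply hKz _ (K.mul_mem (K.inv_mem hsK) hk)
      rw [mul_smul, ← hsz, inv_smul_smul]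
    have h1 : Commute g (s * (s⁻¹ * k)) :=
      (show Commute g s from hs).mul_right (Subgroup.mem_center_iff.1 hc g)
    rwa [mul_inv_cancel_left] at h1
  push Not at gf
  obtain ⟨x, gx⟩ := gf
  obtain ⟨y, hyx, gy⟩ := exists_other_fix gd gx
  have hzx : z ≠ x := by rintro rfl; exact gz (hKz g hg gx)
  have hzy : z ≠ y := by rintro rfl; exact gz (hKz g hg gy)
  have hT : PairLe K x y := hf.pairLe hg gd hyx.symm gx gy
  by_cases kd : disc k = 0
  swap
  · exact hd g hg k hk gd kd
  have hconj : ∀ w : Ω, g • w = w → k • w = x ∨ k • w = y := by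
    intro w gw
    have e := hd (k * g * k⁻¹) (K.mul_mem (K.mul_mem hk hg) (K.inv_mem hk)) g hg
      (by rwa [disc_conj]) gd
    have h1 : g • (k • w) = k • w :=
      fix_of_comm (by rwa [conj_mem_cen]) e (by rw [mul_smul, inv_smul_smul, mul_smul, gw])
    by_contra! hcon
    exact gz (cen_of_three hyx.symm hcon.1 hcon.2 gx gy h1)
  rcases hconj x gx with kx | kx
  · rcases hconj y gy with ky | ky
    · exact absurd (smul_left_cancel k (ky.trans kx.symm)) hyx
    · exact comm_of_fix hyx.symm gx gy kx ky
  · rcases hconj y gy with ky | ky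
    swap
    · exact absurd (smul_left_cancel k (ky.trans kx.symm)) hyx
    obtain ⟨w, kw⟩ := exists_fix_of_disc kd
    have hwx : w ≠ x := by rintro rfl; exact hyx (kx.symm.trans kw)
    have hwy : w ≠ y := by rintro rfl; exact hyx (kw.symm.trans ky)
    obtain ⟨c, cx, cy, cw⟩ := exists_fix_smul hyx.symm hwx hwy hzx hzy
    have hc := hT c cx cy
    have h1 : c * k * c⁻¹ ∈ ZZ := by
      apply hKz _ (K.mul_mem (K.mul_mem hc hk) (K.inv_mem hc))
      rw [mul_smul, ← cw, inv_smul_smul, mul_smul, kw]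
    rw [conj_mem_cen] at h1
    exact Subgroup.mem_center_iff.1 h1 g

/-- If the stabiliser of a point `z` is a member, then `q²` pairwise noncommuting elements moving `z`
lie in `q²` distinct further members. -/
theorem Comps.card_of_borel [Fintype F] {t : F} (ht0 : t ≠ 0) (ht1 : t ≠ 1)
    {Q : Finset (Subgroup GG)} (hQ : Comps Q) {H : Subgroup GG} (hH : H ∈ Q) {z : Ω}
    (hz : ∀ k, k ∈ H ↔ k • z = z) : Fintype.card F ^ 2 + 1 ≤ Q.card := by
  classical
  obtain ⟨k, rfl⟩ := exists_smul_infty z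
  choose m m1 m2 m3 using exists_companion ht0 ht1
  choose C hCQ hC using fun p => hQ.cover (k * m p * k⁻¹)
  have hCH : ∀ p, C p ≠ H := by
    intro p hp
    have h1 := hC p
    rw [hp, hz, mul_smul, inv_smul_smul, mul_smul, smul_left_cancel_iff, fix_infty, m1] at h1
    exact one_ne_zero h1
  have hinj : Function.Injective C := by
    intro p p' e
    have h1 := hQ.comm_of_borel ht0 ht1 hH (hCQ p) hz (hCH p) (hC p) (e ▸ hC p')
    have h2 : m p * m p' = m p' * m p := by
      have h3 : k * (m p * m p') * k⁻¹ = k * (m p' * m p) * k⁻¹ := by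
        calc _ = k * m p * k⁻¹ * (k * m p' * k⁻¹) := by group
          _ = _ := h1
          _ = _ := by group
      exact mul_left_cancel (mul_right_cancel h3)
    have h4 := companion_inj (m1 p) (m1 p') h2
    rw [m2, m2, m3, m3] at h4
    exact Prod.ext h4.1 h4.2
  have hsub : Finset.univ.image C ⊆ Q.erase H := by
    intro K hK
    obtain ⟨p, -, rfl⟩ := Finset.mem_image.1 hK
    exact Finset.mem_erase.2 ⟨hCH p, hCQ p⟩
  have hle := Finset.card_le_card hsub
  rw [Finset.card_image_of_injective _ hinj, Finset.card_univ, Fintype.card_prod] at hle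
  have := Finset.card_erase_add_one hH
  rw [sq]
  omega

/-- There are `q²` pairwise noncommuting elements with distinct eigenvalues: the companion matrix
with parameters `p` if its eigenvalues are distinct, and otherwise an element fixing `∞` and the
point fixed by that matrix. -/
theorem exists_family [Finite F] {t : F} (ht0 : t ≠ 0) (ht1 : t ≠ 1) :
    ∃ m : F × F → GG, (∀ p, disc (m p) ≠ 0) ∧
      ∀ p p', m p * m p' = m p' * m p → p = p' := by
  have hex : ∀ p : F × F, ∃ m : GG, disc m ≠ 0 ∧
      ((m 1 0 = 1 ∧ m 0 0 - m 1 1 = p.1 ∧ m 0 1 = p.2) ∨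
      ∃ r : F, p = (2 * r, -r ^ 2) ∧ m • (∞ : Ω) = ∞ ∧ m • (r : Ω) = r) := by
    intro p
    obtain ⟨m, m1, m2, m3⟩ := exists_companion ht0 ht1 p
    by_cases md : disc m = 0
    swap
    · exact ⟨m, md, Or.inl ⟨m1, m2, m3⟩⟩
    obtain ⟨x, hx⟩ := exists_fix_of_disc md
    induction x using OnePoint.rec with
    | infty =>
      rw [fix_infty, m1] at hx
      exact absurd hx one_ne_zero
    | coe r =>
      obtain ⟨d, dd, d1, d2⟩ := exists_hyp ht0 ht1 (OnePoint.infty_ne_coe r)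
      refine ⟨d, dd, Or.inr ⟨r, ?_, d1, d2⟩⟩
      rw [fix_coe, m1, m3] at hx
      rw [disc, m1, m2, m3] at md
      have hx' : r ^ 2 - p.1 * r - p.2 = 0 := by rw [← m2]; linear_combination hx
      have h1 : p.1 - 2 * r = 0 := by
        apply pow_eq_zero_iff (two_ne_zero) |>.1
        linear_combination md + 4 * hx'
      apply Prod.ext
      · exact sub_eq_zero.1 h1
      · change p.2 = -r ^ 2
        linear_combination -hx' - r * h1
  choose m md hm using hex
  refine ⟨m, md, ?_⟩
  have hmix : ∀ {g h : GG}, disc h ≠ 0 → g 1 0 = 1 → h • (∞ : Ω) = ∞ → g * h = h * g → False := by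
    intro g h hd hg hh e
    have := fix_of_comm (not_cen_of_disc hd) e.symm hh
    rw [fix_infty, hg] at this
    exact one_ne_zero this
  intro p p' e
  rcases hm p with ⟨a1, a2, a3⟩ | ⟨r, hr, a1, a2⟩ <;>
    rcases hm p' with ⟨b1, b2, b3⟩ | ⟨r', hr', b1, b2⟩
  · have h4 := companion_inj a1 b1 e
    rw [a2, b2, a3, b3] at h4
    exact Prod.ext h4.1 h4.2
  · exact (hmix (md p') a1 b1 e).elim
  · exact (hmix (md p) b1 a1 e.symm).elim
  · have h1 := fix_of_comm (not_cen_of_disc (md p)) e a2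
    by_cases hrr : r = r'
    · rw [hr, hr', hrr]
    · exact (not_cen_of_disc (md p') (cen_of_three (OnePoint.infty_ne_coe r')
        (OnePoint.coe_ne_infty r) (by rwa [Ne, OnePoint.coe_eq_coe]) b1 b2 h1)).elim

/-- The additive commutator `s = g * h - h * g` satisfies `s * g = adj g * s` and
`s * h = adj h * s`. If it is not invertible, its kernel is a point fixed by both `g` and `h`. -/
theorem exists_swap_or_fix {g h : GG} (hne : g * h ≠ h * g) :
    (∃ s : GG, s * g = adj g * s ∧ s * h = adj h * s) ∨
      ∃ x : Ω, g • x = x ∧ h • x = x := by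
  set X := g 0 1 * h 1 0 - h 0 1 * g 1 0 with hX
  set Y := (g 0 0 - g 1 1) * h 0 1 - g 0 1 * (h 0 0 - h 1 1) with hY
  set Z := g 1 0 * (h 0 0 - h 1 1) - (g 0 0 - g 1 1) * h 1 0 with hZ
  by_cases hs : X * (-X) - Y * Z = 0
  · right
    have og : g 1 0 * Y + (g 0 0 - g 1 1) * X + g 0 1 * Z = 0 := by rw [hX, hY, hZ]; ring
    have oh : h 1 0 * Y + (h 0 0 - h 1 1) * X + h 0 1 * Z = 0 := by rw [hX, hY, hZ]; ring
    by_cases hZ0 : Z = 0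
    · have hX0 : X = 0 := by
        rw [hZ0] at hs
        simpa using hs
      have hY0 : Y ≠ 0 := by
        intro hY0
        apply hne
        rw [comm_iff]
        refine ⟨?_, ?_, ?_⟩
        · linear_combination hX0
        · linear_combination -hY0
        · linear_combination hZ0
      refine ⟨∞, fix_infty.2 ?_, fix_infty.2 ?_⟩
      · rw [hX0, hZ0] at og
        simpa [hY0] using og
      · rw [hX0, hZ0] at oh
        simpa [hY0] using oh
    · refine ⟨((X / Z : F) : Ω), fix_coe.2 ?_, fix_coe.2 ?_⟩
      · field_simp
        linear_combination -g 1 0 * hs - Z * og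
      · field_simp
        linear_combination -h 1 0 * hs - Z * oh
  · left
    refine ⟨gl X Y Z (-X) hs, ?_, ?_⟩ <;> apply gl_ext <;>
      simp only [mul_00, mul_01, mul_10, mul_11, adj, gl_00, gl_01, gl_10, gl_11, hX, hY, hZ] <;>
      ring

/-- The tori of two distinct members containing unipotents have a common fixed point. Otherwise the
additive commutator of `g` and `h` inverts both tori, so it differs from the unipotents by elements
of these tori, and lies in both members. -/
theorem exists_common_fix [Finite F] {Q : Finset (Subgroup GG)} (hQ : Comps Q) (hc : SingleTorus Q)
    {H K : Subgroup GG} (hH : H ∈ Q) (hK : K ∈ Q) (hHK : H ≠ K)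
    {g u h v : GG} (hg : g ∈ H) (gd : disc g ≠ 0) (hu : u ∈ H) (uz : u ∉ ZZ) (ud : disc u = 0)
    (hh : h ∈ K) (hd : disc h ≠ 0) (hv : v ∈ K) (vz : v ∉ ZZ) (vd : disc v = 0) :
    ∃ x : Ω, g • x = x ∧ h • x = x := by
  have hug := mul_eq_adj_mul_of_par hc hH hg gd hu uz ud
  have hvh := mul_eq_adj_mul_of_par hc hK hh hd hv vz vd
  rcases exists_swap_or_fix (g := g) (h := h)
    (fun e => hHK (hQ.eq_of_comm hH hK hg hh gd hd e)) with ⟨s, sg, sh⟩ | hx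
  swap
  · exact hx
  exfalso
  have s1 : s ∈ H := by
    have := H.mul_mem hu ((hQ.full hH).torus g hg gd _ (comm_of_mul_adj hug sg))
    rwa [mul_inv_cancel_left] at this
  have s2 : s ∈ K := by
    have := K.mul_mem hv ((hQ.full hK).torus h hh hd _ (comm_of_mul_adj hvh sh))
    rwa [mul_inv_cancel_left] at this
  have sz : s ∈ ZZ := by
    by_contra hz
    exact hHK (hQ.uniq H hH K hK s hz s1 s2)
  have h1 : adj g = g := by
    rw [← Subgroup.mem_center_iff.1 sz g] at sg
    exact (mul_right_cancel sg).symm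
  rw [h1] at hug
  exact gd ((disc_of_comm uz (not_cen_of_disc gd) hug).1 ud)

/-- The fixed point of a unipotent is not fixed by the torus of the same member, as the unipotent
permutes the fixed points of this torus. -/
theorem not_fix_of_par {Q : Finset (Subgroup GG)} (hc : SingleTorus Q)
    {H : Subgroup GG} (hH : H ∈ Q) {g u : GG} (hg : g ∈ H)
    (gd : disc g ≠ 0) (hu : u ∈ H) (uz : u ∉ ZZ) (ud : disc u = 0) {y : Ω} (uy : u • y = y) :
    g • y ≠ y := by
  intro gy
  obtain ⟨w, hwy, gw⟩ := exists_other_fix gd gy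
  have e := hc H hH _ (H.mul_mem (H.mul_mem hu hg) (H.inv_mem hu)) g hg (by rwa [disc_conj]) gd
  have h1 : g • (u • w) = u • w :=
    fix_of_comm (by rw [conj_mem_cen]; exact not_cen_of_disc gd) e
      (by rw [mul_smul, inv_smul_smul, mul_smul, gw])
  have h2 : u • w ≠ y := by
    intro h
    exact hwy (smul_left_cancel u (h.trans uy.symm))
  have h3 : u • w = w := by
    by_contra hcon
    exact not_cen_of_disc gd (cen_of_three hwy.symm h2 hcon gy gw h1)
  exact disc_ne_of_fix uz hwy h3 uy ud

/-- Unipotents with the same fixed point and independent modulo scalars lie in distinct members: if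
both inverted the same torus, their quotient would centralise it. -/
theorem ne_of_par {Q : Finset (Subgroup GG)} (hc : SingleTorus Q)
    {H K : Subgroup GG} (hH : H ∈ Q) {g u v : GG} (hg : g ∈ H)
    (gd : disc g ≠ 0) (hu : u ∈ H) (uz : u ∉ ZZ) (ud : disc u = 0) (hv : v ∈ K) (vz : v ∉ ZZ)
    (vd : disc v = 0) {y : Ω} (uy : u • y = y) (vy : v • y = y) (huv : u⁻¹ * v ∉ ZZ) : H ≠ K := by
  rintro rfl
  have h1 := comm_of_mul_adj (mul_eq_adj_mul_of_par hc hH hg gd hu uz ud)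
    (mul_eq_adj_mul_of_par hc hH hg gd hv vz vd)
  have h2 : Commute u (u⁻¹ * v) :=
    (Commute.refl u).inv_right.mul_right (comm_of_par ud vd uy vy)
  have h3 := (disc_of_comm uz huv h2).1 ud
  exact gd ((disc_of_comm (not_cen_of_disc gd) huv h1).2 h3)

/-- Not every member can contain an element with distinct eigenvalues. Otherwise two members with
unipotents fixing `∞` have tori with a common fixed point `y`, with other fixed points `w₁ ≠ w₂`;
and the torus of every member with a unipotent fixing `y` must fix both `w₁` and `w₂`, although
there are two such members. -/
theorem false_of_all_semisimple [Finite F] {Q : Finset (Subgroup GG)} (hQ : Comps Q)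
    (hc : SingleTorus Q) {t : F} (ht0 : t ≠ 0) (ht1 : t ≠ 1)
    (hs : ∀ H ∈ Q, ∃ g ∈ H, disc g ≠ 0) : False := by
  -- Two members with unipotents fixing `z`, and their elements with distinct eigenvalues.
  have hpt : ∀ z : Ω, ∃ H ∈ Q, ∃ K ∈ Q, H ≠ K ∧ ∃ u g v h : GG,
      (u ∈ H ∧ u ∉ ZZ ∧ disc u = 0 ∧ u • z = z) ∧ (g ∈ H ∧ disc g ≠ 0) ∧
      (v ∈ K ∧ v ∉ ZZ ∧ disc v = 0 ∧ v • z = z) ∧ (h ∈ K ∧ disc h ≠ 0) := by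
    intro z
    obtain ⟨u, v, uz, vz, ud, vd, ux, vx, huv⟩ := exists_two_par ht0 ht1 z
    obtain ⟨H, hH, hu⟩ := hQ.cover u
    obtain ⟨K, hK, hv⟩ := hQ.cover v
    obtain ⟨g, hg, gd⟩ := hs H hH
    obtain ⟨h, hh, hd⟩ := hs K hK
    exact ⟨H, hH, K, hK, ne_of_par hc hH hg gd hu uz ud hv vz vd ux vx huv, u, g, v, h,
      ⟨hu, uz, ud, ux⟩, ⟨hg, gd⟩, ⟨hv, vz, vd, vx⟩, ⟨hh, hd⟩⟩
  obtain ⟨H₁, hH₁, H₂, hH₂, h12, u₁, g₁, u₂, g₂, ⟨a1, a2, a3, a4⟩, ⟨a5, a6⟩, ⟨b1, b2, b3, b4⟩,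
    ⟨b5, b6⟩⟩ := hpt ∞
  obtain ⟨y, gy₁, gy₂⟩ := exists_common_fix hQ hc hH₁ hH₂ h12 a5 a6 a1 a2 a3 b5 b6 b1 b2 b3
  obtain ⟨w₁, hw₁, gw₁⟩ := exists_other_fix a6 gy₁
  obtain ⟨w₂, hw₂, gw₂⟩ := exists_other_fix b6 gy₂
  have hw : w₁ ≠ w₂ := by
    rintro rfl
    exact h12 (hQ.eq_of_comm hH₁ hH₂ a5 b5 a6 b6 (comm_of_fix hw₁ gw₁ gy₁ gw₂ gy₂))
  have key : ∀ H ∈ Q, ∀ u ∈ H, u ∉ ZZ → disc u = 0 → u • y = y → ∀ g ∈ H, disc g ≠ 0 →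
      g • w₁ = w₁ ∧ g • w₂ = w₂ := by
    intro H hH u hu uz ud uy g hg gd
    have gy := not_fix_of_par hc hH hg gd hu uz ud uy
    have aux : ∀ K ∈ Q, ∀ v ∈ K, v ∉ ZZ → disc v = 0 → ∀ k ∈ K, disc k ≠ 0 → k • y = y →
        ∀ w : Ω, w ≠ y → k • w = w → g • w = w := by
      intro K hK v hv vz vd k hk kd ky w hwy kw
      have hHK : H ≠ K := by
        rintro rfl
        exact not_fix_of_par hc hH hk kd hu uz ud uy ky
      obtain ⟨p, gp, kp⟩ := exists_common_fix hQ hc hH hK hHK hg gd hu uz ud hk kd hv vz vd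
      have hpy : p ≠ y := by rintro rfl; exact gy gp
      have hpw : p = w := by
        by_contra hcon
        exact not_cen_of_disc kd (cen_of_three hwy hcon hpy kw ky kp)
      rwa [hpw] at gp
    exact ⟨aux H₁ hH₁ u₁ a1 a2 a3 g₁ a5 a6 gy₁ w₁ hw₁ gw₁,
      aux H₂ hH₂ u₂ b1 b2 b3 g₂ b5 b6 gy₂ w₂ hw₂ gw₂⟩
  obtain ⟨H₃, hH₃, H₄, hH₄, h34, u₃, g₃, u₄, g₄, ⟨c1, c2, c3, c4⟩, ⟨c5, c6⟩, ⟨d1, d2, d3, d4⟩,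
    ⟨d5, d6⟩⟩ := hpt y
  obtain ⟨e1, e2⟩ := key H₃ hH₃ u₃ c1 c2 c3 c4 g₃ c5 c6
  obtain ⟨e3, e4⟩ := key H₄ hH₄ u₄ d1 d2 d3 d4 g₄ d5 d6
  exact h34 (hQ.eq_of_comm hH₃ hH₄ c5 d5 c6 d6 (comm_of_fix hw e1 e2 e3 e4))

/-- The lower bound: either a point stabiliser is a member, or the `q²` members given by
`exists_family` do not exhaust the partition. -/
theorem Comps.card_ge [Fintype F] {t : F} (ht0 : t ≠ 0) (ht1 : t ≠ 1)
    {Q : Finset (Subgroup GG)} (hQ : Comps Q) : Fintype.card F ^ 2 + 1 ≤ Q.card := by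
  classical
  by_cases hB : ∃ H ∈ Q, ∃ z : Ω, ∀ k, k ∈ H ↔ k • z = z
  · obtain ⟨H, hH, z, hz⟩ := hB
    exact hQ.card_of_borel ht0 ht1 hH hz
  have hc : SingleTorus Q := by
    intro H hH g hg h hh gd hd
    by_contra hne
    exact hB ⟨H, hH, (hQ.full hH).eq_borel ht0 ht1 (hQ.proper H hH) hg hh gd hd hne⟩
  obtain ⟨m, md, hm⟩ := exists_family (F := F) ht0 ht1
  choose C hCQ hC using fun p => hQ.cover (m p)
  have hinj : Function.Injective C := fun p p' e =>
    hm p p' (hc (C p) (hCQ p) _ (hC p) _ (e ▸ hC p') (md p) (md p'))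
  have hsub : Finset.univ.image C ⊆ Q := by
    intro K hK
    obtain ⟨p, -, rfl⟩ := Finset.mem_image.1 hK
    exact hCQ p
  have hcard : (Finset.univ.image C).card = Fintype.card F ^ 2 := by
    rw [Finset.card_image_of_injective _ hinj, Finset.card_univ, Fintype.card_prod, sq]
  by_contra hlt
  have heq := Finset.eq_of_subset_of_card_le hsub (by omega)
  refine false_of_all_semisimple hQ hc ht0 ht1 fun H hH => ?_
  rw [← heq] at hH
  obtain ⟨p, -, rfl⟩ := Finset.mem_image.1 hH
  exact ⟨m p, hC p, md p⟩

end LowerBound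

/-! ### Partitions of `PGL₂` and the upper bound -/

section UpperBound

variable {F : Type*} [Field F]

local notation "GG" => GL (Fin 2) F
local notation "ZZ" => Subgroup.center (GL (Fin 2) F)

/-- Preimages in `GL₂` of the members of a partition. -/
theorem Comps.of_partition {P : Finset (Subgroup (GG ⧸ ZZ))} (hP : IsPartitionOf P) :
    ∃ Q : Finset (Subgroup GG), Comps Q ∧ Q.card ≤ P.card := by
  classical
  obtain ⟨⟨hpr, hcov⟩, hdisj⟩ := hP
  refine ⟨P.image (Subgroup.comap (QuotientGroup.mk' ZZ)), ⟨?_, ?_, ?_, ?_⟩, Finset.card_image_le⟩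
  · intro H hH
    obtain ⟨H, -, rfl⟩ := Finset.mem_image.1 hH
    exact QuotientGroup.le_comap_mk' _ _
  · intro H hH
    obtain ⟨H, hHP, rfl⟩ := Finset.mem_image.1 hH
    intro h
    apply hpr H hHP
    apply Subgroup.comap_injective (QuotientGroup.mk'_surjective ZZ)
    rw [h, Subgroup.comap_top]
  · intro g
    obtain ⟨H, hH, hg⟩ := hcov (QuotientGroup.mk' ZZ g)
    exact ⟨_, Finset.mem_image_of_mem _ hH, hg⟩
  · intro H hH K hK g gz hgH hgK
    obtain ⟨H, hHP, rfl⟩ := Finset.mem_image.1 hH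
    obtain ⟨K, hKP, rfl⟩ := Finset.mem_image.1 hK
    by_contra hne
    have h1 : QuotientGroup.mk' ZZ g ∈ H ⊓ K := ⟨hgH, hgK⟩
    rw [hdisj H hHP K hKP (fun h => hne (by rw [h])), Subgroup.mem_bot] at h1
    exact gz ((QuotientGroup.eq_one_iff g).1 h1)

/-- Images in `PGL₂` of the members of a family with the properties `Comps`. -/
theorem Comps.to_partition {Q : Finset (Subgroup GG)} (hQ : Comps Q) :
    ∃ P : Finset (Subgroup (GG ⧸ ZZ)), IsPartitionOf P ∧ P.card ≤ Q.card := by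
  classical
  have hcm : ∀ H ∈ Q, (H.map (QuotientGroup.mk' ZZ)).comap (QuotientGroup.mk' ZZ) = H :=
    fun H hH => Subgroup.comap_map_eq_self (by rw [QuotientGroup.ker_mk']; exact hQ.cen H hH)
  refine ⟨Q.image (Subgroup.map (QuotientGroup.mk' ZZ)), ⟨⟨?_, ?_⟩, ?_⟩, Finset.card_image_le⟩
  · intro H hH
    obtain ⟨H, hHQ, rfl⟩ := Finset.mem_image.1 hH
    intro h
    apply hQ.proper H hHQ
    rw [← hcm H hHQ, h, Subgroup.comap_top]
  · intro x
    obtain ⟨g, rfl⟩ := QuotientGroup.mk'_surjective ZZ x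
    obtain ⟨H, hH, hg⟩ := hQ.cover g
    exact ⟨_, Finset.mem_image_of_mem _ hH, Subgroup.mem_map_of_mem _ hg⟩
  · intro H hH K hK hne
    obtain ⟨H, hHQ, rfl⟩ := Finset.mem_image.1 hH
    obtain ⟨K, hKQ, rfl⟩ := Finset.mem_image.1 hK
    rw [eq_bot_iff]
    rintro x ⟨hxH, hxK⟩
    obtain ⟨g, rfl⟩ := QuotientGroup.mk'_surjective ZZ x
    have h1 : g ∈ H := by rw [← hcm H hHQ]; exact hxH
    have h2 : g ∈ K := by rw [← hcm K hKQ]; exact hxK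
    by_cases gz : g ∈ ZZ
    · exact (QuotientGroup.eq_one_iff g).2 gz
    · exact absurd (by rw [hQ.uniq H hHQ K hKQ g gz h1 h2]) hne

/-- The partition with `q² + 1` members: the Borel subgroup fixing `∞` and the centralisers of the
`q²` companion matrices. A matrix with nonzero lower left entry is a combination of the identity
and exactly one companion matrix. -/
theorem exists_comps [Fintype F] {t : F} (ht0 : t ≠ 0) (ht1 : t ≠ 1) :
    ∃ Q : Finset (Subgroup GG), Comps Q ∧ Q.card ≤ Fintype.card F ^ 2 + 1 := by
  classical
  choose m m1 m2 m3 using exists_companion ht0 ht1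
  have mz : ∀ p, m p ∉ ZZ := by
    intro p h
    rw [mem_cen, m1] at h
    exact one_ne_zero h.2.1
  let S : Option (F × F) → Subgroup GG := fun o =>
    o.elim (MulAction.stabilizer GG (∞ : OnePoint F)) fun p => Subgroup.centralizer {m p}
  have hS0 : ∀ g, g ∈ S none ↔ g 1 0 = 0 := fun g => MulAction.mem_stabilizer_iff.trans fix_infty
  have hS1 : ∀ p g, g ∈ S (some p) ↔ m p * g = g * m p :=
    fun p g => Subgroup.mem_centralizer_singleton_iff.trans eq_comm
  have hmix : ∀ p g, g ∈ S none → g ∈ S (some p) → g ∈ ZZ := by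
    intro p g h0 h1
    rw [hS0] at h0
    rw [hS1] at h1
    obtain ⟨α, β, e1, e2, e3, e4⟩ := exists_lin (mz p) h1
    have hβ : β = 0 := by rw [← h0, e3, m1, mul_one]
    subst hβ
    rw [mem_cen]
    refine ⟨by rw [e2]; ring, h0, by rw [e1, e4]; ring⟩
  refine ⟨Finset.univ.image S, ⟨?_, ?_, ?_, ?_⟩, ?_⟩
  · intro H hH
    obtain ⟨o, -, rfl⟩ := Finset.mem_image.1 hH
    intro z hz
    cases o with
    | none => exact (hS0 z).2 (mem_cen.1 hz).2.1
    | some p => exact (hS1 p z).2 (Subgroup.mem_center_iff.1 hz _)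
  · intro H hH
    obtain ⟨o, -, rfl⟩ := Finset.mem_image.1 hH
    intro h
    cases o with
    | none =>
      have h1 := (hS0 (m 0)).1 (h ▸ Subgroup.mem_top _)
      rw [m1] at h1
      exact one_ne_zero h1
    | some p =>
      have h1 : ∀ p', m p * m p' = m p' * m p := fun p' =>
        (hS1 p _).1 (h ▸ Subgroup.mem_top _)
      have h2 : ∀ p', p = p' := fun p' => by
        have h4 := companion_inj (m1 p) (m1 p') (h1 p')
        rw [m2, m2, m3, m3] at h4
        exact Prod.ext h4.1 h4.2
      have h3 := (h2 (0, 0)).symm.trans (h2 (1, 0))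
      exact zero_ne_one (congrArg Prod.fst h3)
  · intro g
    by_cases hg : g 1 0 = 0
    · exact ⟨S none, Finset.mem_image_of_mem _ (Finset.mem_univ _), (hS0 g).2 hg⟩
    · refine ⟨S (some ((g 0 0 - g 1 1) / g 1 0, g 0 1 / g 1 0)),
        Finset.mem_image_of_mem _ (Finset.mem_univ _), (hS1 _ g).2 ?_⟩
      rw [comm_iff, m1, m2, m3]
      refine ⟨?_, ?_, ?_⟩ <;> field_simp
  · intro H hH K hK g gz hgH hgK
    obtain ⟨o, -, rfl⟩ := Finset.mem_image.1 hH
    obtain ⟨o', -, rfl⟩ := Finset.mem_image.1 hK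
    cases o with
    | none =>
      cases o' with
      | none => rfl
      | some p => exact absurd (hmix p g hgH hgK) gz
    | some p =>
      cases o' with
      | none => exact absurd (hmix p g hgK hgH) gz
      | some p' =>
        have h1 := comm_trans gz ((hS1 p g).1 hgH).symm ((hS1 p' g).1 hgK).symm
        have h4 := companion_inj (m1 p) (m1 p') h1
        rw [m2, m2, m3, m3] at h4
        rw [show p = p' from Prod.ext h4.1 h4.2]
  · refine Finset.card_image_le.trans ?_
    rw [Finset.card_univ, Fintype.card_option, Fintype.card_prod, sq]

end UpperBound

theorem rho_PGL_two (q : ℕ) (hq : IsPrimePow q) (hq3 : 3 ≤ q)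
    (F : Type*) [Field F] [Fintype F] (hF : Fintype.card F = q) :
    rhoG (GL (Fin 2) F ⧸ Subgroup.center (GL (Fin 2) F)) = q ^ 2 + 1 := by
  subst hF
  classical
  -- As `q ≥ 3` there is a scalar different from `0` and `1`.
  obtain ⟨t, ht⟩ : ∃ t : F, t ∉ ({0, 1} : Finset F) := by
    by_contra! hcon
    have h1 := Finset.card_le_card fun x (_ : x ∈ Finset.univ) => hcon x
    have h2 := Finset.card_le_two (a := (0 : F)) (b := 1)
    rw [Finset.card_univ] at h1
    omega
  simp only [Finset.mem_insert, Finset.mem_singleton, not_or] at ht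
  obtain ⟨ht0, ht1⟩ := ht
  obtain ⟨Q, hQ, hQc⟩ := exists_comps ht0 ht1
  obtain ⟨P, hP, hPc⟩ := hQ.to_partition
  rw [rhoG]
  apply le_antisymm
  · exact le_trans (Nat.sInf_le ⟨P, hP, rfl⟩) (hPc.trans hQc)
  · refine le_csInf ⟨_, P, hP, rfl⟩ ?_
    rintro n ⟨P, hP, rfl⟩
    obtain ⟨Q, hQ, hQc⟩ := Comps.of_partition hP
    exact (hQ.card_ge ht0 ht1).trans hQc
end

section
/- Let q ≥ 7 be a prime power. Then ρ(PSL₂(q)) = q² + 1, where PSL₂(q) is the projective special linear group of degree 2 over the field with q elements. -/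
/-!
Throughout, work in `SL₂(F)` with subgroups containing the centre, meeting pairwise in the centre.
Call a noncentral element semisimple if its discriminant `tr² - 4` is nonzero, and unipotent (up to
sign) otherwise. Commuting is transitive on noncentral elements.

*Upper bound.* The group `B` of upper triangular matrices, together with the `q²` centralizers
`{g | g₀₀ - g₁₁ = α g₁₀, g₀₁ = β g₁₀}`, is a partition modulo the centre (`exists_partition`).

*Lower bound.* Let `Q` be a partition. Centralizers of semisimple elements are cyclic, so a component
contains the whole centralizer of each of its semisimple elements (`IsPt.closed`). A class equation
argument (`commute_of_class_equation`) shows that a component with two noncommuting semisimple elements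
contains a unipotent with a nontrivial normalizer action, and then it is a Borel subgroup
(`borel_of_noncomm`). This uses `q ≥ 7` to make the tori large enough.

If `Q` contains a Borel subgroup, which may be taken to be `B`, no other component contains another
Borel subgroup, nor a semisimple together with a unipotent element (`no_mixed`), nor two noncommuting
unipotents. The `q²` centralizers above therefore have their representatives in distinct components
(`caseB`).

Otherwise semisimple elements of one component commute, so the `q²` maximal tori lie in
distinct components. It remains to find a component without semisimple elements
(`caseA_no_mixed`). If there is none, every unipotent inverts a torus, which is impossible in odd
characteristic. In characteristic two, if the unipotents `w` and `w'` invert tori `t` and `t'` of two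
different components, the bracket of `t` and `t'` must be degenerate (`bracket_degenerate`), since it
would otherwise invert both tori and so lie in both components. Applied to three suitable unipotents
this is contradictory.
-/

open Pointwise

namespace PSLTwo
set_option linter.unusedSimpArgs false
open Matrix

/-! ### A class equation -/

section Count

theorem conj_mem_of_central {G : Type*} [Group G] {Z : Subgroup G}
    (hZ : ∀ z ∈ Z, ∀ g, Commute z g) {x : G} (h : G) : h * x * h⁻¹ ∈ Z ↔ x ∈ Z := by
  have hn : Z.Normal := ⟨fun n hn g => by
    rw [← (hZ n hn g).eq, mul_inv_cancel_right]; exact hn⟩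
  refine ⟨fun hx => ?_, fun hx => hn.conj_mem _ hx _⟩
  have := hn.conj_mem _ hx h⁻¹
  rwa [show h⁻¹ * (h * x * h⁻¹) * h⁻¹⁻¹ = x by group] at this

open Classical in
/-- In a group in which commuting is transitive off the central subgroup `Z`, the pairs `(h, x)` with
`x ∉ Z` and `h x h⁻¹` in the centralizer of `g` are counted in two ways: for fixed `h` there are
`|C(g)| - |Z|` of them, and for fixed `x` as many as the normalizer of `C(g)` has elements. -/
theorem double_count {G : Type*} [Group G] [Fintype G] (Z : Subgroup G)
    (hZ : ∀ z ∈ Z, ∀ g, Commute z g)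
    (hCA : ∀ a b c : G, b ∉ Z → Commute a b → Commute b c → Commute a c) (g : G) (hg : g ∉ Z) :
    (Finset.univ.filter fun x : G => x ∉ Z ∧ ∃ h : G, Commute (h * x * h⁻¹) g).card *
      (Finset.univ.filter fun h : G => Commute (h * g * h⁻¹) g).card +
      Fintype.card G * Nat.card Z =
    Fintype.card G * (Finset.univ.filter fun x : G => Commute x g).card := by
  have key := Finset.sum_card_bipartiteAbove_eq_sum_card_bipartiteBelow
    (s := (Finset.univ : Finset G))
    (t := Finset.univ.filter fun x : G => x ∉ Z ∧ ∃ h : G, Commute (h * x * h⁻¹) g)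
    (fun h x => Commute (h * x * h⁻¹) g)
  have h1 : ∀ h ∈ (Finset.univ : Finset G),
      (Finset.bipartiteAbove (fun h x => Commute (h * x * h⁻¹) g)
        (Finset.univ.filter fun x : G => x ∉ Z ∧ ∃ h : G, Commute (h * x * h⁻¹) g) h).card
      = (Finset.univ.filter fun x : G => x ∉ Z ∧ Commute x g).card := by
    intro h _
    refine Finset.card_nbij' (fun x => h * x * h⁻¹) (fun x => h⁻¹ * x * h) ?_ ?_ ?_ ?_
    · intro x hx
      simp only [Finset.bipartiteAbove, Finset.coe_filter, Finset.mem_filter, Finset.mem_univ,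
        true_and, Set.mem_ofPred_eq] at hx ⊢
      exact ⟨fun hz => hx.1.1 ((conj_mem_of_central hZ h).1 hz), hx.2⟩
    · intro x hx
      simp only [Finset.bipartiteAbove, Finset.coe_filter, Finset.mem_filter, Finset.mem_univ,
        true_and, Set.mem_ofPred_eq] at hx ⊢
      have e : h * (h⁻¹ * x * h) * h⁻¹ = x := by group
      refine ⟨⟨fun hz => hx.1 ?_, h, by rw [e]; exact hx.2⟩, by rw [e]; exact hx.2⟩
      rw [← conj_mem_of_central hZ h, e] at hz
      exact hz
    · intro x _; simp [mul_assoc]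
    · intro x _; simp [mul_assoc]
  have h2 : ∀ x ∈ (Finset.univ.filter fun x : G => x ∉ Z ∧ ∃ h : G, Commute (h * x * h⁻¹) g),
      (Finset.bipartiteBelow (fun h x => Commute (h * x * h⁻¹) g)
        (Finset.univ : Finset G) x).card
      = (Finset.univ.filter fun h : G => Commute (h * g * h⁻¹) g).card := by
    intro x hx
    obtain ⟨hxZ, k, hk⟩ : x ∉ Z ∧ ∃ h : G, Commute (h * x * h⁻¹) g := by simpa using hx
    have hkx : k * x * k⁻¹ ∉ Z := fun hz => hxZ ((conj_mem_of_central hZ k).1 hz)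
    refine Finset.card_nbij' (fun h => h * k⁻¹) (fun n => n * k) ?_ ?_ ?_ ?_
    · intro h hh
      simp only [Finset.bipartiteBelow, Finset.coe_filter, Finset.mem_univ,
        true_and, Set.mem_ofPred_eq] at hh ⊢
      have e := (Commute.conj_iff (h * k⁻¹)).2 hk
      rw [show h * k⁻¹ * (k * x * k⁻¹) * (h * k⁻¹)⁻¹ = h * x * h⁻¹ by group] at e
      exact hCA _ _ _ (fun hz => hxZ ((conj_mem_of_central hZ h).1 hz)) e.symm hh
    · intro n hn
      simp only [Finset.bipartiteBelow, Finset.coe_filter, Finset.mem_univ,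
        true_and, Set.mem_ofPred_eq] at hn ⊢
      have e := (Commute.conj_iff n).2 hk
      rw [show n * (k * x * k⁻¹) * n⁻¹ = n * k * x * (n * k)⁻¹ by group] at e
      exact hCA _ _ _ (fun hz => hg ((conj_mem_of_central hZ n).1 hz)) e hn
    · intro x _; simp
    · intro x _; simp
  rw [Finset.sum_congr rfl h1, Finset.sum_congr rfl h2] at key
  simp only [Finset.sum_const, Finset.card_univ, smul_eq_mul] at key
  rw [← key, ← mul_add]
  congr 1
  have : Nat.card Z = (Finset.univ.filter fun x : G => x ∈ Z ∧ Commute x g).card := by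
    rw [Nat.card_eq_fintype_card, Fintype.card_subtype]
    congr 1
    ext x
    simp only [Finset.mem_filter, Finset.mem_univ, true_and]
    exact ⟨fun h => ⟨h, hZ x h g⟩, fun h => h.1⟩
  rw [this, add_comm, ← Finset.card_filter_add_card_filter_not (s := Finset.univ.filter
    fun x : G => Commute x g) (fun x => x ∈ Z), Finset.filter_filter, Finset.filter_filter]
  simp only [and_comm]

open Classical in
/-- If `g` and `g⁻¹` are the only conjugates of `g` commuting with `g`, the centralizer of `g` has index
one or two in its normalizer. -/
theorem normalizer_card {G : Type*} [Group G] [Fintype G] (g : G)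
    (h : ∀ h : G, Commute (h * g * h⁻¹) g → h * g * h⁻¹ = g ∨ h * g * h⁻¹ = g⁻¹) :
    (Finset.univ.filter fun h : G => Commute (h * g * h⁻¹) g).card
      = (Finset.univ.filter fun x : G => Commute x g).card ∨
    (Finset.univ.filter fun h : G => Commute (h * g * h⁻¹) g).card
      = 2 * (Finset.univ.filter fun x : G => Commute x g).card := by
  have hc : ∀ x : G, Commute x g ↔ x * g * x⁻¹ = g := fun x => by
    rw [mul_inv_eq_iff_eq_mul]; rfl
  by_cases hk : ∃ k : G, k * g * k⁻¹ = g⁻¹ ∧ ¬ Commute k g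
  · right
    obtain ⟨k, hk, hkc⟩ := hk
    have hne : g ≠ g⁻¹ := fun e => hkc ((hc k).2 (by rw [hk, ← e]))
    rw [two_mul]
    nth_rewrite 2 [show (Finset.univ.filter fun x : G => Commute x g).card =
      (Finset.univ.filter fun x : G => x * g * x⁻¹ = g⁻¹).card from ?_]
    · rw [← Finset.card_union_of_disjoint]
      · congr 1
        ext x
        simp only [Finset.mem_filter, Finset.mem_univ, true_and, Finset.mem_union]
        refine ⟨fun hx => (h x hx).imp (hc x).2 id, ?_⟩
        rintro (hx | hx)
        · rw [(hc x).1 hx]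
        · rw [hx]; exact (Commute.refl g).inv_left
      · rw [Finset.disjoint_left]
        intro x hx hx'
        simp only [Finset.mem_filter, Finset.mem_univ, true_and] at hx hx'
        exact hne (((hc x).1 hx).symm.trans hx')
    · refine Finset.card_nbij' (fun h => k * h) (fun n => k⁻¹ * n) ?_ ?_ ?_ ?_
      · intro x hx
        simp only [Finset.coe_filter, Finset.mem_univ, true_and, Set.mem_ofPred_eq, hc] at hx ⊢
        rw [show k * x * g * (k * x)⁻¹ = k * (x * g * x⁻¹) * k⁻¹ by group, hx, hk]
      · intro x hx
        simp only [Finset.coe_filter, Finset.mem_univ, true_and, Set.mem_ofPred_eq, hc] at hx ⊢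
        rw [show k⁻¹ * x * g * (k⁻¹ * x)⁻¹ = k⁻¹ * (x * g * x⁻¹) * k by group, hx, ← hk]
        group
      · intro x _; simp
      · intro x _; simp
  · left
    push Not at hk
    congr 1
    ext x
    simp only [Finset.mem_filter, Finset.mem_univ, true_and]
    refine ⟨fun hx => (h x hx).elim (hc x).2 (hk x), fun hx => by rw [(hc x).1 hx]⟩

open Classical in
/-- A class equation argument, applied later to the components of a partition with `S` the predicate
of being semisimple. The conjugates of the centralizer of a noncentral `g` cover at least a third of
the group, up to `Z`. So there are at most two conjugacy classes of centralizers, and comparing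
their sizes with the order of the group forces all semisimple elements into one centralizer, unless
some centralizer of a non-semisimple element is properly contained in its normalizer. -/
theorem commute_of_class_equation {G : Type*} [Group G] [Finite G] (Z : Subgroup G)
    (hZ : ∀ z ∈ Z, ∀ g, Commute z g)
    (hCA : ∀ a b c : G, b ∉ Z → Commute a b → Commute b c → Commute a c)
    (S : G → Prop)
    (hS : ∀ g ∉ Z, S g → 2 * Nat.card Z < Nat.card (Subgroup.centralizer {g}) ∧
      ∀ h : G, Commute (h * g * h⁻¹) g → h * g * h⁻¹ = g ∨ h * g * h⁻¹ = g⁻¹)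
    (hU : ∀ g ∉ Z, ¬ S g → ∀ h : G, Commute (h * g * h⁻¹) g → Commute h g)
    (s t : G) (hs : s ∉ Z) (ht : t ∉ Z) (hSs : S s) (hSt : S t) : Commute s t := by
  have := Fintype.ofFinite G
  set C : G → ℕ := fun g => (Finset.univ.filter fun x : G => Commute x g).card with hC
  set N : G → ℕ := fun g => (Finset.univ.filter fun h : G => Commute (h * g * h⁻¹) g).card with hN
  set O : G → Finset G := fun g =>
    Finset.univ.filter fun x : G => x ∉ Z ∧ ∃ h : G, Commute (h * x * h⁻¹) g with hO
  set M := Fintype.card G with hM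
  set c := Nat.card Z with hc
  have hcpos : 0 < c := Nat.card_pos
  have hCent : ∀ g, Nat.card (Subgroup.centralizer {g}) = C g := by
    intro g
    rw [Nat.card_eq_fintype_card, Fintype.card_subtype]
    simp only [hC]
    congr 1
    ext x
    simp only [Finset.mem_filter, Finset.mem_univ, true_and, Subgroup.mem_centralizer_singleton_iff]
    exact Iff.rfl
  have hdvd : ∀ g, ∃ k, C g = c * k := by
    intro g
    rw [← hCent]
    exact Subgroup.card_dvd_of_le fun z hz =>
      (Subgroup.mem_centralizer_singleton_iff.2 (hZ z hz g).eq)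
  have hcount : ∀ g ∉ Z, (O g).card * N g + M * c = M * C g := fun g hg =>
    double_count Z hZ hCA g hg
  have hMpos : 0 < M := Fintype.card_pos
  have hUw : ∀ g ∉ Z, ¬ S g → N g = C g ∧ ∃ k, 2 ≤ k ∧ C g = c * k := by
    intro g hg hgS
    constructor
    · simp only [hN, hC]
      congr 1
      ext x
      simp only [Finset.mem_filter, Finset.mem_univ, true_and]
      refine ⟨hU g hg hgS x, fun h => ?_⟩
      rw [h.eq, mul_inv_cancel_right]
    · obtain ⟨k, hk⟩ := hdvd g
      refine ⟨k, ?_, hk⟩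
      by_contra hlt
      have h1 : C g ≤ c := by
        rw [hk]; nlinarith [show k ≤ 1 by omega]
      have : Z = Subgroup.centralizer {g} := by
        apply Subgroup.eq_of_le_of_card_ge
        · exact fun z hz => (Subgroup.mem_centralizer_singleton_iff.2 (hZ z hz g).eq)
        · rw [hCent]; exact h1
      exact hg (this ▸ Subgroup.mem_centralizer_singleton_iff.2 rfl)
  have hSw : ∀ g ∉ Z, S g → (N g = C g ∨ N g = 2 * C g) ∧ ∃ k, 3 ≤ k ∧ C g = c * k := by
    intro g hg hgS
    obtain ⟨h1, h2⟩ := hS g hg hgS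
    refine ⟨normalizer_card g h2, ?_⟩
    obtain ⟨k, hk⟩ := hdvd g
    refine ⟨k, ?_, hk⟩
    rw [hCent, hk] at h1
    by_contra hlt
    nlinarith [show k ≤ 2 by omega]
  -- `O g` is the union of the conjugates of the centralizer of `g`, minus `Z`
  have hdisj : ∀ g k, g ∉ Z → k ∉ Z → k ∉ O g → Disjoint (O g) (O k) := by
    intro g k hg hk hkg
    rw [Finset.disjoint_left]
    intro x hx hx'
    simp only [hO, Finset.mem_filter, Finset.mem_univ, true_and, not_and, not_exists] at hx hx' hkg
    obtain ⟨hxZ, a, ha⟩ := hx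
    obtain ⟨-, b, hb⟩ := hx'
    refine hkg hk (a * b⁻¹) ?_
    have e := (Commute.conj_iff (a * b⁻¹)).2 hb
    rw [show a * b⁻¹ * (b * x * b⁻¹) * (a * b⁻¹)⁻¹ = a * x * a⁻¹ by group] at e
    exact hCA _ _ _ (fun hz => hxZ ((conj_mem_of_central hZ a).1 hz)) e.symm ha
  have hself : ∀ g ∉ Z, g ∈ O g := by
    intro g hg
    simp only [hO, Finset.mem_filter, Finset.mem_univ, true_and]
    exact ⟨hg, 1, by simp⟩
  set W : Finset G := Finset.univ.filter fun x => x ∉ Z with hW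
  have hWc : W.card + c = M := by
    have h1 : c = (Finset.univ.filter fun x : G => x ∈ Z).card := by
      rw [hc, Nat.card_eq_fintype_card, Fintype.card_subtype]
    rw [h1, hM, add_comm, Finset.card_filter_add_card_filter_not, Finset.card_univ]
  have hOW : ∀ g, O g ⊆ W := by
    intro g x hx
    simp only [hO, hW, Finset.mem_filter, Finset.mem_univ, true_and] at hx ⊢
    exact hx.1
  have hwU : ∀ g ∉ Z, ¬ S g → ∃ k, 2 ≤ k ∧ C g = c * k ∧ (O g).card * k + M = M * k := by
    intro g hg hgS
    obtain ⟨h1, k, hk, h2⟩ := hUw g hg hgS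
    refine ⟨k, hk, h2, ?_⟩
    have h3 := hcount g hg
    rw [h1, h2] at h3
    exact Nat.eq_of_mul_eq_mul_left hcpos (by linarith)
  have hwS : ∀ g ∉ Z, S g → ∃ k, 3 ≤ k ∧ C g = c * k ∧
      ((O g).card * k + M = M * k ∨ N g = 2 * C g ∧ 2 * (O g).card * k + M = M * k) := by
    intro g hg hgS
    obtain ⟨h1, k, hk, h2⟩ := hSw g hg hgS
    refine ⟨k, hk, h2, ?_⟩
    have h3 := hcount g hg
    rcases h1 with h1 | h1
    · left
      rw [h1, h2] at h3
      exact Nat.eq_of_mul_eq_mul_left hcpos (by linarith)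
    · right
      refine ⟨h1, ?_⟩
      rw [h1, h2] at h3
      exact Nat.eq_of_mul_eq_mul_left hcpos (by linarith)
  have hthird : ∀ g ∉ Z, M ≤ 3 * (O g).card := by
    intro g hg
    by_cases hgS : S g
    · obtain ⟨k, hk, -, h | ⟨-, h⟩⟩ := hwS g hg hgS
      · by_contra hlt
        nlinarith
      · by_contra hlt
        nlinarith
    · obtain ⟨k, hk, -, h⟩ := hwU g hg hgS
      by_contra hlt
      nlinarith
  -- two disjoint pieces already exhaust everything outside `Z`
  have htwo : ∀ g k, g ∉ Z → k ∉ Z → k ∉ O g → (O g).card + (O k).card + c = M := by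
    intro g k hg hk hkg
    have hd := hdisj g k hg hk hkg
    have hsub : O g ∪ O k ⊆ W := Finset.union_subset (hOW g) (hOW k)
    by_cases hex : ∃ l ∈ W, l ∉ O g ∪ O k
    · exfalso
      obtain ⟨l, hl, hl'⟩ := hex
      have hlZ : l ∉ Z := by simpa [hW] using hl
      rw [Finset.mem_union, not_or] at hl'
      have hd2 : Disjoint (O g ∪ O k) (O l) :=
        Finset.disjoint_union_left.2 ⟨hdisj g l hg hlZ hl'.1, hdisj k l hk hlZ hl'.2⟩
      have h3 := Finset.card_le_card (Finset.union_subset hsub (hOW l))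
      rw [Finset.card_union_of_disjoint hd2, Finset.card_union_of_disjoint hd] at h3
      have := hthird g hg
      have := hthird k hk
      have := hthird l hlZ
      omega
    · push Not at hex
      have : O g ∪ O k = W := Finset.Subset.antisymm hsub hex
      rw [← Finset.card_union_of_disjoint hd, this, hWc]
  -- hence a semisimple element has normalizer index two whenever its piece is not everything
  have hnot1 : ∀ g k, g ∉ Z → k ∉ Z → k ∉ O g → S g →
      ∃ j, 3 ≤ j ∧ C g = c * j ∧ N g = 2 * C g ∧ 2 * (O g).card * j + M = M * j := by
    intro g k hg hk hkg hgS
    obtain ⟨j, hj, hCj, h | h⟩ := hwS g hg hgS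
    · exfalso
      have h1 := htwo g k hg hk hkg
      have h2 := hthird k hk
      have : 2 * M ≤ 3 * (O g).card := by
        by_contra hlt
        nlinarith
      omega
    · exact ⟨j, hj, hCj, h⟩
  have hNM : ∀ g, N g ≤ M := fun g => Finset.card_le_univ _
  have hCM : ∀ g, C g ≤ M := fun g => Finset.card_le_univ _
  have hSS : ∀ g, g ∉ Z → S g → g ∈ O s := by
    intro g hgZ hgS
    by_contra hgO
    have hsg : s ∉ O g := fun h =>
      Finset.disjoint_left.1 (hdisj s g hs hgZ hgO) (hself s hs) h
    have h2 := htwo s g hs hgZ hgO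
    obtain ⟨j, hj, hCj, hNj, hOj⟩ := hnot1 s g hs hgZ hgO hSs
    obtain ⟨k, hk, hCk, hNk, hOk⟩ := hnot1 g s hgZ hs hsg hgS
    have h3 := hNM s
    rw [hNj, hCj] at h3
    have h5 : M * (j + k) = 2 * c * j * k := by
      zify at hOj hOk h2 ⊢
      linear_combination k * hOj + j * hOk - (2 * j * k) * h2
    have h6 : M * k ≥ 2 * c * j * k := by nlinarith
    nlinarith
  by_contra hst
  have htO := hSS t ht hSt
  by_cases hex : ∃ g ∈ W, g ∉ O s
  · obtain ⟨g, hg, hgO⟩ := hex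
    have hgZ : g ∉ Z := by simpa [hW] using hg
    have h2 := htwo s g hs hgZ hgO
    obtain ⟨j, hj, hCj, hNj, hOj⟩ := hnot1 s g hs hgZ hgO hSs
    have hgS : ¬ S g := fun h => hgO (hSS g hgZ h)
    obtain ⟨k, hk, hCk, hOk⟩ := hwU g hgZ hgS
    have h5 : M * j * k + 2 * c * j * k = M * k + 2 * M * j := by
      zify at hOj hOk h2 ⊢
      linear_combination (-k) * hOj - 2 * j * hOk + (2 * j * k) * h2
    obtain rfl | hk3 : k = 2 ∨ 3 ≤ k := by omega
    · have h6 : N s = M := by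
        rw [hNj, hCj]; nlinarith
      have h7 : ∀ x : G, Commute (x * s * x⁻¹) s := by
        have := Finset.eq_univ_of_card _ h6
        intro x
        have hx := Finset.mem_univ x
        rw [← this] at hx
        simpa using hx
      obtain ⟨-, a, ha⟩ : t ∉ Z ∧ ∃ h : G, Commute (h * t * h⁻¹) s := by simpa [hO] using htO
      have e := (Commute.conj_iff a⁻¹).2 ha
      rw [show a⁻¹ * (a * t * a⁻¹) * a⁻¹⁻¹ = t by group] at e
      exact hst (hCA _ _ _ (fun hz => hs ((conj_mem_of_central hZ _).1 hz)) e (h7 a⁻¹)).symm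
    · have h6 : M * k * 3 ≤ M * k * j := Nat.mul_le_mul_left _ hj
      have h7 : M * j * 3 ≤ M * j * k := Nat.mul_le_mul_left _ hk3
      have h8 : 0 < c * j * k := by positivity
      nlinarith
  · push Not at hex
    have hOW' : O s = W := Finset.Subset.antisymm (hOW s) hex
    obtain ⟨j, hj, hCj, h | ⟨-, h⟩⟩ := hwS s hs hSs
    · rw [hOW'] at h
      have h6 : C s = M := by
        rw [hCj]; nlinarith
      have := Finset.eq_univ_of_card _ h6
      have hx := Finset.mem_univ t
      rw [← this] at hx
      exact hst (by simpa using hx : Commute t s).symm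
    · rw [hOW'] at h
      have := hCM s
      rw [hCj] at this
      nlinarith
end Count

/-! ### Commutation, traces and centralizers in `SL₂` -/

section Basics
variable {F : Type*} [Field F]

local notation "Γ" => Matrix.SpecialLinearGroup (Fin 2) F

theorem sq_one_cases {x : F} (h : x ^ 2 = 1) : x = 1 ∨ x = -1 := by
  have : (x - 1) * (x + 1) = 0 := by linear_combination h
  exact (mul_eq_zero.1 this).imp sub_eq_zero.1 eq_neg_of_add_eq_zero_left

theorem m00 (g h : Γ) : (g * h) 0 0 = g 0 0 * h 0 0 + g 0 1 * h 1 0 := by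
  simp [Matrix.mul_apply, Fin.sum_univ_two]
theorem m01 (g h : Γ) : (g * h) 0 1 = g 0 0 * h 0 1 + g 0 1 * h 1 1 := by
  simp [Matrix.mul_apply, Fin.sum_univ_two]
theorem m10 (g h : Γ) : (g * h) 1 0 = g 1 0 * h 0 0 + g 1 1 * h 1 0 := by
  simp [Matrix.mul_apply, Fin.sum_univ_two]
theorem m11 (g h : Γ) : (g * h) 1 1 = g 1 0 * h 0 1 + g 1 1 * h 1 1 := by
  simp [Matrix.mul_apply, Fin.sum_univ_two]
theorem i00 (g : Γ) : g⁻¹ 0 0 = g 1 1 := by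
  simp [Matrix.SpecialLinearGroup.coe_inv, Matrix.adjugate_fin_two]
theorem i01 (g : Γ) : g⁻¹ 0 1 = - g 0 1 := by
  simp [Matrix.SpecialLinearGroup.coe_inv, Matrix.adjugate_fin_two]
theorem i10 (g : Γ) : g⁻¹ 1 0 = - g 1 0 := by
  simp [Matrix.SpecialLinearGroup.coe_inv, Matrix.adjugate_fin_two]
theorem i11 (g : Γ) : g⁻¹ 1 1 = g 0 0 := by
  simp [Matrix.SpecialLinearGroup.coe_inv, Matrix.adjugate_fin_two]
theorem det_eq (g : Γ) : g 0 0 * g 1 1 - g 0 1 * g 1 0 = 1 := by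
  rw [← Matrix.det_fin_two]; exact g.2
theorem ext4 {g h : Γ} (h0 : g 0 0 = h 0 0) (h1 : g 0 1 = h 0 1) (h2 : g 1 0 = h 1 0)
    (h3 : g 1 1 = h 1 1) : g = h := by
  ext i j; fin_cases i <;> fin_cases j <;> assumption

/-- The matrix with rows `(a, b)` and `(c, d)` as an element of `SL₂`. -/
def mk (a b c d : F) (h : a * d - b * c = 1) : Γ :=
  ⟨!![a, b; c, d], by rw [Matrix.det_fin_two_of, h]⟩

theorem k00 (a b c d : F) (h : a * d - b * c = 1) : (mk a b c d h) 0 0 = a := rfl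
theorem k01 (a b c d : F) (h : a * d - b * c = 1) : (mk a b c d h) 0 1 = b := rfl
theorem k10 (a b c d : F) (h : a * d - b * c = 1) : (mk a b c d h) 1 0 = c := rfl
theorem k11 (a b c d : F) (h : a * d - b * c = 1) : (mk a b c d h) 1 1 = d := rfl

/-- The discriminant of the characteristic polynomial of `g`, i.e. `tr(g)² - 4`. It is nonzero
exactly when `g` is semisimple and noncentral. -/
def disc (g : Γ) : F := (g 0 0 - g 1 1) ^ 2 + 4 * g 0 1 * g 1 0

theorem disc_eq (g : Γ) : disc g = (g 0 0 + g 1 1) ^ 2 - 4 := by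
  unfold disc; linear_combination (-4) * det_eq g

/-- `g` and `h` commute exactly when their images modulo scalar matrices, with coordinates
`(g₀₀ - g₁₁, g₀₁, g₁₀)`, are proportional. -/
theorem commute_iff (g h : Γ) : Commute g h ↔
    (g 0 0 - g 1 1) * h 0 1 = (h 0 0 - h 1 1) * g 0 1 ∧
    (g 0 0 - g 1 1) * h 1 0 = (h 0 0 - h 1 1) * g 1 0 ∧
    g 0 1 * h 1 0 = h 0 1 * g 1 0 := by
  constructor
  · intro e
    have e0 := congrArg (fun x : Γ => x 0 0) e.eq
    have e1 := congrArg (fun x : Γ => x 0 1) e.eq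
    have e2 := congrArg (fun x : Γ => x 1 0) e.eq
    simp only [m00, m01, m10] at e0 e1 e2
    exact ⟨by linear_combination e1, by linear_combination -e2, by linear_combination e0⟩
  · rintro ⟨e1, e2, e0⟩
    apply ext4 <;> simp only [m00, m01, m10, m11]
    · linear_combination e0
    · linear_combination e1
    · linear_combination -e2
    · linear_combination -e0

theorem mem_center (g : Γ) : g ∈ Subgroup.center Γ ↔ g 0 1 = 0 ∧ g 1 0 = 0 ∧ g 0 0 = g 1 1 := by
  rw [Matrix.SpecialLinearGroup.mem_center_iff]
  constructor
  · rintro ⟨r, -, hr⟩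
    rw [← hr]; simp
  · rintro ⟨h1, h2, h3⟩
    have := det_eq g
    refine ⟨g 0 0, ?_, ?_⟩
    · rw [Fintype.card_fin]; rw [h1, ← h3] at this; linear_combination this
    · ext i j; fin_cases i <;> fin_cases j <;> simp [h1, h2, h3]

theorem central_commute : ∀ z ∈ Subgroup.center Γ, ∀ g, Commute z g := fun _ hz g =>
  ((Subgroup.mem_center_iff.1 hz) g).symm

/-- Modulo scalar matrices, every matrix commuting with a noncentral `g` is a multiple of `g`. -/
theorem exists_smul {g h : Γ} (hg : g ∉ Subgroup.center Γ) (e : Commute g h) :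
    ∃ r : F, h 0 0 - h 1 1 = r * (g 0 0 - g 1 1) ∧ h 0 1 = r * g 0 1 ∧ h 1 0 = r * g 1 0 := by
  rw [commute_iff] at e
  obtain ⟨e1, e2, e3⟩ := e
  rw [mem_center] at hg
  by_cases h1 : g 0 1 = 0
  · by_cases h2 : g 1 0 = 0
    · have h3 : g 0 0 - g 1 1 ≠ 0 := fun h => hg ⟨h1, h2, sub_eq_zero.1 h⟩
      refine ⟨(h 0 0 - h 1 1) / (g 0 0 - g 1 1), ?_, ?_, ?_⟩ <;> field_simp
      · linear_combination e1
      · linear_combination e2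
    · refine ⟨h 1 0 / g 1 0, ?_, ?_, ?_⟩ <;> field_simp
      · linear_combination -e2
      · linear_combination -e3
  · refine ⟨h 0 1 / g 0 1, ?_, ?_, ?_⟩ <;> field_simp
    · linear_combination -e1
    · linear_combination e3

theorem commute_of_smul {g h : Γ} (r : F) (e1 : h 0 0 - h 1 1 = r * (g 0 0 - g 1 1))
    (e2 : h 0 1 = r * g 0 1) (e3 : h 1 0 = r * g 1 0) : Commute g h := by
  rw [commute_iff, e1, e2, e3]
  exact ⟨by ring, by ring, by ring⟩

/-- Commuting is transitive on noncentral elements, so the centralizers of noncentral elements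
partition the group modulo its centre. -/
theorem commute_trans (a b c : Γ) (hb : b ∉ Subgroup.center Γ) (h1 : Commute a b)
    (h2 : Commute b c) : Commute a c := by
  obtain ⟨r, e1, e2, e3⟩ := exists_smul hb h1.symm
  obtain ⟨s, f1, f2, f3⟩ := exists_smul hb h2
  rw [commute_iff, e1, e2, e3, f1, f2, f3]
  exact ⟨by ring, by ring, by ring⟩

theorem not_central_of_disc {g : Γ} (h : disc g ≠ 0) : g ∉ Subgroup.center Γ := by
  rw [mem_center]
  rintro ⟨h1, h2, h3⟩
  apply h; unfold disc; rw [h1, h2, h3]; ring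

theorem disc_commute {g h : Γ} (hg : g ∉ Subgroup.center Γ) (hh : h ∉ Subgroup.center Γ)
    (e : Commute g h) : disc g = 0 ↔ disc h = 0 := by
  obtain ⟨r, e1, e2, e3⟩ := exists_smul hg e
  have hr : r ≠ 0 := by
    rintro rfl
    rw [mem_center] at hh
    exact hh ⟨by rw [e2]; ring, by rw [e3]; ring, by linear_combination e1⟩
  have : disc h = r ^ 2 * disc g := by
    unfold disc; rw [e1, e2, e3]; ring
  rw [this]
  simp [hr]

theorem trace_conj (h g : Γ) : (h * g * h⁻¹) 0 0 + (h * g * h⁻¹) 1 1 = g 0 0 + g 1 1 := by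
  simp only [m00, m01, m10, m11, i00, i01, i10, i11]
  linear_combination (g 0 0 + g 1 1) * det_eq h

theorem disc_conj (h g : Γ) : disc (h * g * h⁻¹) = disc g := by
  rw [disc_eq, disc_eq, trace_conj]

/-- In a torus, only an element and its inverse share the same trace. -/
theorem eq_or_inv {g h : Γ} (hg : disc g ≠ 0) (e : Commute g h)
    (ht : h 0 0 + h 1 1 = g 0 0 + g 1 1) : h = g ∨ h = g⁻¹ := by
  obtain ⟨r, e1, e2, e3⟩ := exists_smul (not_central_of_disc hg) e
  have hd : disc h = r ^ 2 * disc g := by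
    unfold disc; rw [e1, e2, e3]; ring
  have hd' : disc h = disc g := by rw [disc_eq, disc_eq, ht]
  have hr : r ^ 2 = 1 := by
    rw [hd'] at hd
    exact (mul_right_cancel₀ hg (by linear_combination hd)).symm
  have dg := det_eq g
  have dh := det_eq h
  by_cases h2 : (2 : F) = 0
  · have hr1 : r = 1 := by
      have : (r - 1) ^ 2 = 0 := by linear_combination hr + (1 - r) * h2
      exact sub_eq_zero.1 (pow_eq_zero_iff (two_ne_zero) |>.1 this)
    subst hr1
    -- in characteristic two the diagonal entries are determined up to swapping
    have : (h 0 0 - g 0 0) * (h 0 0 - g 1 1) = 0 := by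
      rw [e2, e3] at dh
      linear_combination dg - dh + h 0 0 * ht
    rcases mul_eq_zero.1 this with h0 | h0
    · left
      apply ext4
      · linear_combination h0
      · linear_combination e2
      · linear_combination e3
      · linear_combination ht - h0
    · right
      apply ext4 <;> simp only [i00, i01, i10, i11]
      · linear_combination h0
      · linear_combination e2 + g 0 1 * h2
      · linear_combination e3 + g 1 0 * h2
      · linear_combination ht - h0
  · rcases sq_one_cases hr with rfl | rfl
    · left
      apply ext4
      · exact mul_left_cancel₀ h2 (by linear_combination ht + e1)
      · linear_combination e2
      · linear_combination e3
      · exact mul_left_cancel₀ h2 (by linear_combination ht - e1)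
    · right
      apply ext4 <;> simp only [i00, i01, i10, i11]
      · exact mul_left_cancel₀ h2 (by linear_combination ht + e1)
      · linear_combination e2
      · linear_combination e3
      · exact mul_left_cancel₀ h2 (by linear_combination ht - e1)

/-- An element of zero discriminant can invert a noncentral semisimple element only in characteristic
two. The last equation is the vanishing of the trace of `w * t`. -/
theorem unip_inv {t w : Γ} (ht : disc t ≠ 0) (hw : disc w = 0) (e : w * t * w⁻¹ = t⁻¹) :
    (2 : F) = 0 ∧ w 0 0 + w 1 1 = 0 ∧
      w 0 0 * t 0 0 + w 0 1 * t 1 0 + w 1 0 * t 0 1 + w 1 1 * t 1 1 = 0 := by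
  rw [mul_inv_eq_iff_eq_mul] at e
  have e0 := congrArg (fun x : Γ => x 0 0) e
  have e1 := congrArg (fun x : Γ => x 0 1) e
  have e2 := congrArg (fun x : Γ => x 1 0) e
  have e3 := congrArg (fun x : Γ => x 1 1) e
  simp only [m00, m01, m10, m11, i00, i01, i10, i11] at e0 e1 e2 e3
  have hw0 : w 0 0 + w 1 1 = 0 := by
    by_contra hne
    refine not_central_of_disc ht ((mem_center t).2 ⟨?_, ?_, ?_⟩) <;>
      refine mul_left_cancel₀ hne ?_
    · linear_combination e1
    · linear_combination e2
    · linear_combination e0 - e3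
  refine ⟨?_, hw0, ?_⟩
  · rw [disc_eq, hw0] at hw
    have : (2 : F) ^ 2 = 0 := by linear_combination -hw
    exact pow_eq_zero_iff (two_ne_zero) |>.1 this
  · linear_combination e0 + t 1 1 * hw0

/-- If `w` and `w * t` have trace zero, then `w` inverts `t`. -/
theorem inv_of_trace {t w : Γ} (hw : w 0 0 + w 1 1 = 0)
    (h : w 0 0 * t 0 0 + w 0 1 * t 1 0 + w 1 0 * t 0 1 + w 1 1 * t 1 1 = 0) :
    w * t * w⁻¹ = t⁻¹ := by
  rw [mul_inv_eq_iff_eq_mul]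
  apply ext4 <;> simp only [m00, m01, m10, m11, i00, i01, i10, i11]
  · linear_combination h - t 1 1 * hw
  · linear_combination t 0 1 * hw
  · linear_combination t 1 0 * hw
  · linear_combination h - t 0 0 * hw

section Fin
variable [Fintype F]

theorem card_center_le : Nat.card (Subgroup.center Γ) ≤ 2 := by
  classical
  have := Fintype.ofFinite (Subgroup.center Γ)
  rw [Nat.card_eq_fintype_card, ← Finset.card_univ]
  by_contra hlt
  push Not at hlt
  obtain ⟨⟨a, ha⟩, -, ⟨b, hb⟩, -, ⟨c, hc⟩, -, hab, hac, hbc⟩ := Finset.two_lt_card.1 hlt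
  have key : ∀ {x y : Γ}, x ∈ Subgroup.center Γ → y ∈ Subgroup.center Γ → x 0 0 = y 0 0 →
      x = y := by
    intro x y hx hy h
    obtain ⟨h1, h2, h3⟩ := (mem_center x).1 hx
    obtain ⟨k1, k2, k3⟩ := (mem_center y).1 hy
    exact ext4 h (by rw [h1, k1]) (by rw [h2, k2]) (by rw [← h3, ← k3, h])
  have sq : ∀ {x : Γ}, x ∈ Subgroup.center Γ → x 0 0 = 1 ∨ x 0 0 = -1 := by
    intro x hx
    obtain ⟨h1, h2, h3⟩ := (mem_center x).1 hx
    have := det_eq x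
    rw [h1, ← h3] at this
    exact sq_one_cases (by linear_combination this)
  have hab' : a 0 0 ≠ b 0 0 := fun h => hab (Subtype.ext (key ha hb h))
  have hac' : a 0 0 ≠ c 0 0 := fun h => hac (Subtype.ext (key ha hc h))
  have hbc' : b 0 0 ≠ c 0 0 := fun h => hbc (Subtype.ext (key hb hc h))
  rcases sq ha with h1 | h1 <;> rcases sq hb with h2 | h2 <;> rcases sq hc with h3 | h3 <;>
    simp_all

open Classical in
/-- A semisimple direction `(α, β, γ)` modulo scalars carries many elements of `SL₂`: with
`X = !![α, β; γ, 0]`, the matrices `(k + X)² / det (k + X)` for `k` off the spectrum of `-X`. -/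
theorem five_le (hF : 7 ≤ Fintype.card F) (α β γ : F) (hΔ : α ^ 2 + 4 * β * γ ≠ 0) :
    5 ≤ (Finset.univ.filter fun g : Γ => ∃ r : F, g 0 0 - g 1 1 = r * α ∧ g 0 1 = r * β ∧
      g 1 0 = r * γ).card := by
  set D : F → F := fun k => k ^ 2 + k * α - β * γ with hD
  have hroots : (Finset.univ.filter fun k : F => D k = 0).card ≤ 2 := by
    by_contra hlt
    push Not at hlt
    obtain ⟨a, ha, b, hb, c, hc, hab, hac, hbc⟩ := Finset.two_lt_card.1 hlt
    simp only [Finset.mem_filter, Finset.mem_univ, true_and, hD] at ha hb hc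
    have h1 : a + b + α = 0 := mul_left_cancel₀ (sub_ne_zero.2 hab) (by linear_combination ha - hb)
    have h2 : a + c + α = 0 := mul_left_cancel₀ (sub_ne_zero.2 hac) (by linear_combination ha - hc)
    exact hbc (by linear_combination h1 - h2)
  have hsum := Finset.card_filter_add_card_filter_not (s := (Finset.univ : Finset F))
    (fun k => D k = 0)
  rw [Finset.card_univ] at hsum
  have h5 : 5 ≤ (Finset.univ.filter fun k : F => ¬ D k = 0).card := by omega
  refine h5.trans ?_
  refine Finset.card_le_card_of_injOn
    (fun k => if h : D k = 0 then 1 else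
      mk (((k + α) ^ 2 + β * γ) / D k) (β * (2 * k + α) / D k) (γ * (2 * k + α) / D k)
        ((k ^ 2 + β * γ) / D k) (by field_simp; simp only [hD]; ring)) ?_ ?_
  · intro k hk
    have hk' : D k ≠ 0 := by simpa using hk
    simp only [Finset.coe_filter, Finset.mem_univ, true_and, Set.mem_ofPred_eq, dif_neg hk',
      k00, k01, k10, k11]
    refine ⟨(2 * k + α) / D k, ?_, ?_, ?_⟩ <;> field_simp
    ring
  · intro k hk l hl hkl
    have hk' : D k ≠ 0 := by simpa using hk
    have hl' : D l ≠ 0 := by simpa using hl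
    simp only [dif_neg hk', dif_neg hl'] at hkl
    have e0 := congrArg (fun x : Γ => x 0 0) hkl
    have e1 := congrArg (fun x : Γ => x 0 1) hkl
    have e2 := congrArg (fun x : Γ => x 1 0) hkl
    have e3 := congrArg (fun x : Γ => x 1 1) hkl
    simp only [k00, k01, k10, k11] at e0 e1 e2 e3
    have ew : (2 * k + α) / D k = (2 * l + α) / D l := by
      by_cases hβ : β = 0
      · have hα : α ≠ 0 := by rintro rfl; apply hΔ; rw [hβ]; ring
        apply mul_left_cancel₀ hα
        have e4 : ((k + α) ^ 2 + β * γ) / D k - (k ^ 2 + β * γ) / D k =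
          ((l + α) ^ 2 + β * γ) / D l - (l ^ 2 + β * γ) / D l := by rw [e0, e3]
        rw [← sub_div, ← sub_div] at e4
        rw [← mul_div_assoc, ← mul_div_assoc]
        convert e4 using 2 <;> ring
      · apply mul_left_cancel₀ hβ
        rw [← mul_div_assoc, ← mul_div_assoc]; exact e1
    have ek : ∀ k : F, D k ≠ 0 → 1 + (k ^ 2 + β * γ) / D k = k * ((2 * k + α) / D k) := by
      intro k hk
      field_simp
      simp only [hD]; ring
    have ekl : k * ((2 * k + α) / D k) = l * ((2 * k + α) / D k) := by
      rw [← ek k hk', e3, ek l hl', ew]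
    by_cases hz : 2 * k + α = 0
    · have hz' : 2 * l + α = 0 := by
        rw [hz, zero_div, eq_comm, div_eq_zero_iff] at ew
        exact ew.resolve_right hl'
      have h2 : (2 : F) ≠ 0 := by
        intro h2
        apply hΔ
        have : α = 0 := by linear_combination hz - k * h2
        rw [this]; linear_combination 2 * β * γ * h2
      exact mul_left_cancel₀ h2 (by linear_combination hz - hz')
    · exact mul_right_cancel₀ (div_ne_zero hz hk') ekl

theorem card_centralizer (hF : 7 ≤ Fintype.card F) {g : Γ} (hg : disc g ≠ 0) :
    5 ≤ Nat.card (Subgroup.centralizer {g}) := by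
  classical
  rw [Nat.card_eq_fintype_card, Fintype.card_subtype]
  refine (five_le hF (g 0 0 - g 1 1) (g 0 1) (g 1 0) hg).trans (Finset.card_le_card ?_)
  intro h hh
  simp only [Finset.mem_filter, Finset.mem_univ, true_and,
    Subgroup.mem_centralizer_singleton_iff] at hh ⊢
  obtain ⟨r, e1, e2, e3⟩ := hh
  exact (commute_of_smul r e1 e2 e3).symm.eq

/-- Every semisimple direction modulo scalars is attained by a noncentral element. -/
theorem exists_of_dir (hF : 7 ≤ Fintype.card F) (α β γ : F) (hΔ : α ^ 2 + 4 * β * γ ≠ 0) :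
    ∃ g : Γ, disc g ≠ 0 ∧ ∃ r : F, r ≠ 0 ∧ g 0 0 - g 1 1 = r * α ∧ g 0 1 = r * β ∧
      g 1 0 = r * γ := by
  classical
  have h5 := five_le hF α β γ hΔ
  have h2 := card_center_le (F := F)
  rw [Nat.card_eq_fintype_card, Fintype.card_subtype] at h2
  obtain ⟨g, hg, hgc⟩ := Finset.exists_mem_notMem_of_card_lt_card (lt_of_le_of_lt h2
    (lt_of_lt_of_le (by norm_num) h5))
  simp only [Finset.mem_filter, Finset.mem_univ, true_and] at hg hgc
  obtain ⟨r, e1, e2, e3⟩ := hg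
  have hr : r ≠ 0 := by
    rintro rfl
    rw [mem_center] at hgc
    exact hgc ⟨by rw [e2]; ring, by rw [e3]; ring, by linear_combination e1⟩
  refine ⟨g, ?_, r, hr, e1, e2, e3⟩
  have : disc g = r ^ 2 * (α ^ 2 + 4 * β * γ) := by unfold disc; rw [e1, e2, e3]; ring
  rw [this]
  exact mul_ne_zero (pow_ne_zero _ hr) hΔ

/-- The centralizer of a semisimple element embeds in the multiplicative group of the algebraic
closure by sending `x + yX` to the eigenvalue `x + yL`. -/
theorem isCyclic_centralizer {g : Γ} (hg : disc g ≠ 0) :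
    IsCyclic (Subgroup.centralizer {g}) := by
  obtain ⟨ℓ1, ℓ2, ℓ3, hℓ⟩ : ∃ a b c : F,
      a * (g 0 0 - g 1 1) + b * g 0 1 + c * g 1 0 = 1 := by
    have := not_central_of_disc hg
    rw [mem_center] at this
    by_cases h1 : g 0 1 = 0
    · by_cases h2 : g 1 0 = 0
      · have h3 : g 0 0 - g 1 1 ≠ 0 := fun h => this ⟨h1, h2, sub_eq_zero.1 h⟩
        exact ⟨(g 0 0 - g 1 1)⁻¹, 0, 0, by field_simp; ring⟩
      · exact ⟨0, 0, (g 1 0)⁻¹, by field_simp; ring⟩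
    · exact ⟨0, (g 0 1)⁻¹, 0, by field_simp; ring⟩
  set α := g 0 0 - g 1 1 with hα
  set β := g 0 1
  set γ := g 1 0
  let E := AlgebraicClosure F
  obtain ⟨L, hL⟩ : ∃ L : E, L ^ 2 - algebraMap F E α * L - algebraMap F E (β * γ) = 0 := by
    have := IsAlgClosed.exists_root (Polynomial.X ^ 2 - Polynomial.C (algebraMap F E α) *
      Polynomial.X - Polynomial.C (algebraMap F E (β * γ))) ?_
    · obtain ⟨L, hL⟩ := this
      exact ⟨L, by simpa [Polynomial.IsRoot] using hL⟩
    · rw [show (Polynomial.X ^ 2 - Polynomial.C (algebraMap F E α) *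
      Polynomial.X - Polynomial.C (algebraMap F E (β * γ))) = Polynomial.C 1 * Polynomial.X ^ 2 +
        Polynomial.C (-algebraMap F E α) * Polynomial.X +
        Polynomial.C (-algebraMap F E (β * γ)) by simp; ring,
        Polynomial.degree_quadratic one_ne_zero]
      norm_num
  let y : Γ → F := fun h => ℓ1 * (h 0 0 - h 1 1) + ℓ2 * h 0 1 + ℓ3 * h 1 0
  have hy : ∀ h : Γ, Commute g h → h 0 0 = h 1 1 + y h * α ∧ h 0 1 = y h * β ∧
      h 1 0 = y h * γ := by
    intro h e
    obtain ⟨r, e1, e2, e3⟩ := exists_smul (not_central_of_disc hg) e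
    have : y h = r := by
      simp only [y]; rw [e1, e2, e3]; linear_combination r * hℓ
    rw [this]
    exact ⟨by linear_combination e1, e2, e3⟩
  have hc : ∀ h ∈ Subgroup.centralizer {g}, Commute g h := fun h hh =>
    (show Commute h g from Subgroup.mem_centralizer_singleton_iff.1 hh).symm
  let χ : Subgroup.centralizer {g} →* E := 
    { toFun := fun h => algebraMap F E (h.1 1 1) + algebraMap F E (y h.1) * L
      map_one' := by simp [y]
      map_mul' := by
        rintro ⟨h, hh⟩ ⟨k, hk⟩
        obtain ⟨a1, a2, a3⟩ := hy h (hc h hh)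
        obtain ⟨b1, b2, b3⟩ := hy k (hc k hk)
        have hyy : y (h * k) = h 1 1 * y k + y h * k 1 1 + y h * y k * α := by
          have e : y (h * k) = ℓ1 * ((h * k) 0 0 - (h * k) 1 1) + ℓ2 * (h * k) 0 1 +
            ℓ3 * (h * k) 1 0 := rfl
          rw [e, m00, m01, m10, m11, a1, a2, a3, b1, b2, b3]
          linear_combination (h 1 1 * y k + y h * k 1 1 + y h * y k * α) * hℓ
        have h11 : (h * k) 1 1 = h 1 1 * k 1 1 + y h * y k * (β * γ) := by
          rw [m11, a3, b2]; ring
        change algebraMap F E ((h * k) 1 1) + algebraMap F E (y (h * k)) * L =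
          (algebraMap F E (h 1 1) + algebraMap F E (y h) * L) *
          (algebraMap F E (k 1 1) + algebraMap F E (y k) * L)
        rw [hyy, h11]
        simp only [map_add, map_mul] at hL ⊢
        linear_combination (-(algebraMap F E (y h)) * (algebraMap F E (y k))) * hL }
  have hχ : Function.Injective χ := by
    rw [injective_iff_map_eq_one]
    rintro ⟨h, hh⟩ h1
    obtain ⟨a1, a2, a3⟩ := hy h (hc h hh)
    have h1' : algebraMap F E (h 1 1) + algebraMap F E (y h) * L = 1 := h1
    have hd : h 1 1 ^ 2 + h 1 1 * y h * α - y h ^ 2 * (β * γ) = 1 := by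
      have := det_eq h
      rw [a1, a2, a3] at this
      linear_combination this
    have hdE := congrArg (algebraMap F E) hd
    simp only [map_add, map_mul, map_sub, map_pow, map_one] at hdE hL
    have hne : 2 * L - algebraMap F E α ≠ 0 := by
      intro h0
      apply hg
      apply (algebraMap F E).injective
      have : disc g = α ^ 2 + 4 * (β * γ) := by simp only [disc, hα]; ring
      rw [this]
      simp only [map_add, map_mul, map_pow, map_ofNat, map_zero]
      linear_combination (2 * L - algebraMap F E α) * h0 - 4 * hL
    have hy0 : algebraMap F E (y h) = 0 := by
      refine (mul_eq_zero.1 (?_ : algebraMap F E (y h) * (2 * L - algebraMap F E α) = 0)).resolve_right hne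
      linear_combination h1' - hdE + (algebraMap F E (y h)) ^ 2 * hL +
        (algebraMap F E (h 1 1) + algebraMap F E (y h) * (algebraMap F E α - L)) * h1'
    have hx1 : h 1 1 = 1 := by
      apply (algebraMap F E).injective
      rw [map_one]; linear_combination h1' - L * hy0
    have hyz : y h = 0 := (algebraMap F E).injective (by rw [hy0, map_zero])
    rw [hyz] at a1 a2 a3
    refine Subtype.ext (ext4 ?_ ?_ ?_ ?_) <;> simp [a1, a2, a3, hx1]
  exact isCyclic_of_injective_ringHom χ hχ
end Fin
end Basics

/-! ### Borel subgroups -/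

section Borel
variable {F : Type*} [Field F]

local notation "Γ" => Matrix.SpecialLinearGroup (Fin 2) F

/-- The conjugate `k H k⁻¹` of a subgroup `H`. -/
def cj {G : Type*} [Group G] (k : G) (H : Subgroup G) : Subgroup G :=
  H.comap (MulAut.conj k⁻¹).toMonoidHom

theorem mem_cj {G : Type*} [Group G] {k g : G} {H : Subgroup G} :
    g ∈ cj k H ↔ k⁻¹ * g * k ∈ H := by
  change k⁻¹ * g * k⁻¹⁻¹ ∈ H ↔ _
  rw [inv_inv]

theorem conj_mem_cj {G : Type*} [Group G] {k g : G} {H : Subgroup G} :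
    k * g * k⁻¹ ∈ cj k H ↔ g ∈ H := by
  rw [mem_cj]
  group

/-- A subgroup of `SL₂` containing the full centralizer of each of its noncentral semisimple
elements. -/
def Closed (H : Subgroup Γ) : Prop :=
  ∀ g ∈ H, disc g ≠ 0 → ∀ h, Commute g h → h ∈ H

/-- The upper unitriangular matrix with corner `y`. -/
def U (y : F) : Γ := mk 1 y 0 1 (by ring)

theorem U00 (y : F) : U y 0 0 = 1 := rfl
theorem U01 (y : F) : U y 0 1 = y := rfl
theorem U10 (y : F) : U y 1 0 = 0 := rfl
theorem U11 (y : F) : U y 1 1 = 1 := rfl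

theorem trace_sign {u : Γ} (hu : disc u = 0) :
    ∃ ε : F, ε ^ 2 = 1 ∧ u 0 0 + u 1 1 = 2 * ε := by
  rw [disc_eq] at hu
  have : (u 0 0 + u 1 1 - 2) * (u 0 0 + u 1 1 + 2) = 0 := by linear_combination hu
  rcases mul_eq_zero.1 this with h | h
  · exact ⟨1, by ring, by linear_combination h⟩
  · exact ⟨-1, by ring, by linear_combination h⟩

/-- An element with vanishing discriminant is conjugate to an upper triangular one. -/
theorem exists_conj_upper {u : Γ} (hu : disc u = 0) : ∃ k : Γ, (k * u * k⁻¹) 1 0 = 0 := by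
  by_cases hc : u 1 0 = 0
  · exact ⟨1, by simpa using hc⟩
  obtain ⟨ε, hε, ht⟩ := trace_sign hu
  refine ⟨mk 0 (1 / u 1 0) (-u 1 0) (u 0 0 - ε) (by field_simp; ring), ?_⟩
  simp only [m00, m01, m10, m11, i00, i01, i10, i11, k00, k01, k10, k11]
  linear_combination u 1 0 * det_eq u - u 1 0 * ε * ht - u 1 0 * hε

theorem upper_of_disc {u : Γ} (hu : disc u = 0) (h0 : u 1 0 = 0) : u 0 0 = u 1 1 := by
  unfold disc at hu
  rw [h0] at hu
  have : (u 0 0 - u 1 1) ^ 2 = 0 := by linear_combination hu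
  exact sub_eq_zero.1 (pow_eq_zero_iff (two_ne_zero) |>.1 this)

theorem exists_two_squares [Fintype F] (z : F) : ∃ s t : F, z = s ^ 2 + t ^ 2 := by
  classical
  by_cases h2 : ringChar F = 2
  · obtain ⟨s, hs⟩ := FiniteField.isSquare_of_char_two h2 z
    exact ⟨s, 0, by rw [hs]; ring⟩
  · obtain ⟨a, b, hab⟩ := FiniteField.exists_root_sum_quadratic (R := F)
      (f := Polynomial.X ^ 2) (g := Polynomial.X ^ 2 - Polynomial.C z)
      (by simp) (Polynomial.degree_X_pow_sub_C two_pos z)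
      (FiniteField.odd_card_of_char_ne_two h2)
    simp at hab
    exact ⟨a, b, by linear_combination -hab⟩

/-- A proper closed subgroup `H` with an upper triangular unipotent element `u` (up to sign) and an
element `h` normalizing but not centralizing the unipotent radical is the group of upper triangular
matrices. The torus of `h` acts on the corner entries by multiplication by squares, and sums of two
squares exhaust a finite field. A further element would generate everything by Bruhat
decomposition. -/
theorem borel_of_upper [Fintype F] {H : Subgroup Γ} (hT : H ≠ ⊤) (hZ : Subgroup.center Γ ≤ H)
    (hC : Closed H) {u h : Γ} (hu : u ∈ H) (hd : disc u = 0) (hnz : u ∉ Subgroup.center Γ)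
    (hu0 : u 1 0 = 0) (hh : h ∈ H) (e : Commute (h * u * h⁻¹) u) (hne : ¬ Commute h u) (g : Γ) :
    g ∈ H ↔ g 1 0 = 0 := by
  have hdiag := upper_of_disc hd hu0
  have hx : u 0 1 ≠ 0 := fun hx => hnz ((mem_center u).2 ⟨hx, hu0, hdiag⟩)
  have hdet := det_eq u
  rw [hu0, ← hdiag] at hdet
  have hc : h 1 0 = 0 := by
    have := ((commute_iff _ _).1 e).2.2
    simp only [m00, m01, m10, m11, i00, i01, i10, i11, hu0, ← hdiag] at this
    have : (h 1 0) ^ 2 * (u 0 1) ^ 2 = 0 := by linear_combination this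
    simpa [hx] using this
  have hdh := det_eq h
  rw [hc] at hdh
  have hne' : h 0 0 - h 1 1 ≠ 0 := by
    intro h0
    apply hne
    rw [commute_iff, hc, hu0, h0, hdiag]
    exact ⟨by ring, by ring, by ring⟩
  have hdisc : disc h ≠ 0 := by
    unfold disc; rw [hc]; simpa using hne'
  -- the torus containing `h`
  have hD : ∀ s : F, s ≠ 0 → ∃ d ∈ H, d 0 0 = s ∧ d 1 0 = 0 ∧ d 1 1 = s⁻¹ := by
    intro s hs
    refine ⟨mk s ((s - s⁻¹) * h 0 1 / (h 0 0 - h 1 1)) 0 s⁻¹ (by field_simp; ring),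
      hC h hh hdisc _ ?_, rfl, rfl, rfl⟩
    apply commute_of_smul ((s - s⁻¹) / (h 0 0 - h 1 1)) <;>
      simp only [k00, k01, k10, k11, hc] <;> field_simp
    ring
  have hS : ∀ s y : F, U y ∈ H → U (s ^ 2 * y) ∈ H := by
    intro s y hy
    by_cases hs : s = 0
    · have : U (s ^ 2 * y) = (1 : Γ) := by
        rw [hs]; apply ext4 <;> simp [U00, U01, U10, U11]
      rw [this]; exact H.one_mem
    obtain ⟨d, hdH, d0, d1, d2⟩ := hD s hs
    have : U (s ^ 2 * y) = d * U y * d⁻¹ := by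
      apply ext4 <;> simp only [m00, m01, m10, m11, i00, i01, i10, i11, U00, U01, U10, U11,
        d0, d1, d2] <;> field_simp <;> ring
    rw [this]
    exact H.mul_mem (H.mul_mem hdH hy) (H.inv_mem hdH)
  have hA : ∀ y z : F, U y ∈ H → U z ∈ H → U (y + z) ∈ H := by
    intro y z hy hz
    have : U (y + z) = U y * U z := by
      apply ext4 <;> simp only [m00, m01, m10, m11, U00, U01, U10, U11] <;> ring
    rw [this]; exact H.mul_mem hy hz
  have h0 : U (u 0 0 * u 0 1) ∈ H := by
    have : U (u 0 0 * u 0 1) = mk (u 0 0) 0 0 (u 0 0) (by linear_combination hdet) * u := by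
      apply ext4 <;> simp only [m00, m01, m10, m11, U00, U01, U10, U11, k00, k01, k10, k11, hu0,
        ← hdiag] <;> first | ring1 | linear_combination -hdet
    rw [this]
    refine H.mul_mem (hZ ?_) hu
    rw [mem_center]; exact ⟨rfl, rfl, rfl⟩
  have hUH : ∀ y : F, U y ∈ H := by
    intro y
    have h00 : u 0 0 ≠ 0 := by
      intro h; rw [h] at hdet; simp at hdet
    obtain ⟨s, t, hst⟩ := exists_two_squares (y / (u 0 0 * u 0 1))
    have : y = s ^ 2 * (u 0 0 * u 0 1) + t ^ 2 * (u 0 0 * u 0 1) := by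
      rw [← add_mul, ← hst]; field_simp
    rw [this]
    exact hA _ _ (hS _ _ h0) (hS _ _ h0)
  have hB : ∀ g : Γ, g 1 0 = 0 → g ∈ H := by
    intro g hg
    have hdg := det_eq g
    rw [hg] at hdg
    have g0 : g 0 0 ≠ 0 := by
      intro h; rw [h] at hdg; simp at hdg
    obtain ⟨d, hdH, d0, d1, d2⟩ := hD _ g0
    have : g = U (g 0 0 * (g 0 1 - d 0 1)) * d := by
      have : g 1 1 = (g 0 0)⁻¹ := by field_simp; linear_combination hdg
      apply ext4 <;> simp only [m00, m01, m10, m11, U00, U01, U10, U11, hg, this, d0, d1, d2] <;>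
        field_simp <;> ring
    rw [this]
    exact H.mul_mem (hUH _) hdH
  refine ⟨fun hg => ?_, hB g⟩
  by_contra hgc
  apply hT
  rw [eq_top_iff]
  intro k _
  by_cases hk : k 1 0 = 0
  · exact hB k hk
  -- Bruhat decomposition
  have : k * (U ((k 1 1 - k 1 0 * g 1 1 / g 1 0) / k 1 0))⁻¹ * g⁻¹ ∈ H := by
    apply hB
    simp only [m00, m01, m10, m11, i00, i01, i10, i11, U00, U01, U10, U11]
    field_simp
    ring
  have h2 := H.mul_mem (H.mul_mem this hg) (hUH ((k 1 1 - k 1 0 * g 1 1 / g 1 0) / k 1 0))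
  simpa using h2

/-- A proper closed subgroup with two noncommuting semisimple elements is a Borel subgroup: otherwise
the class equation would make the semisimple elements commute. -/
theorem borel_of_noncomm [Fintype F] (hF : 7 ≤ Fintype.card F) {H : Subgroup Γ} (hT : H ≠ ⊤)
    (hZ : Subgroup.center Γ ≤ H) (hC : Closed H) {s t : Γ} (hs : s ∈ H) (ht : t ∈ H)
    (ds : disc s ≠ 0) (dt : disc t ≠ 0) (hst : ¬ Commute s t) :
    ∃ k : Γ, ∀ g, g ∈ H ↔ (k * g * k⁻¹) 1 0 = 0 := by
  classical
  have hcoe : ∀ a b : H, Commute a b ↔ Commute (a : Γ) (b : Γ) := fun a b =>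
    ⟨fun h => congrArg Subtype.val h.eq, fun h => Subtype.ext h.eq⟩
  obtain ⟨u, hu, hnz, hd, h, hh, e, hne⟩ : ∃ u ∈ H, u ∉ Subgroup.center Γ ∧ disc u = 0 ∧
      ∃ h ∈ H, Commute (h * u * h⁻¹) u ∧ ¬ Commute h u := by
    by_contra hcon
    push Not at hcon
    apply hst
    have := commute_of_class_equation (G := H) ((Subgroup.center Γ).subgroupOf H)
      (fun z hz g => (hcoe _ _).2 (central_commute _ hz _))
      (fun a b c hb hab hbc => (hcoe _ _).2
        (commute_trans _ _ _ hb ((hcoe _ _).1 hab) ((hcoe _ _).1 hbc)))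
      (fun g => disc (g : Γ) ≠ 0) ?_ ?_ ⟨s, hs⟩ ⟨t, ht⟩ (not_central_of_disc ds)
      (not_central_of_disc dt) ds dt
    · exact (hcoe _ _).1 this
    · intro g _ hg
      refine ⟨?_, ?_⟩
      · have h1 : Nat.card ((Subgroup.center Γ).subgroupOf H) ≤ 2 :=
          (Nat.card_le_card_of_injective (fun z => (⟨z.1.1, z.2⟩ : Subgroup.center Γ))
            (fun a b hab => Subtype.ext (Subtype.ext (congrArg (fun z => z.1) hab)))).trans
            card_center_le
        have h2 : Nat.card (Subgroup.centralizer {(g : Γ)}) ≤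
            Nat.card (Subgroup.centralizer {g}) :=
          Nat.card_le_card_of_injective (fun z => ⟨⟨z.1, hC g g.2 hg _
            (show Commute z.1 (g : Γ) from Subgroup.mem_centralizer_singleton_iff.1 z.2).symm⟩,
            Subgroup.mem_centralizer_singleton_iff.2
              (Subtype.ext (Subgroup.mem_centralizer_singleton_iff.1 z.2))⟩)
            (fun a b hab => Subtype.ext (congrArg (fun z => z.1.1) hab))
        have h3 := card_centralizer hF hg
        omega
      · intro h hc
        have := eq_or_inv (h := h * g * h⁻¹) hg ((hcoe _ _).1 hc).symm (trace_conj _ _)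
        exact this.imp (fun h => Subtype.ext h) (fun h => Subtype.ext h)
    · intro g hg hS h hc
      exact (hcoe _ _).2 (hcon g g.2 hg (not_not.1 hS) h h.2 ((hcoe _ _).1 hc))
  obtain ⟨k, hk⟩ := exists_conj_upper hd
  refine ⟨k, fun g => ?_⟩
  have hcomm : ∀ a b : Γ, Commute (k * a * k⁻¹) (k * b * k⁻¹) ↔ Commute a b := fun a b =>
    Commute.conj_iff k
  have hzc : ∀ a : Γ, k * a * k⁻¹ ∈ Subgroup.center Γ ↔ a ∈ Subgroup.center Γ := fun a =>
    conj_mem_of_central central_commute k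
  have hsurj : ∀ a : Γ, ∃ b, a = k * b * k⁻¹ := fun a => ⟨k⁻¹ * a * k, by group⟩
  rw [← conj_mem_cj (k := k)]
  refine borel_of_upper (u := k * u * k⁻¹) (h := k * h * k⁻¹) ?_ ?_ ?_ (conj_mem_cj.2 hu) ?_ ?_ hk
    (conj_mem_cj.2 hh) ?_ ?_ _
  · intro hT'
    apply hT
    rw [eq_top_iff]
    intro a _
    rw [← conj_mem_cj (k := k), hT']; trivial
  · intro a ha
    obtain ⟨b, rfl⟩ := hsurj a
    exact conj_mem_cj.2 (hZ ((hzc b).1 ha))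
  · intro a ha hda b hab
    obtain ⟨a, rfl⟩ := hsurj a
    obtain ⟨b, rfl⟩ := hsurj b
    rw [disc_conj] at hda
    rw [hcomm] at hab
    exact conj_mem_cj.2 (hC a (conj_mem_cj.1 ha) hda b hab)
  · rw [disc_conj]; exact hd
  · rw [hzc]; exact hnz
  · rw [show k * h * k⁻¹ * (k * u * k⁻¹) * (k * h * k⁻¹)⁻¹ = k * (h * u * h⁻¹) * k⁻¹ by group, hcomm]
    exact e
  · rw [hcomm]; exact hne

end Borel

/-! ### Partitions containing a Borel subgroup -/

section CaseB
variable {F : Type*} [Field F]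

local notation "Γ" => Matrix.SpecialLinearGroup (Fin 2) F

/-- The preimage in `SL₂` of a partition of `PSL₂`: proper subgroups containing the center, covering
the group, any two of which meet in the center. -/
structure IsPt (Q : Finset (Subgroup Γ)) : Prop where
  center_le : ∀ H ∈ Q, Subgroup.center Γ ≤ H
  ne_top : ∀ H ∈ Q, H ≠ ⊤
  cover : ∀ g : Γ, ∃ H ∈ Q, g ∈ H
  eq : ∀ H ∈ Q, ∀ K ∈ Q, ∀ g, g ∉ Subgroup.center Γ → g ∈ H → g ∈ K → H = K

/-- If the semisimple elements of `H` commute with `t`, a unipotent element of `H` (up to sign)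
normalizes the torus of `t` without centralizing it, so it must invert it. -/
theorem unip_inverts {H : Subgroup Γ} {w t : Γ} (hw : w ∈ H) (ht : t ∈ H)
    (hwc : w ∉ Subgroup.center Γ) (dw : disc w = 0) (dt : disc t ≠ 0)
    (hcom : ∀ s ∈ H, disc s ≠ 0 → Commute t s) : w * t * w⁻¹ = t⁻¹ := by
  have h1 : w * t * w⁻¹ ∈ H := H.mul_mem (H.mul_mem hw ht) (H.inv_mem hw)
  rcases eq_or_inv dt (hcom _ h1 (by rw [disc_conj]; exact dt)) (trace_conj _ _) with h | h
  · exfalso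
    have : Commute w t := mul_inv_eq_iff_eq_mul.1 h
    exact dt ((disc_commute hwc (not_central_of_disc dt) this).1 dw)
  · exact h

variable [Fintype F]

/-- The centralizer of a semisimple element is cyclic, so it is contained in the component of its
generator. -/
theorem IsPt.closed {Q : Finset (Subgroup Γ)} (hQ : IsPt Q) {H : Subgroup Γ} (hH : H ∈ Q) :
    Closed H := by
  intro g hg hd h e
  obtain ⟨⟨c, hc⟩, hgen⟩ := (isCyclic_centralizer hd).exists_generator
  have key : ∀ x ∈ Subgroup.centralizer {g}, x ∈ Subgroup.zpowers c := by
    intro x hx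
    obtain ⟨n, hn⟩ := Subgroup.mem_zpowers_iff.1 (hgen ⟨x, hx⟩)
    exact Subgroup.mem_zpowers_iff.2 ⟨n, congrArg Subtype.val hn⟩
  obtain ⟨K, hK, hcK⟩ := hQ.cover c
  have hle : Subgroup.zpowers c ≤ K := (Subgroup.zpowers_le).2 hcK
  have hgK : g ∈ K := hle (key g (Subgroup.mem_centralizer_singleton_iff.2 rfl))
  rw [hQ.eq H hH K hK g (not_central_of_disc hd) hg hgK]
  exact hle (key h (Subgroup.mem_centralizer_singleton_iff.2 e.symm.eq))

theorem exists_ne (hF : 7 ≤ Fintype.card F) : ∃ s : F, s ≠ 0 ∧ s ^ 2 ≠ 1 := by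
  classical
  have : ({0, 1, -1} : Finset F).card < (Finset.univ : Finset F).card := by
    rw [Finset.card_univ]
    exact lt_of_le_of_lt Finset.card_le_three (by omega)
  obtain ⟨s, -, hs⟩ := Finset.exists_mem_notMem_of_card_lt_card this
  simp only [Finset.mem_insert, Finset.mem_singleton, not_or] at hs
  exact ⟨s, hs.1, fun h => (sq_one_cases h).elim hs.2.1 hs.2.2⟩

omit [Fintype F] in
/-- If the upper triangular matrices form a component `B`, the other components avoid them. -/
theorem lower_ne {Q : Finset (Subgroup Γ)} (hQ : IsPt Q)
    {B : Subgroup Γ} (hB : B ∈ Q) (hBm : ∀ g : Γ, g ∈ B ↔ g 1 0 = 0) {H : Subgroup Γ}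
    (hH : H ∈ Q) (hHB : H ≠ B) {g : Γ} (hg : g ∈ H) (hgc : g ∉ Subgroup.center Γ) :
    g 1 0 ≠ 0 := fun h =>
  hHB (hQ.eq H hH B hB g hgc hg ((hBm g).2 h))

/-- Two Borel subgroups meet in more than the centre, so the components other than `B` have commuting
semisimple elements. -/
theorem comm_of_ne_borel (hF : 7 ≤ Fintype.card F) {Q : Finset (Subgroup Γ)} (hQ : IsPt Q)
    {B : Subgroup Γ} (hB : B ∈ Q) (hBm : ∀ g : Γ, g ∈ B ↔ g 1 0 = 0) {H : Subgroup Γ}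
    (hH : H ∈ Q) (hHB : H ≠ B) {s t : Γ} (hs : s ∈ H) (ht : t ∈ H) (ds : disc s ≠ 0)
    (dt : disc t ≠ 0) : Commute s t := by
  by_contra hst
  obtain ⟨k, hk⟩ := borel_of_noncomm hF (hQ.ne_top H hH) (hQ.center_le H hH) (hQ.closed hH) hs ht
    ds dt hst
  by_cases hw : k 1 0 = 0
  · refine lower_ne hQ hB hBm hH hHB (g := U 1) ?_ ?_ rfl
    · rw [hk]
      simp only [m00, m01, m10, m11, i00, i01, i10, i11, U00, U01, U10, U11, hw]
      ring
    · rw [mem_center]; intro h; exact one_ne_zero h.1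
  · obtain ⟨r, hr0, hr⟩ := exists_ne hF
    -- the torus fixing both lines stabilised by the two Borel subgroups
    refine lower_ne hQ hB hBm hH hHB
      (g := mk r ((r - r⁻¹) * k 1 1 / k 1 0) 0 r⁻¹ (by field_simp; ring)) ?_ ?_ rfl
    · rw [hk]
      simp only [m00, m01, m10, m11, i00, i01, i10, i11, k00, k01, k10, k11]
      field_simp
      ring
    · rw [mem_center]
      intro h
      apply hr
      have := h.2.2
      simp only [k00, k11] at this
      rw [sq]; nth_rw 2 [this]
      field_simp

/-- If the upper triangular matrices form a component `B`, another component cannot contain both a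
unipotent `w` and a semisimple `t`. In characteristic two some `U z` inverts `t`, as `w` does, and
then `U z * w` centralizes `t`, which puts `U z` into `H`. -/
theorem no_mixed (hF : 7 ≤ Fintype.card F) {Q : Finset (Subgroup Γ)} (hQ : IsPt Q)
    {B : Subgroup Γ} (hB : B ∈ Q) (hBm : ∀ g : Γ, g ∈ B ↔ g 1 0 = 0) {H : Subgroup Γ}
    (hH : H ∈ Q) (hHB : H ≠ B) {w t : Γ} (hw : w ∈ H) (ht : t ∈ H) (hwc : w ∉ Subgroup.center Γ)
    (dw : disc w = 0) (dt : disc t ≠ 0) : False := by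
  have hi := unip_inverts hw ht hwc dw dt
    (fun s hs ds => comm_of_ne_borel hF hQ hB hBm hH hHB ht hs dt ds)
  obtain ⟨h2, -, -⟩ := unip_inv dt dw hi
  have ht0 := lower_ne hQ hB hBm hH hHB ht (not_central_of_disc dt)
  have htr : t 0 0 + t 1 1 ≠ 0 := by
    intro h
    apply dt
    rw [disc_eq, h]; linear_combination (-2) * h2
  set z := -(t 0 0 + t 1 1) / t 1 0 with hz
  have hz0 : z ≠ 0 := div_ne_zero (neg_ne_zero.2 htr) ht0
  have hi' : U z * t * (U z)⁻¹ = t⁻¹ := by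
    apply inv_of_trace
    · rw [U00, U11]; linear_combination h2
    · rw [U00, U11, U01, U10, hz]; field_simp; ring
  have hc : Commute t (U z * w) := by
    have : U z * w * t * (U z * w)⁻¹ = t := by
      rw [show U z * w * t * (U z * w)⁻¹ = U z * (w * t * w⁻¹) * (U z)⁻¹ by group, hi,
        show U z * t⁻¹ * (U z)⁻¹ = (U z * t * (U z)⁻¹)⁻¹ by group, hi', inv_inv]
    exact (mul_inv_eq_iff_eq_mul.1 this).symm
  have hU : U z ∈ H := by
    have := H.mul_mem (hQ.closed hH t ht dt _ hc) (H.inv_mem hw)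
    simpa using this
  refine lower_ne hQ hB hBm hH hHB hU ?_ rfl
  rw [mem_center]; intro h; exact hz0 h.1

omit [Fintype F] in
theorem ringChar_eq_two (h2 : (2 : F) = 0) : ringChar F = 2 := by
  have := (ringChar.spec F 2).1 (by exact_mod_cast h2)
  rcases (Nat.dvd_prime Nat.prime_two).1 this with h | h
  · exact absurd h (CharP.ringChar_ne_one)
  · exact h

/-- A binary quadratic form `X² - αXY - βY²` of zero discriminant is the square of a linear form. -/
theorem exists_delta {α β : F} (hd : α ^ 2 + 4 * β * 1 = 0) : ∃ δ : F, 2 * δ = α ∧ β = - δ ^ 2 := by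
  by_cases h2 : (2 : F) = 0
  · obtain ⟨δ, hδ⟩ := FiniteField.isSquare_of_char_two (ringChar_eq_two h2) (-β)
    refine ⟨δ, ?_, by linear_combination -hδ⟩
    have : α ^ 2 = 0 := by linear_combination hd - 2 * β * h2
    rw [pow_eq_zero_iff two_ne_zero |>.1 this, h2]; ring
  · refine ⟨α / 2, by field_simp, ?_⟩
    field_simp
    linear_combination hd

/-- Representatives for the lines of trace-zero matrices that do not lie in the Borel subgroup. -/
theorem exists_rep (hF : 7 ≤ Fintype.card F) (α β : F) : ∃ g : Γ, g 1 0 ≠ 0 ∧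
    g 0 0 - g 1 1 = α * g 1 0 ∧ g 0 1 = β * g 1 0 ∧ (disc g ≠ 0 ∨ ∃ δ, g 0 0 = 1 + δ ∧
      g 0 1 = -δ ^ 2 ∧ g 1 0 = 1 ∧ g 1 1 = 1 - δ) := by
  by_cases hd : α ^ 2 + 4 * β * 1 = 0
  · obtain ⟨δ, h1, h2⟩ := exists_delta hd
    refine ⟨mk (1 + δ) (-δ ^ 2) 1 (1 - δ) (by ring), ?_, ?_, ?_, Or.inr ⟨δ, rfl, rfl, rfl, rfl⟩⟩
    · exact one_ne_zero
    · simp only [k00, k01, k10, k11]; linear_combination h1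
    · simp only [k00, k01, k10, k11]; linear_combination -h2
  · obtain ⟨g, hg, r, hr, e1, e2, e3⟩ := exists_of_dir hF α β 1 hd
    have : g 1 0 = r := by rw [e3, mul_one]
    exact ⟨g, by rw [this]; exact hr, by rw [e1, this]; ring, by rw [e2, this]; ring, Or.inl hg⟩

/-- The case in which a Borel subgroup is a component: the `q²` pairwise
noncommuting representatives of `exists_rep` lie in distinct further components. -/
theorem caseB (hF : 7 ≤ Fintype.card F) {Q : Finset (Subgroup Γ)} (hQ : IsPt Q) {B : Subgroup Γ}
    (hB : B ∈ Q) (hBm : ∀ g : Γ, g ∈ B ↔ g 1 0 = 0) : Fintype.card F ^ 2 + 1 ≤ Q.card := by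
  classical
  choose g g0 g1 g2 g3 using exists_rep hF
  choose c hcQ hcg using hQ.cover
  have hgc : ∀ α β, g α β ∉ Subgroup.center Γ := fun α β h => g0 α β ((mem_center _).1 h).2.1
  have hcB : ∀ α β, c (g α β) ≠ B := fun α β h => g0 α β ((hBm _).1 (h ▸ hcg _))
  have hcard : (Finset.univ : Finset (F × F)).card ≤ (Q.erase B).card := by
    refine Finset.card_le_card_of_injOn (fun p => c (g p.1 p.2)) ?_ ?_
    · intro p _
      simp only [Finset.coe_erase, Set.mem_sdiff, Finset.mem_coe, Set.mem_singleton_iff]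
      exact ⟨hcQ _, hcB _ _⟩
    rintro ⟨α, β⟩ - ⟨α', β'⟩ - he
    simp only at he
    have hm := hcg (g α β)
    have hm' := hcg (g α' β')
    rw [← he] at hm'
    have hnm := fun {w t : Γ} => no_mixed (w := w) (t := t) hF hQ hB hBm (hcQ (g α β)) (hcB α β)
    have hdisc : ∀ {g : Γ} {δ : F}, g 0 0 = 1 + δ → g 0 1 = -δ ^ 2 → g 1 0 = 1 → g 1 1 = 1 - δ →
        disc g = 0 := by
      intro g δ h1 h2 h3 h4
      unfold disc; rw [h1, h2, h3, h4]; ring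
    have hcom : Commute (g α β) (g α' β') := by
      rcases g3 α β with h | ⟨δ, a1, a2, a3, a4⟩ <;>
        rcases g3 α' β' with h' | ⟨δ', b1, b2, b3, b4⟩
      · exact comm_of_ne_borel hF hQ hB hBm (hcQ (g α β)) (hcB α β) hm hm' h h'
      · exact (hnm hm' hm (hgc _ _) (hdisc b1 b2 b3 b4) h).elim
      · exact (hnm hm hm' (hgc _ _) (hdisc a1 a2 a3 a4) h').elim
      · -- products of two distinct unipotents of this shape produce semisimple elements
        have z1 : disc (g α β * g α' β') = 0 := by
          by_contra h
          exact hnm hm (Subgroup.mul_mem _ hm hm') (hgc _ _) (hdisc a1 a2 a3 a4) h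
        have z2 : disc (g α β * g α β * g α' β') = 0 := by
          by_contra h
          exact hnm hm (Subgroup.mul_mem _ (Subgroup.mul_mem _ hm hm) hm') (hgc _ _)
            (hdisc a1 a2 a3 a4) h
        rw [disc_eq] at z1 z2
        simp only [m00, m01, m10, m11, a1, a2, a3, a4, b1, b2, b3, b4] at z1 z2
        have hδ : δ = δ' := by
          by_contra hne
          have hne' : (δ - δ') ^ 2 ≠ 0 := pow_ne_zero _ (sub_ne_zero.2 hne)
          have w1 : (δ - δ') ^ 2 = 4 := mul_left_cancel₀ hne' (by linear_combination z1)
          have w2 : (2 : F) ^ 5 = 0 := by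
            have e : 4 * ((δ - δ') ^ 2) ^ 2 - 8 * (δ - δ') ^ 2 = 0 := by linear_combination z2
            rw [w1] at e; linear_combination e
          have w3 : (2 : F) = 0 := pow_eq_zero_iff (by norm_num) |>.1 w2
          apply hne'
          rw [w1]; linear_combination 2 * w3
        have : g α β = g α' β' := by
          apply ext4 <;> simp only [a1, a2, a3, a4, b1, b2, b3, b4, hδ]
        rw [this]
    obtain ⟨e1, e2, e3⟩ := (commute_iff _ _).1 hcom
    rw [g1, g1] at e2
    rw [g2, g2] at e3
    have hne := mul_ne_zero (g0 α β) (g0 α' β')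
    refine Prod.ext (mul_right_cancel₀ hne ?_) (mul_right_cancel₀ hne ?_)
    · linear_combination e2
    · linear_combination e3
  rw [Finset.card_univ, Fintype.card_prod, Finset.card_erase_of_mem hB, ← sq] at hcard
  have : 0 < Q.card := Finset.card_pos.2 ⟨B, hB⟩
  omega

end CaseB

/-! ### Partitions without Borel subgroups, and the lower bound -/

section CaseA
variable {F : Type*} [Field F] [Fintype F]

local notation "Γ" => Matrix.SpecialLinearGroup (Fin 2) F

/-- Semisimple representatives of the `q²` maximal tori, indexed by `F × F`. A torus not fixing the
point at infinity has the index `(α, β)` of its fixed-point form `X² - αX - β`. The indices of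
degenerate forms `(X - δ)²` are used for the tori fixing the points `∞` and `-δ`. -/
theorem exists_torus (hF : 7 ≤ Fintype.card F) (α β : F) : ∃ g : Γ, disc g ≠ 0 ∧ ∃ r : F, r ≠ 0 ∧
    ((g 1 0 = r ∧ g 0 0 - g 1 1 = r * α ∧ g 0 1 = r * β) ∨ ∃ δ, 2 * δ = α ∧ β = -δ ^ 2 ∧
      g 1 0 = 0 ∧ g 0 0 - g 1 1 = r ∧ g 0 1 = r * δ) := by
  by_cases hd : α ^ 2 + 4 * β * 1 = 0
  · obtain ⟨δ, h1, h2⟩ := exists_delta hd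
    obtain ⟨g, hg, r, hr, e1, e2, e3⟩ := exists_of_dir hF 1 δ 0 (by simp)
    exact ⟨g, hg, r, hr, Or.inr ⟨δ, h1, h2, by rw [e3, mul_zero], by rw [e1, mul_one], e2⟩⟩
  · obtain ⟨g, hg, r, hr, e1, e2, e3⟩ := exists_of_dir hF α β 1 hd
    exact ⟨g, hg, r, hr, Or.inl ⟨by rw [e3, mul_one], e1, e2⟩⟩

omit [Fintype F] in
/-- The representatives of `exists_torus` commute only if their indices agree. -/
theorem torus_inj {g h : Γ} {α β α' β' r s : F} (hr : r ≠ 0) (hs : s ≠ 0)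
    (hg : (g 1 0 = r ∧ g 0 0 - g 1 1 = r * α ∧ g 0 1 = r * β) ∨ ∃ δ, 2 * δ = α ∧ β = -δ ^ 2 ∧
      g 1 0 = 0 ∧ g 0 0 - g 1 1 = r ∧ g 0 1 = r * δ)
    (hh : (h 1 0 = s ∧ h 0 0 - h 1 1 = s * α' ∧ h 0 1 = s * β') ∨ ∃ δ, 2 * δ = α' ∧ β' = -δ ^ 2 ∧
      h 1 0 = 0 ∧ h 0 0 - h 1 1 = s ∧ h 0 1 = s * δ) (e : Commute g h) : α = α' ∧ β = β' := by
  obtain ⟨e1, e2, e3⟩ := (commute_iff _ _).1 e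
  have hne := mul_ne_zero hr hs
  rcases hg with ⟨a1, a2, a3⟩ | ⟨δ, a1, a2, a3, a4, a5⟩ <;>
    rcases hh with ⟨b1, b2, b3⟩ | ⟨δ', b1, b2, b3, b4, b5⟩
  · rw [a1, a2, b1, b2] at e2
    rw [a1, a3, b1, b3] at e3
    exact ⟨mul_left_cancel₀ hne (by linear_combination e2),
      mul_left_cancel₀ hne (by linear_combination e3)⟩
  · rw [a1, b3, b4] at e2
    exact (hne (by linear_combination -e2)).elim
  · rw [a3, a4, b1] at e2
    exact (hne (by linear_combination e2)).elim
  · rw [a4, a5, b4, b5] at e1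
    have : δ = δ' := mul_left_cancel₀ hne (by linear_combination -e1)
    rw [← a1, ← b1, a2, b2, this]
    exact ⟨rfl, rfl⟩

/-- The key relation in characteristic two. Suppose `t` and `t'` are inverted by elements `w` and
`w'` of their own components. Up to a scalar, the bracket `t * t' - t' * t` is an involution inverting
both `t` and `t'`, so it lies in both components, and `t` and `t'` commute. The only way out is that
the bracket has determinant zero, which is the claim. -/
theorem bracket_degenerate {Q : Finset (Subgroup Γ)} (hQ : IsPt Q) (h2 : (2 : F) = 0)
    (hcom : ∀ H ∈ Q, ∀ s ∈ H, ∀ t ∈ H, disc s ≠ 0 → disc t ≠ 0 → Commute s t)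
    {H H' : Subgroup Γ} (hH : H ∈ Q) (hH' : H' ∈ Q) {w t w' t' : Γ} (hw : w ∈ H) (ht : t ∈ H)
    (hw' : w' ∈ H') (ht' : t' ∈ H') (dt : disc t ≠ 0) (dt' : disc t' ≠ 0)
    (hi : w * t * w⁻¹ = t⁻¹) (hi' : w' * t' * w'⁻¹ = t'⁻¹) :
    (t 0 1 * t' 1 0 + t' 0 1 * t 1 0) ^ 2 +
      ((t 0 0 - t 1 1) * t' 0 1 + (t' 0 0 - t' 1 1) * t 0 1) *
      (t 1 0 * (t' 0 0 - t' 1 1) + t' 1 0 * (t 0 0 - t 1 1)) = 0 := by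
  set A := t 0 1 * t' 1 0 + t' 0 1 * t 1 0 with hA
  set B := (t 0 0 - t 1 1) * t' 0 1 + (t' 0 0 - t' 1 1) * t 0 1 with hB
  set C := t 1 0 * (t' 0 0 - t' 1 1) + t' 1 0 * (t 0 0 - t 1 1) with hC
  by_contra hE
  obtain ⟨e, he⟩ := FiniteField.isSquare_of_char_two (ringChar_eq_two h2) (A ^ 2 + B * C)
  have he0 : e ≠ 0 := by rintro rfl; exact hE (by rw [he]; ring)
  let g : Γ := mk (A / e) (B / e) (C / e) (A / e)
    (by field_simp; linear_combination he - B * C * h2)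
  have hgt : g * t * g⁻¹ = t⁻¹ := by
    apply inv_of_trace <;> simp only [g, k00, k01, k10, k11] <;> field_simp
    · linear_combination A * h2
    · simp only [hA, hB, hC]
      linear_combination (t 1 1 * (t 0 1 * t' 1 0 + t' 0 1 * t 1 0) +
        (t 0 0 - t 1 1) * (t 0 1 * t' 1 0 + t' 0 1 * t 1 0) +
        (t' 0 0 - t' 1 1) * t 0 1 * t 1 0) * h2
  have hgt' : g * t' * g⁻¹ = t'⁻¹ := by
    apply inv_of_trace <;> simp only [g, k00, k01, k10, k11] <;> field_simp
    · linear_combination A * h2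
    · simp only [hA, hB, hC]
      linear_combination (t' 1 1 * (t 0 1 * t' 1 0 + t' 0 1 * t 1 0) +
        (t' 0 0 - t' 1 1) * (t 0 1 * t' 1 0 + t' 0 1 * t 1 0) +
        (t 0 0 - t 1 1) * t' 0 1 * t' 1 0) * h2
  have mem : ∀ {K : Subgroup Γ} {v s : Γ}, K ∈ Q → v ∈ K → s ∈ K → disc s ≠ 0 →
      v * s * v⁻¹ = s⁻¹ → g * s * g⁻¹ = s⁻¹ → g ∈ K := by
    intro K v s hK hv hs ds h1 h3
    have : v * g * s * (v * g)⁻¹ = s := by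
      rw [show v * g * s * (v * g)⁻¹ = v * (g * s * g⁻¹) * v⁻¹ by group, h3,
        show v * s⁻¹ * v⁻¹ = (v * s * v⁻¹)⁻¹ by group, h1, inv_inv]
    have hc : Commute s (v * g) := (mul_inv_eq_iff_eq_mul.1 this).symm
    have := K.mul_mem (K.inv_mem hv) (hQ.closed hK s hs ds _ hc)
    simpa using this
  have hgc : g ∉ Subgroup.center Γ := by
    intro hg
    have h3 : t = t⁻¹ := by
      rw [← hgt, (central_commute g hg t).eq, mul_inv_cancel_right]
    have h4 := congrArg (fun x : Γ => x 0 0) h3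
    simp only [i00] at h4
    apply dt
    unfold disc
    rw [h4]; linear_combination 2 * t 0 1 * t 1 0 * h2
  have hHH := hQ.eq H hH H' hH' g hgc (mem hH hw ht dt hi hgt) (mem hH' hw' ht' dt' hi' hgt')
  subst hHH
  obtain ⟨e1, e2, e3⟩ := (commute_iff _ _).1 (hcom H hH t ht t' ht' dt dt')
  apply hE
  have hA0 : A = 0 := by rw [hA]; linear_combination t' 0 1 * t 1 0 * h2 + e3
  have hB0 : B = 0 := by rw [hB]; linear_combination (t' 0 0 - t' 1 1) * t 0 1 * h2 + e1
  rw [hA0, hB0]; ring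

/-- If semisimple elements of the same component always commute, some component has no semisimple
element. Otherwise every unipotent inverts a torus of its component, and the characteristic is two.
The tori `t` and `t'` inverted by `U 1` and `U s` then share a fixed point `l`. A torus `v` inverted by
a unipotent fixing `l` is in conflict with both of them. -/
theorem caseA_no_mixed (hF : 7 ≤ Fintype.card F) {Q : Finset (Subgroup Γ)} (hQ : IsPt Q)
    (hcom : ∀ H ∈ Q, ∀ s ∈ H, ∀ t ∈ H, disc s ≠ 0 → disc t ≠ 0 → Commute s t) :
    ∃ K ∈ Q, ∀ t ∈ K, disc t = 0 := by
  by_contra hcon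
  push Not at hcon
  have hinv : ∀ w : Γ, w ∉ Subgroup.center Γ → disc w = 0 → ∃ H ∈ Q, ∃ t, w ∈ H ∧ t ∈ H ∧
      disc t ≠ 0 ∧ w * t * w⁻¹ = t⁻¹ := by
    intro w hwc dw
    obtain ⟨H, hH, hw⟩ := hQ.cover w
    obtain ⟨t, ht, dt⟩ := hcon H hH
    exact ⟨H, hH, t, hw, ht, dt, unip_inverts hw ht hwc dw dt fun s hs ds =>
      hcom H hH t ht s hs dt ds⟩
  have hU : ∀ x : F, disc (U x) = 0 := fun x => by
    unfold disc; rw [U00, U01, U10, U11]; ring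
  have hUc : ∀ x : F, x ≠ 0 → U x ∉ Subgroup.center Γ := fun x hx h =>
    hx ((mem_center _).1 h).1
  obtain ⟨s, hs0, hs1⟩ := exists_ne hF
  obtain ⟨H, hH, t, hwH, htH, dt, hi⟩ := hinv (U 1) (hUc 1 one_ne_zero) (hU 1)
  obtain ⟨H', hH', t', hwH', htH', dt', hi'⟩ := hinv (U s) (hUc s hs0) (hU s)
  obtain ⟨h2, -, tr⟩ := unip_inv dt (hU _) hi
  obtain ⟨-, -, tr'⟩ := unip_inv dt' (hU _) hi'
  rw [U00, U01, U10, U11] at tr tr'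
  have hdisc : ∀ g : Γ, disc g ≠ 0 → g 0 0 - g 1 1 ≠ 0 := by
    intro g hg h
    apply hg
    unfold disc; rw [h]; linear_combination 2 * g 0 1 * g 1 0 * h2
  have hp : t 0 0 - t 1 1 = t 1 0 := by linear_combination tr - (t 1 1 + t 1 0) * h2
  have hp' : t' 0 0 - t' 1 1 = s * t' 1 0 := by
    linear_combination tr' - (t' 1 1 + s * t' 1 0) * h2
  have hr : t 1 0 ≠ 0 := hp ▸ hdisc t dt
  have hr' : t' 1 0 ≠ 0 := fun h => hdisc t' dt' (by rw [hp', h, mul_zero])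
  obtain ⟨b, hb⟩ : ∃ b, t 0 1 = b * t 1 0 := ⟨t 0 1 / t 1 0, by field_simp⟩
  obtain ⟨b', hb'⟩ : ∃ b, t' 0 1 = b * t' 1 0 := ⟨t' 0 1 / t' 1 0, by field_simp⟩
  have hs1' : 1 + s ≠ 0 := by
    intro h
    apply hs1
    linear_combination (s - 1) * h
  have E1 : (b + b') ^ 2 + (b' + s * b) * (1 + s) = 0 := by
    have := bracket_degenerate hQ h2 hcom hH hH' hwH htH hwH' htH' dt dt' hi hi'
    rw [hp, hp', hb, hb'] at this
    refine mul_left_cancel₀ (pow_ne_zero 2 (mul_ne_zero hr hr')) ?_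
    linear_combination this
  obtain ⟨l, hl⟩ : ∃ l, b + b' = l * (1 + s) := ⟨(b + b') / (1 + s), by field_simp⟩
  -- `E1` makes `l` a root of both fixed-point forms `X² + X + b` and `X² + s * X + b'`
  have hE2 : l ^ 2 * (1 + s) = b' + s * b := by
    refine mul_left_cancel₀ hs1' ?_
    rw [hl] at E1
    linear_combination E1 - (b' + s * b) * (1 + s) * h2
  have hbl : b = l ^ 2 + l := by
    refine mul_left_cancel₀ hs1' ?_
    linear_combination -hE2 + hl - b' * h2
  have hbl' : b' = l ^ 2 + s * l := by
    linear_combination hl - hbl - l ^ 2 * h2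
  obtain ⟨K, hK, v, hwK, hvK, dv, hj⟩ := hinv
    (mk (1 + l) (-l ^ 2) 1 (1 - l) (by ring)) (fun h => one_ne_zero ((mem_center _).1 h).2.1)
    (by unfold disc; simp only [k00, k01, k10, k11]; ring)
  obtain ⟨-, -, trv⟩ := unip_inv dv
    (by unfold disc; simp only [k00, k01, k10, k11]; ring) hj
  simp only [k00, k01, k10, k11] at trv
  have E3 := bracket_degenerate hQ h2 hcom hH hK hwH htH hwK hvK dt dv hi hj
  have E4 := bracket_degenerate hQ h2 hcom hH' hK hwH' htH' hwK hvK dt' dv hi' hj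
  rw [hp, hb] at E3
  rw [hp', hb'] at E4
  have hv := hdisc v dv
  -- `trv` eliminates `v 0 1`, so `E3` and `E4` become equations in the two unknowns `p` and `r`
  set p := v 0 0 - v 1 1 with hpdef
  set r := v 1 0
  have hq : v 0 1 = p + l * p + l ^ 2 * r := by
    linear_combination trv - v 1 1 * h2 - (p + l * p) * h2
  have F1 : p * (p + (p + r)) = 0 := by
    refine mul_left_cancel₀ (pow_ne_zero 2 hr) ?_
    rw [hq, hbl] at E3
    linear_combination E3 - t 1 0 ^ 2 * (p * l * (p + 1 * r) + l ^ 2 * (p + 1 * r) ^ 2 +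
      2 * l ^ 2 * r * (p + l * (p + 1 * r)) + 2 * l ^ 4 * r ^ 2 + 1 * l * p * (p + 1 * r)) * h2
  have F2 : p * (p + s * (p + s * r)) = 0 := by
    refine mul_left_cancel₀ (pow_ne_zero 2 hr') ?_
    rw [hq, hbl'] at E4
    linear_combination E4 - t' 1 0 ^ 2 * (p * l * (p + s * r) + l ^ 2 * (p + s * r) ^ 2 +
      2 * l ^ 2 * r * (p + l * (p + s * r)) + 2 * l ^ 4 * r ^ 2 + s * l * p * (p + s * r)) * h2
  have G1 := (mul_eq_zero.1 F1).resolve_left hv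
  have hr0 : r = 0 := by linear_combination G1 - p * h2
  have G2 := (mul_eq_zero.1 F2).resolve_left hv
  rw [hr0] at G2
  exact mul_ne_zero hv hs1' (by linear_combination G2)

/-- The case in which semisimple elements of the same component commute: the `q²` tori lie in
distinct components, and a further component has no semisimple element. -/
theorem caseA (hF : 7 ≤ Fintype.card F) {Q : Finset (Subgroup Γ)} (hQ : IsPt Q)
    (hcom : ∀ H ∈ Q, ∀ s ∈ H, ∀ t ∈ H, disc s ≠ 0 → disc t ≠ 0 → Commute s t) :
    Fintype.card F ^ 2 + 1 ≤ Q.card := by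
  classical
  obtain ⟨K, hK, hKn⟩ := caseA_no_mixed hF hQ hcom
  choose g gd r hr hg using exists_torus hF
  choose c hcQ hcg using hQ.cover
  have hcard : (Finset.univ : Finset (F × F)).card ≤ (Q.erase K).card := by
    refine Finset.card_le_card_of_injOn (fun p => c (g p.1 p.2)) ?_ ?_
    · intro p _
      simp only [Finset.coe_erase, Set.mem_sdiff, Finset.mem_coe, Set.mem_singleton_iff]
      exact ⟨hcQ _, fun h => gd _ _ (hKn _ (h ▸ hcg _))⟩
    rintro ⟨α, β⟩ - ⟨α', β'⟩ - he
    simp only at he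
    have hm' := hcg (g α' β')
    rw [← he] at hm'
    have := torus_inj (hr _ _) (hr _ _) (hg α β) (hg α' β')
      (hcom _ (hcQ _) _ (hcg _) _ hm' (gd _ _) (gd _ _))
    exact Prod.ext this.1 this.2
  rw [Finset.card_univ, Fintype.card_prod, Finset.card_erase_of_mem hK, ← sq] at hcard
  have : 0 < Q.card := Finset.card_pos.2 ⟨K, hK⟩
  omega

/-- The lower bound in `SL₂`. If the components do not all have commuting semisimple elements, one of
them is a Borel subgroup, and the partition can be conjugated so that this is the group of upper
triangular matrices. -/
theorem lower_bound (hF : 7 ≤ Fintype.card F) {Q : Finset (Subgroup Γ)} (hQ : IsPt Q) :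
    Fintype.card F ^ 2 + 1 ≤ Q.card := by
  classical
  by_cases hcom : ∀ H ∈ Q, ∀ s ∈ H, ∀ t ∈ H, disc s ≠ 0 → disc t ≠ 0 → Commute s t
  · exact caseA hF hQ hcom
  push Not at hcom
  obtain ⟨H, hH, s, hs, t, ht, ds, dt, hst⟩ := hcom
  obtain ⟨k, hk⟩ := borel_of_noncomm hF (hQ.ne_top H hH) (hQ.center_le H hH) (hQ.closed hH) hs ht
    ds dt hst
  have hzc : ∀ a : Γ, k * a * k⁻¹ ∈ Subgroup.center Γ ↔ a ∈ Subgroup.center Γ := fun a =>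
    conj_mem_of_central central_commute k
  have hsurj : ∀ a : Γ, ∃ b, a = k * b * k⁻¹ := fun a => ⟨k⁻¹ * a * k, by group⟩
  have hQ' : IsPt (Q.image (cj k)) := by
    constructor
    · intro L hL a ha
      obtain ⟨K, hK, rfl⟩ := Finset.mem_image.1 hL
      obtain ⟨a, rfl⟩ := hsurj a
      exact conj_mem_cj.2 (hQ.center_le K hK ((hzc a).1 ha))
    · intro L hL hT
      obtain ⟨K, hK, rfl⟩ := Finset.mem_image.1 hL
      apply hQ.ne_top K hK
      rw [eq_top_iff]
      intro a _
      rw [← conj_mem_cj (k := k), hT]; trivial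
    · intro a
      obtain ⟨a, rfl⟩ := hsurj a
      obtain ⟨K, hK, ha⟩ := hQ.cover a
      exact ⟨cj k K, Finset.mem_image_of_mem _ hK, conj_mem_cj.2 ha⟩
    · intro L hL M hM a hac haL haM
      obtain ⟨L, hL', rfl⟩ := Finset.mem_image.1 hL
      obtain ⟨M, hM', rfl⟩ := Finset.mem_image.1 hM
      obtain ⟨a, rfl⟩ := hsurj a
      rw [hQ.eq L hL' M hM' a (fun h => hac ((hzc a).2 h)) (conj_mem_cj.1 haL) (conj_mem_cj.1 haM)]
  refine (caseB hF hQ' (Finset.mem_image_of_mem _ hH) fun g => ?_).trans Finset.card_image_le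
  rw [mem_cj, hk]
  rw [show k * (k⁻¹ * g * k) * k⁻¹ = g by group]

end CaseA

/-! ### The optimal partition and the passage to `PSL₂` -/

section Partition
variable {F : Type*} [Field F]

local notation "Γ" => Matrix.SpecialLinearGroup (Fin 2) F

/-- The Borel subgroup of upper triangular matrices. -/
def borel : Subgroup Γ where
  carrier := {g | g 1 0 = 0}
  one_mem' := by simp
  mul_mem' := by
    intro a b ha hb
    simp only [Set.mem_ofPred_eq] at *
    rw [m10, ha, hb]; ring
  inv_mem' := by
    intro a ha
    simp only [Set.mem_ofPred_eq] at *
    rw [i10, ha, neg_zero]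

/-- The elements of `SL₂(F)` in the algebra spanned by `1` and `!![α, β; 1, 0]`, i.e. the
centralizer of an element not fixing the point at infinity of the projective line. -/
def cent (α β : F) : Subgroup Γ where
  carrier := {g | g 0 0 - g 1 1 = α * g 1 0 ∧ g 0 1 = β * g 1 0}
  one_mem' := by simp
  mul_mem' := by
    rintro a b ⟨a1, a2⟩ ⟨b1, b2⟩
    constructor
    · rw [m00, m11, m10, a2, b2]
      linear_combination b 0 0 * a1 + a 1 1 * b1
    · rw [m01, m10, a2, b2]
      linear_combination β * b 1 0 * a1 - β * a 1 0 * b1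
  inv_mem' := by
    rintro a ⟨a1, a2⟩
    constructor
    · rw [i00, i11, i10]
      linear_combination -a1
    · rw [i01, i10, a2]; ring

theorem mem_borel {g : Γ} : g ∈ borel ↔ g 1 0 = 0 := Iff.rfl

theorem mem_cent {α β : F} {g : Γ} :
    g ∈ cent α β ↔ g 0 0 - g 1 1 = α * g 1 0 ∧ g 0 1 = β * g 1 0 := Iff.rfl

theorem center_le_borel : Subgroup.center Γ ≤ borel := fun _ hg => ((mem_center _).1 hg).2.1

theorem center_le_cent (α β : F) : Subgroup.center Γ ≤ cent α β := by
  intro g hg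
  obtain ⟨h1, h2, h3⟩ := (mem_center _).1 hg
  exact ⟨by rw [h2, h3]; ring, by rw [h1, h2]; ring⟩

theorem borel_ne_top : (borel : Subgroup Γ) ≠ ⊤ := by
  intro h
  have : mk 0 (-1) 1 0 (by ring) ∈ (borel : Subgroup Γ) := h ▸ Subgroup.mem_top _
  rw [mem_borel, k10] at this
  exact one_ne_zero this

theorem cent_ne_top (α β : F) : (cent α β : Subgroup Γ) ≠ ⊤ := by
  intro h
  have : mk 1 1 0 1 (by ring) ∈ (cent α β : Subgroup Γ) := h ▸ Subgroup.mem_top _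
  have h1 : (1 : F) = β * 0 := (mem_cent.1 this).2
  exact one_ne_zero (h1.trans (mul_zero β))

theorem borel_inf_cent {α β : F} {g : Γ} (h1 : g ∈ borel) (h2 : g ∈ cent α β) :
    g ∈ Subgroup.center Γ := by
  rw [mem_borel] at h1
  obtain ⟨h2, h3⟩ := mem_cent.1 h2
  rw [h1, mul_zero] at h2 h3
  exact (mem_center _).2 ⟨h3, h1, sub_eq_zero.1 h2⟩

theorem cent_inf_cent {α β α' β' : F} {g : Γ} (h1 : g ∈ cent α β) (h2 : g ∈ cent α' β')
    (hg : g ∉ Subgroup.center Γ) : α = α' ∧ β = β' := by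
  have h0 : g 1 0 ≠ 0 := fun h => hg (borel_inf_cent h h1)
  obtain ⟨a1, a2⟩ := mem_cent.1 h1
  obtain ⟨b1, b2⟩ := mem_cent.1 h2
  exact ⟨mul_right_cancel₀ h0 (a1.symm.trans b1), mul_right_cancel₀ h0 (a2.symm.trans b2)⟩

/-- The members of the optimal partition: the Borel subgroup at `none`, and the `q²` centralizers
`cent α β`. -/
def piece : Option (F × F) → Subgroup Γ
  | none => borel
  | some p => cent p.1 p.2

theorem center_le_piece (i : Option (F × F)) : Subgroup.center Γ ≤ piece i := by
  cases i
  · exact center_le_borel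
  · exact center_le_cent _ _

theorem piece_ne_top (i : Option (F × F)) : (piece i : Subgroup Γ) ≠ ⊤ := by
  cases i
  · exact borel_ne_top
  · exact cent_ne_top _ _

theorem exists_piece (g : Γ) : ∃ i, g ∈ piece i := by
  by_cases h : g 1 0 = 0
  · exact ⟨none, h⟩
  · exact ⟨some ((g 0 0 - g 1 1) / g 1 0, g 0 1 / g 1 0),
      mem_cent.2 ⟨by field_simp, by field_simp⟩⟩

theorem piece_eq {i j : Option (F × F)} {g : Γ} (hi : g ∈ piece i) (hj : g ∈ piece j)
    (hg : g ∉ Subgroup.center Γ) : i = j := by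
  rcases i with _ | p <;> rcases j with _ | p'
  · rfl
  · exact (hg (borel_inf_cent hi hj)).elim
  · exact (hg (borel_inf_cent hj hi)).elim
  · have := cent_inf_cent hi hj hg
    exact congrArg some (Prod.ext this.1 this.2)

theorem mem_map_mk {H : Subgroup Γ} (hH : Subgroup.center Γ ≤ H) {g : Γ} :
    (g : Γ ⧸ Subgroup.center Γ) ∈ H.map (QuotientGroup.mk' (Subgroup.center Γ)) ↔ g ∈ H := by
  rw [← QuotientGroup.mk'_apply, ← Subgroup.mem_comap,
    Subgroup.comap_map_eq_self (by rwa [QuotientGroup.ker_mk'])]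

theorem exists_partition [Fintype F] :
    ∃ P : Finset (Subgroup (Γ ⧸ Subgroup.center Γ)), IsPartitionOf P ∧
      P.card ≤ Fintype.card F ^ 2 + 1 := by
  classical
  refine ⟨(Finset.univ : Finset (Option (F × F))).image
    fun i => (piece i).map (QuotientGroup.mk' (Subgroup.center Γ)), ⟨⟨?_, ?_⟩, ?_⟩, ?_⟩
  · intro H hH hT
    obtain ⟨i, -, rfl⟩ := Finset.mem_image.1 hH
    apply piece_ne_top i
    rw [eq_top_iff]
    intro g _
    rw [← mem_map_mk (center_le_piece i), hT]
    trivial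
  · intro x
    obtain ⟨g, rfl⟩ := QuotientGroup.mk_surjective x
    obtain ⟨i, hi⟩ := exists_piece g
    exact ⟨_, Finset.mem_image_of_mem _ (Finset.mem_univ i), (mem_map_mk (center_le_piece i)).2 hi⟩
  · intro H hH K hK hne
    obtain ⟨i, -, rfl⟩ := Finset.mem_image.1 hH
    obtain ⟨j, -, rfl⟩ := Finset.mem_image.1 hK
    rw [eq_bot_iff]
    intro x hx
    obtain ⟨g, rfl⟩ := QuotientGroup.mk_surjective x
    rw [Subgroup.mem_inf, mem_map_mk (center_le_piece i), mem_map_mk (center_le_piece j)] at hx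
    rw [Subgroup.mem_bot, QuotientGroup.eq_one_iff]
    by_contra hg
    exact hne (by rw [piece_eq hx.1 hx.2 hg])
  · refine Finset.card_image_le.trans ?_
    rw [Finset.card_univ, Fintype.card_option, Fintype.card_prod, sq]

/-- The preimages in `SL₂(F)` of the members of a partition of `PSL₂(F)` form a family of
subgroups meeting pairwise in the centre. -/
theorem card_le_of_partition [Fintype F] (hF : 7 ≤ Fintype.card F)
    {P : Finset (Subgroup (Γ ⧸ Subgroup.center Γ))} (hP : IsPartitionOf P) :
    Fintype.card F ^ 2 + 1 ≤ P.card := by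
  classical
  have hQ : IsPt (P.image (Subgroup.comap (QuotientGroup.mk' (Subgroup.center Γ)))) := by
    constructor
    · intro H hH g hg
      obtain ⟨K, -, rfl⟩ := Finset.mem_image.1 hH
      rw [Subgroup.mem_comap, QuotientGroup.mk'_apply, (QuotientGroup.eq_one_iff g).2 hg]
      exact K.one_mem
    · intro H hH hT
      obtain ⟨K, hK, rfl⟩ := Finset.mem_image.1 hH
      apply hP.1.1 K hK
      rw [eq_top_iff]
      intro x _
      obtain ⟨g, rfl⟩ := QuotientGroup.mk_surjective x
      rw [← QuotientGroup.mk'_apply, ← Subgroup.mem_comap, hT]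
      trivial
    · intro g
      obtain ⟨K, hK, hg⟩ := hP.1.2 g
      exact ⟨_, Finset.mem_image_of_mem _ hK, hg⟩
    · intro H hH K hK g hg h1 h2
      obtain ⟨H, hH', rfl⟩ := Finset.mem_image.1 hH
      obtain ⟨K, hK', rfl⟩ := Finset.mem_image.1 hK
      by_contra hne
      have := hP.2 H hH' K hK' fun h => hne (by rw [h])
      apply hg
      rw [← QuotientGroup.eq_one_iff, ← Subgroup.mem_bot, ← this]
      exact ⟨h1, h2⟩
  exact (lower_bound hF hQ).trans Finset.card_image_le

end Partition

end PSLTwo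

theorem rho_PSL_two (q : ℕ) (hq : IsPrimePow q) (hq7 : 7 ≤ q)
    (F : Type*) [Field F] [Fintype F] (hF : Fintype.card F = q) :
    rhoG (Matrix.SpecialLinearGroup (Fin 2) F ⧸
        Subgroup.center (Matrix.SpecialLinearGroup (Fin 2) F)) = q ^ 2 + 1 := by
  subst hF
  obtain ⟨P, hP, hc⟩ := PSLTwo.exists_partition (F := F)
  apply le_antisymm
  · refine le_trans ?_ hc
    exact Nat.sInf_le ⟨P, hP, rfl⟩
  · refine le_csInf ⟨_, P, hP, rfl⟩ ?_
    rintro n ⟨P', hP', rfl⟩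
    exact PSLTwo.card_le_of_partition hq7 hP'
end
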